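/- arXiv:1809.03673 — 3 statements merged into one kernel-verified Lean document; each statement's English description precedes it below -/
import Mathlib

section
/- For every integer α with 6 ≤ α ≤ 10 and every nonnegative integer N, the equation x² + 2y² + αz² + 3(3t² − 2t) = N has an integer solution in ℤ⁴; and for every integer β with 4 ≤ β ≤ 10 and every nonnegative integer N, the equation x² + 2y² + 3(3z² − 2z) + β(3t² − 2t) = N has an integer solution in ℤ⁴. That is, the quaternary mixed sums x²+2y²+αz²+3P₈(t) (6 ≤ α ≤ 10) and x²+2y²+3P₈(z)+βP₈(t) (4 ≤ β ≤ 10) are universal. -/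
def GramRep (a b c r s t : ℤ) : Prop :=
  ∃ u1 u2 u3 v1 v2 v3 w1 w2 w3 : ℤ,
    u1 ^ 2 + u2 ^ 2 + u3 ^ 2 = a ∧ v1 ^ 2 + v2 ^ 2 + v3 ^ 2 = b ∧ w1 ^ 2 + w2 ^ 2 + w3 ^ 2 = c ∧
    v1 * w1 + v2 * w2 + v3 * w3 = r ∧ u1 * w1 + u2 * w2 + u3 * w3 = s ∧
    u1 * v1 + u2 * v2 + u3 * v3 = t

lemma gram_move12 {a b c r s t : ℤ} (k : ℤ)
    (h : GramRep a (b - 2 * k * t + k ^ 2 * a) c (r - k * s) s (t - k * a)) :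
    GramRep a b c r s t := by
  obtain ⟨u1, u2, u3, v1, v2, v3, w1, w2, w3, ha, hb, hc, hr, hs, ht⟩ := h
  refine ⟨u1, u2, u3, v1 + k * u1, v2 + k * u2, v3 + k * u3, w1, w2, w3, ha, ?_, hc, ?_, hs, ?_⟩
  · linear_combination hb + 2 * k * ht + k ^ 2 * ha
  · linear_combination hr + k * hs
  · linear_combination ht + k * ha

lemma gram_swap12 {a b c r s t : ℤ} (h : GramRep b a c s r t) : GramRep a b c r s t := by
  obtain ⟨u1, u2, u3, v1, v2, v3, w1, w2, w3, ha, hb, hc, hr, hs, ht⟩ := h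
  exact ⟨v1, v2, v3, u1, u2, u3, w1, w2, w3, hb, ha, hc, hs, hr, by linarith⟩

lemma gram_move23 {a b c r s t : ℤ} (k : ℤ)
    (h : GramRep a b (c - 2 * k * r + k ^ 2 * b) (r - k * b) (s - k * t) t) :
    GramRep a b c r s t := by
  obtain ⟨u1, u2, u3, v1, v2, v3, w1, w2, w3, ha, hb, hc, hr, hs, ht⟩ := h
  refine ⟨u1, u2, u3, v1, v2, v3, w1 + k * v1, w2 + k * v2, w3 + k * v3, ha, hb, ?_, ?_, ?_, ht⟩
  · linear_combination hc + 2 * k * hr + k ^ 2 * hb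
  · linear_combination hr + k * hb
  · linear_combination hs + k * ht

lemma gram_swap23 {a b c r s t : ℤ} (h : GramRep a c b r t s) : GramRep a b c r s t := by
  obtain ⟨u1, u2, u3, v1, v2, v3, w1, w2, w3, ha, hb, hc, hr, hs, ht⟩ := h
  exact ⟨u1, u2, u3, w1, w2, w3, v1, v2, v3, ha, hc, hb, by linarith, ht, hs⟩

lemma round_exists (t a : ℤ) (ha : 0 < a) : ∃ k : ℤ, 2 * (t - k * a) ≤ a ∧ -a ≤ 2 * (t - k * a) := by
  refine ⟨(2 * t + a) / (2 * a), ?_, ?_⟩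
  · have := Int.lt_mul_ediv_self_add (x := 2 * t + a) (k := 2 * a) (by linarith)
    nlinarith
  · have := Int.mul_ediv_self_le (x := 2 * t + a) (k := 2 * a) (by linarith)
    nlinarith

lemma gram_exists (m : ℕ) : ∀ a b c r s t : ℤ, 0 < a → 0 < a * b - t ^ 2 →
    a * b * c + 2 * r * s * t - a * r ^ 2 - b * s ^ 2 - c * t ^ 2 = 1 →
    a + (a * b - t ^ 2) ≤ m → GramRep a b c r s t := by
  induction m with
  | zero => intro a b c r s t ha hD _ hm; push_cast at hm; linarith
  | succ m ih =>
    intro a b c r s t ha hD hdet hm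
    obtain ⟨k, hk1, hk2⟩ := round_exists t a ha
    apply gram_move12 k
    have hD' : 0 < a * (b - 2 * k * t + k ^ 2 * a) - (t - k * a) ^ 2 := by
      convert hD using 1; ring
    have hdet' : a * (b - 2 * k * t + k ^ 2 * a) * c + 2 * (r - k * s) * s * (t - k * a)
        - a * (r - k * s) ^ 2 - (b - 2 * k * t + k ^ 2 * a) * s ^ 2 - c * (t - k * a) ^ 2 = 1 := by
      linear_combination hdet
    have hm' : a + (a * (b - 2 * k * t + k ^ 2 * a) - (t - k * a) ^ 2) ≤ m + 1 := by
      push_cast at hm; linarith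
    generalize b - 2 * k * t + k ^ 2 * a = b' at *
    generalize r - k * s = r' at *
    generalize t - k * a = t' at *
    clear hD hdet hm
    have hb : 0 < b' := by
      by_contra hb
      nlinarith [sq_nonneg t']
    by_cases hba : b' < a
    · apply gram_swap12
      apply ih b' a c s r' t' hb (by linarith) (by linarith) (by linarith)
    push Not at hba
    obtain ⟨j, hj1, hj2⟩ := round_exists (a * r' - s * t') (a * b' - t' ^ 2) hD'
    apply gram_move23 j
    have hdet2 : a * b' * (c - 2 * j * r' + j ^ 2 * b') + 2 * (r' - j * b') * (s - j * t') * t'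
        - a * (r' - j * b') ^ 2 - b' * (s - j * t') ^ 2 - (c - 2 * j * r' + j ^ 2 * b') * t' ^ 2 = 1 := by
      linear_combination hdet'
    have hg : a * r' - s * t' - j * (a * b' - t' ^ 2) = a * (r' - j * b') - (s - j * t') * t' := by ring
    rw [hg] at hj1 hj2
    generalize c - 2 * j * r' + j ^ 2 * b' = c' at *
    generalize r' - j * b' = r at *
    generalize s - j * t' = s at *
    have key : (a * b' - t' ^ 2) * (a * c' - s ^ 2) = a + (a * r - s * t') ^ 2 := by
      linear_combination a * hdet2
    have hE : 0 < a * c' - s ^ 2 := by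
      by_contra h
      nlinarith [sq_nonneg (a * r - s * t')]
    by_cases hlt : a * c' - s ^ 2 < a * b' - t' ^ 2
    · apply gram_swap23
      apply ih a c' b' r t' s ha hE (by linarith) (by linarith)
    push Not at hlt
    have ht2 : 4 * t' ^ 2 ≤ a ^ 2 := by nlinarith
    have hgg2 : 4 * (a * r - s * t') ^ 2 ≤ (a * b' - t' ^ 2) ^ 2 := by nlinarith
    have h1 : 3 * a ^ 2 ≤ 4 * (a * b' - t' ^ 2) := by nlinarith
    generalize hDD : a * b' - t' ^ 2 = D at *
    have h2 : 3 * D ^ 2 ≤ 4 * a := by nlinarith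
    have ha1 : a = 1 := by
      by_contra hne
      have : 2 ≤ a := by omega
      have : D < a := by nlinarith
      nlinarith
    subst ha1
    have hD1 : D = 1 := by nlinarith
    subst hD1
    have ht0 : t' = 0 := by omega
    subst ht0
    have hr0 : r = 0 := by omega
    subst hr0
    have hb1 : b' = 1 := by linarith
    subst hb1
    exact ⟨1, 0, 0, 0, 1, 0, s, 0, 1, by norm_num, by norm_num, by linarith, by ring, by ring, by ring⟩

def S3 (n : ℤ) : Prop := ∃ x y z : ℤ, x ^ 2 + y ^ 2 + z ^ 2 = n

lemma s3_of_sq {n d b a t : ℤ} (hd : 0 < d) (hb : 0 < b) (hbd : b = d * n - 1)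
    (h : d + t ^ 2 = b * a) : S3 n := by
  have ha : 0 < a := by
    by_contra h'
    nlinarith [sq_nonneg t]
  have hD : a * b - t ^ 2 = d := by linarith
  obtain ⟨u1, u2, u3, v1, v2, v3, w1, w2, w3, -, -, hc, -⟩ :=
    gram_exists (a + d).toNat a b n 0 1 t ha (by linarith) (by
      linear_combination n * hD - hbd) (by rw [hD]; exact Int.self_le_toNat _)
  exact ⟨w1, w2, w3, hc⟩

lemma exists_sq_of_jacobi {p : ℕ} (hp : p.Prime) {d : ℤ} (h : jacobiSym (-d) p = 1) :
    ∃ t a : ℤ, d + t ^ 2 = p * a := by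
  have := Fact.mk hp
  obtain ⟨y, hy⟩ := ZMod.isSquare_of_jacobiSym_eq_one h
  obtain ⟨t, rfl⟩ := ZMod.intCast_surjective y
  have : ((d + t ^ 2 : ℤ) : ZMod p) = 0 := by
    push_cast at hy ⊢
    rw [pow_two, ← hy]; ring
  rw [ZMod.intCast_zmod_eq_zero_iff_dvd] at this
  obtain ⟨a, ha⟩ := this
  exact ⟨t, a, ha⟩

lemma s3_two_mod_four (n : ℕ) (hn : n % 4 = 2) : S3 n := by
  have hcop : (n - 1).Coprime (4 * n) := by
    have h1 : (n - 1).Coprime n := by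
      obtain ⟨k, rfl⟩ : ∃ k, n = k + 1 := ⟨n - 1, by omega⟩
      simp
    have h2 : (n - 1).Coprime 4 := by
      have : Nat.Coprime (n - 1) 2 := by
        rw [Nat.coprime_two_right]; exact Nat.odd_iff.2 (by omega)
      simpa using this.pow_right 2
    exact h2.mul_right h1
  obtain ⟨p, hpn, hp, hmod⟩ := Nat.forall_exists_prime_gt_and_modEq n (by omega) hcop
  obtain ⟨v, hv⟩ := (Nat.modEq_iff_dvd' (by omega)).1 hmod.symm
  have hp' : p + 1 = (4 * v + 1) * n := by
    have : p = n - 1 + 4 * n * v := by omega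
    rw [this, add_mul, one_mul]
    have : 4 * n * v = 4 * v * n := by ring
    omega
  have hp4 : p % 4 = 1 := by
    have : p = n - 1 + 4 * (n * v) := by rw [← mul_assoc]; omega
    omega
  have hJ : jacobiSym (-((4 * v + 1 : ℕ) : ℤ)) p = 1 := by
    rw [jacobiSym.neg _ (Nat.odd_iff.2 (by omega)), ZMod.χ₄_nat_one_mod_four hp4, one_mul,
      jacobiSym.quadratic_reciprocity_one_mod_four (by omega) (Nat.odd_iff.2 (by omega))]
    have : jacobiSym (p : ℤ) (4 * v + 1) = jacobiSym (-1) (4 * v + 1) := by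
      apply jacobiSym.mod_left'
      apply Int.ModEq.symm
      apply (Int.modEq_iff_dvd).2
      refine ⟨n, ?_⟩
      have : ((p + 1 : ℕ) : ℤ) = ((4 * v + 1) * n : ℕ) := by rw [hp']
      push_cast at this ⊢
      linarith
    rw [this, jacobiSym.at_neg_one (Nat.odd_iff.2 (by omega)), ZMod.χ₄_nat_one_mod_four (by omega)]
  obtain ⟨t, a, hta⟩ := exists_sq_of_jacobi hp hJ
  refine s3_of_sq (d := ((4 * v + 1 : ℕ) : ℤ)) (b := p) (by positivity) (by exact_mod_cast hp.pos) ?_ hta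
  have : ((p + 1 : ℕ) : ℤ) = ((4 * v + 1) * n : ℕ) := by rw [hp']
  push_cast at this ⊢
  linarith

lemma s3_odd_aux (n c e : ℕ) (hce : c * n = 2 * e + 1) (he : e % 2 = 1)
    (h : (c = 1 ∧ e % 4 = 1) ∨ (c = 3)) : S3 n := by
  have hn0 : n ≠ 0 := by rintro rfl; simp at hce
  have hcop : e.Coprime (4 * n) := by
    have h1 : e.Coprime n := by
      have h0 : e.Coprime (c * n) := by rw [hce]; simp
      exact h0.coprime_mul_left_right
    have h2 : e.Coprime 4 := by
      have : Nat.Coprime e 2 := by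
        rw [Nat.coprime_two_right]; exact Nat.odd_iff.2 he
      simpa using this.pow_right 2
    exact h2.mul_right h1
  obtain ⟨p, hpn, hp, hmod⟩ := Nat.forall_exists_prime_gt_and_modEq e (by omega) hcop
  obtain ⟨v, hv⟩ := (Nat.modEq_iff_dvd' (by omega)).1 hmod.symm
  have hpe : p = e + 4 * (n * v) := by rw [← mul_assoc]; omega
  have hp' : 2 * p + 1 = (8 * v + c) * n := by
    rw [hpe, add_mul, hce]; ring
  have hpz : ((2 * p + 1 : ℕ) : ℤ) = ((8 * v + c) * n : ℕ) := by rw [hp']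
  obtain ⟨d, hd⟩ : ∃ d, d = 8 * v + c := ⟨_, rfl⟩
  rw [← hd] at hp' hpz
  have hdodd : Odd d := Nat.odd_iff.2 (by omega)
  have hpodd : Odd p := Nat.odd_iff.2 (by omega)
  have h2p : jacobiSym 2 d * jacobiSym p d = jacobiSym (-1) d := by
    rw [← jacobiSym.mul_left]
    apply jacobiSym.mod_left'
    apply Int.ModEq.symm
    apply (Int.modEq_iff_dvd).2
    refine ⟨n, ?_⟩
    push_cast at hpz ⊢
    linarith
  rw [jacobiSym.at_two hdodd, jacobiSym.at_neg_one hdodd, ZMod.χ₈_nat_eq_if_mod_eight,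
    ZMod.χ₄_nat_eq_if_mod_four] at h2p
  have hJ : jacobiSym (-(d : ℤ)) p = 1 := by
    rw [jacobiSym.neg _ hpodd, ZMod.χ₄_nat_eq_if_mod_four]
    rw [← jacobiSym.quadratic_reciprocity_if (Nat.odd_iff.1 hdodd) (Nat.odd_iff.1 hpodd)]
    rw [if_neg (by omega)] at h2p ⊢
    rcases h with ⟨rfl, he4⟩ | rfl
    · have hp4 : p % 4 = 1 := by omega
      have hd8 : d % 8 = 1 := by omega
      have hd4 : d % 4 = 1 := by omega
      have hd2 : d % 2 = 1 := by omega
      simp [hp4, hd8, hd4, hd2] at h2p ⊢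
      exact h2p
    · have hd8 : d % 8 = 3 := by omega
      have hd4 : d % 4 = 3 := by omega
      have hd2 : d % 2 = 1 := by omega
      simp [hd8, hd4, hd2] at h2p ⊢
      rcases (by omega : p % 4 = 1 ∨ p % 4 = 3) with hp4 | hp4 <;> simp [hp4, h2p]
  obtain ⟨t, a, hta⟩ := exists_sq_of_jacobi hp hJ
  obtain ⟨t', a', hta', hpar⟩ : ∃ t' a' : ℤ, d + t' ^ 2 = p * a' ∧ t' % 2 = 1 := by
    rcases Int.emod_two_eq_zero_or_one t with h0 | h0
    · refine ⟨t + p, a + 2 * t + p, by linear_combination hta, by omega⟩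
    · exact ⟨t, a, hta, h0⟩
  have : a' % 2 = 0 := by
    have h1 : (d + t' ^ 2) % 2 = 0 := by
      obtain ⟨k, hk⟩ : ∃ k, t' = 2 * k + 1 := ⟨t' / 2, by omega⟩
      have : t' ^ 2 = 2 * (2 * k ^ 2 + 2 * k) + 1 := by rw [hk]; ring
      omega
    rw [hta'] at h1
    have : (p : ℤ) % 2 = 1 := by omega
    rw [Int.mul_emod, this] at h1
    omega
  obtain ⟨a2, rfl⟩ : ∃ k, a' = 2 * k := ⟨a' / 2, by omega⟩
  refine s3_of_sq (d := d) (b := 2 * p) (a := a2) (t := t') (by omega) (by have := hp.pos; omega) ?_ (by linear_combination hta')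
  push_cast at hpz ⊢
  linarith

lemma s3_odd (n : ℕ) (hn : n % 8 = 1 ∨ n % 8 = 3 ∨ n % 8 = 5) : S3 n := by
  rcases hn with hn | hn | hn
  · exact s3_odd_aux n 3 ((3 * n - 1) / 2) (by omega) (by omega) (by omega)
  · exact s3_odd_aux n 1 ((n - 1) / 2) (by omega) (by omega) (by omega)
  · exact s3_odd_aux n 3 ((3 * n - 1) / 2) (by omega) (by omega) (by omega)
set_option linter.unusedTactic false
set_option linter.unreachableTactic false

lemma s3_int (n : ℤ) (h0 : 0 ≤ n) (h : n % 4 = 2 ∨ n % 8 = 1 ∨ n % 8 = 3 ∨ n % 8 = 5) : S3 n := by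
  lift n to ℕ using h0
  rcases h with h | h
  · exact s3_two_mod_four n (by omega)
  · exact s3_odd n (by omega)

lemma s3_four {n : ℤ} (h : S3 n) : S3 (4 * n) := by
  obtain ⟨x, y, z, h⟩ := h
  exact ⟨2 * x, 2 * y, 2 * z, by linear_combination 4 * h⟩

lemma sq_mod3 (x : ℤ) : (x % 3 = 0 ∧ x ^ 2 % 3 = 0) ∨ (x % 3 ≠ 0 ∧ x ^ 2 % 3 = 1) := by
  have h : x % 3 = 0 ∨ x % 3 = 1 ∨ x % 3 = 2 := by omega
  rcases h with h | h | h <;> simp [pow_two, Int.mul_emod, h]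

lemma sq_mod4 (x : ℤ) : (x % 2 = 0 ∧ x ^ 2 % 4 = 0) ∨ (x % 2 = 1 ∧ x ^ 2 % 4 = 1) := by
  rcases (by omega : x % 2 = 0 ∨ x % 2 = 1) with h | h
  · obtain ⟨k, hk⟩ : ∃ k, x = 2 * k := ⟨x / 2, by omega⟩
    have : x ^ 2 = 4 * k ^ 2 := by rw [hk]; ring
    omega
  · obtain ⟨k, hk⟩ : ∃ k, x = 2 * k + 1 := ⟨x / 2, by omega⟩
    have : x ^ 2 = 4 * (k ^ 2 + k) + 1 := by rw [hk]; ring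
    omega

def R112 (m : ℤ) : Prop := ∃ x y w : ℤ, x ^ 2 + 2 * y ^ 2 + w ^ 2 = m

def U112 (m : ℤ) : Prop := ∃ x y w : ℤ, x ^ 2 + 2 * y ^ 2 + w ^ 2 = m ∧ w % 3 ≠ 0

lemma R_aux {m p q r : ℤ} (h : p ^ 2 + q ^ 2 + r ^ 2 = 2 * m) (hr : r % 2 = 0) : R112 m := by
  have hp := sq_mod4 p
  have hq := sq_mod4 q
  have hr' := sq_mod4 r
  have : (p - q) % 2 = 0 := by omega
  obtain ⟨k, hk⟩ : ∃ k, p = q + 2 * k := ⟨(p - q) / 2, by omega⟩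
  obtain ⟨l, hl⟩ : ∃ l, r = 2 * l := ⟨r / 2, by omega⟩
  refine ⟨q + k, l, k, ?_⟩
  subst hk hl
  linarith

lemma R_of_S3 {m : ℤ} (h : S3 (2 * m)) : R112 m := by
  obtain ⟨p, q, r, h⟩ := h
  have hp := sq_mod4 p
  have hq := sq_mod4 q
  have hr := sq_mod4 r
  have : p % 2 = 0 ∨ q % 2 = 0 ∨ r % 2 = 0 := by omega
  rcases this with h' | h' | h'
  · exact R_aux (p := q) (q := r) (r := p) (by linarith) h'
  · exact R_aux (p := p) (q := r) (r := q) (by linarith) h'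
  · exact R_aux h h'

lemma R_four {m : ℤ} (h : R112 m) : R112 (4 * m) := by
  obtain ⟨x, y, z, h⟩ := h
  exact ⟨2 * x, 2 * y, 2 * z, by linear_combination 4 * h⟩

def G0 (m : ℤ) : Prop := m % 2 = 1 ∨ m % 16 = 2 ∨ m % 16 = 6 ∨ m % 16 = 10

instance (m : ℤ) : Decidable (G0 m) := by unfold G0; infer_instance

def G1 (m : ℤ) : Prop := G0 m ∨ (m % 4 = 0 ∧ G0 (m / 4)) ∨ (m % 16 = 0 ∧ G0 (m / 16))

instance (m : ℤ) : Decidable (G1 m) := by unfold G1; infer_instance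

lemma G1_odd {m : ℤ} (h : m % 2 = 1) : G1 m := Or.inl (Or.inl h)

lemma G1_a {m : ℤ} (h : m % 4 ≠ 0) (h' : m % 16 ≠ 14) : G1 m := by
  left; unfold G0; omega

lemma G1_four {m : ℤ} (h : m % 8 = 4) : G1 m := by
  right; left; exact ⟨by omega, Or.inl (by omega)⟩

lemma R_of_G0 {m : ℤ} (hm : 0 ≤ m) (h : G0 m) : R112 m := by
  apply R_of_S3
  unfold G0 at h
  by_cases ho : m % 2 = 1
  · exact s3_int _ (by omega) (by omega)
  · have : 2 * m = 4 * (m / 2) := by omega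
    rw [this]
    exact s3_four (s3_int _ (by omega) (by omega))

lemma R_of_G1 {m : ℤ} (hm : 0 ≤ m) (h : G1 m) : R112 m := by
  rcases h with h | ⟨h4, h⟩ | ⟨h4, h⟩
  · exact R_of_G0 hm h
  · have : m = 4 * (m / 4) := by omega
    rw [this]
    exact R_four (R_of_G0 (by omega) h)
  · have : m = 4 * (4 * (m / 16)) := by omega
    rw [this]
    exact R_four (R_four (R_of_G0 (by omega) h))

lemma nine_aux (c d : ℤ) (h : c % 3 ≠ 0 ∨ d % 3 ≠ 0) :
    ∃ w y : ℤ, w ^ 2 + 2 * y ^ 2 = 9 * (c ^ 2 + 2 * d ^ 2) ∧ w % 3 ≠ 0 := by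
  by_cases h1 : (-c - 4 * d) % 3 = 0
  · exact ⟨-c + 4 * d, 2 * c + d, by ring, by omega⟩
  · exact ⟨-c - 4 * d, 2 * c - d, by ring, h1⟩

lemma nine_rep (m : ℕ) : ∀ c d : ℤ, c.natAbs + d.natAbs ≤ m → (c ≠ 0 ∨ d ≠ 0) →
    ∃ w y : ℤ, w ^ 2 + 2 * y ^ 2 = 9 * (c ^ 2 + 2 * d ^ 2) ∧ w % 3 ≠ 0 := by
  induction m with
  | zero => intro c d h1 h2; omega
  | succ m ih =>
    intro c d h1 h2
    by_cases h : c % 3 ≠ 0 ∨ d % 3 ≠ 0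
    · exact nine_aux c d h
    · push Not at h
      obtain ⟨c', rfl⟩ : ∃ k, c = 3 * k := ⟨c / 3, by omega⟩
      obtain ⟨d', rfl⟩ : ∃ k, d = 3 * k := ⟨d / 3, by omega⟩
      obtain ⟨w, y, hwy, hw⟩ := ih c' d' (by omega) (by omega)
      obtain ⟨w', y', hwy', hw'⟩ := nine_aux w y (Or.inl hw)
      exact ⟨w', y', by rw [hwy', hwy]; ring, hw'⟩

lemma U_of_R {m : ℤ} (hm : 0 < m) (h3 : m % 3 ≠ 2) (h : R112 m) : U112 m := by
  obtain ⟨x, y, w, h⟩ := h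
  by_cases hw : w % 3 ≠ 0
  · exact ⟨x, y, w, h, hw⟩
  by_cases hx : x % 3 ≠ 0
  · exact ⟨w, y, x, by linarith, hx⟩
  have hy : y % 3 = 0 := by
    have := sq_mod3 x
    have := sq_mod3 y
    have := sq_mod3 w
    omega
  obtain ⟨x', rfl⟩ : ∃ k, x = 3 * k := ⟨x / 3, by omega⟩
  obtain ⟨y', rfl⟩ : ∃ k, y = 3 * k := ⟨y / 3, by omega⟩
  obtain ⟨w', rfl⟩ : ∃ k, w = 3 * k := ⟨w / 3, by omega⟩
  by_cases hz : w' ≠ 0 ∨ y' ≠ 0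
  · obtain ⟨a, b, hab, ha⟩ := nine_rep _ w' y' le_rfl hz
    exact ⟨3 * x', b, a, by linarith, ha⟩
  · have hx0 : x' ≠ 0 := by
      rintro rfl
      push Not at hz
      rw [hz.1, hz.2] at h
      simp at h
      omega
    obtain ⟨a, b, hab, ha⟩ := nine_rep _ x' y' le_rfl (Or.inl hx0)
    exact ⟨3 * w', b, a, by linarith, ha⟩

lemma U_of_G {m : ℤ} (hm : 0 < m) (h3 : m % 3 ≠ 2) (h : G1 m) : U112 m :=
  U_of_R hm h3 (R_of_G1 hm.le h)

lemma scale4 (P : ℤ → Prop) (c : ℤ) (hc : 0 < c)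
    (h0 : ∀ n, c ≤ n → (n % 4 ≠ 0 ∨ n < 4 * c) → P n)
    (h4 : ∀ n, P n → P (4 * n)) : ∀ n, c ≤ n → P n := by
  have : ∀ m : ℕ, ∀ n : ℤ, n ≤ m → c ≤ n → P n := by
    intro m
    induction m with
    | zero => intro n h1 h2; push_cast at h1; omega
    | succ m ih =>
      intro n h1 h2
      by_cases h : n % 4 ≠ 0 ∨ n < 4 * c
      · exact h0 n h2 h
      · have he : n = 4 * (n / 4) := by omega
        rw [he]
        exact h4 _ (ih _ (by omega) (by omega))
  intro n hn
  exact this n.toNat n (Int.self_le_toNat _) hn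

def A (α n : ℤ) : Prop := ∃ x y w z : ℤ, x ^ 2 + 2 * y ^ 2 + w ^ 2 + α * z ^ 2 = n ∧ w % 3 ≠ 0

lemma A_of_U {α n : ℤ} (z : ℤ) (h : U112 (n - α * z ^ 2)) : A α n := by
  obtain ⟨x, y, w, h, hw⟩ := h
  exact ⟨x, y, w, z, by linarith, hw⟩

lemma A_scale {α : ℤ} (h0 : ∀ n, 1 ≤ n → n % 4 ≠ 0 → A α n) : ∀ n, 1 ≤ n → A α n := by
  apply scale4 (A α) 1 (by norm_num)
  · intro n hn h
    exact h0 n hn (by omega)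
  · rintro n ⟨x, y, w, z, h, hw⟩
    exact ⟨2 * x, 2 * y, 2 * w, 2 * z, by linear_combination 4 * h, by omega⟩

lemma S3_pos {p q r : ℤ} (h : (p ^ 2 + q ^ 2 + r ^ 2) % 9 ≠ 0)
    (h3 : (p ^ 2 + q ^ 2 + r ^ 2) % 3 = 0) :
    ∃ i j k : ℤ, p ^ 2 + q ^ 2 + r ^ 2 = (3 * i + 1) ^ 2 + (3 * j + 1) ^ 2 + (3 * k + 1) ^ 2 := by
  have key : ∀ a : ℤ, a % 3 ≠ 0 → ∃ i : ℤ, a ^ 2 = (3 * i + 1) ^ 2 := by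
    intro a ha
    rcases (by omega : a % 3 = 1 ∨ a % 3 = 2) with h | h
    · exact ⟨a / 3, by congr 1; omega⟩
    · refine ⟨(-a) / 3, ?_⟩
      rw [← neg_sq a]; congr 1; omega
  have hp := sq_mod3 p
  have hq := sq_mod3 q
  have hr := sq_mod3 r
  by_cases h0 : p % 3 = 0
  · exfalso
    obtain ⟨p', rfl⟩ : ∃ k, p = 3 * k := ⟨p / 3, by omega⟩
    obtain ⟨q', rfl⟩ : ∃ k, q = 3 * k := ⟨q / 3, by omega⟩
    obtain ⟨r', rfl⟩ : ∃ k, r = 3 * k := ⟨r / 3, by omega⟩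
    apply h
    have : (3 * p') ^ 2 + (3 * q') ^ 2 + (3 * r') ^ 2 = 9 * (p' ^ 2 + q' ^ 2 + r' ^ 2) := by ring
    omega
  · obtain ⟨i, hi⟩ := key p (by omega)
    obtain ⟨j, hj⟩ := key q (by omega)
    obtain ⟨k, hk⟩ := key r (by omega)
    exact ⟨i, j, k, by rw [hi, hj, hk]⟩

lemma eis (a b : ℤ) : ∃ y z : ℤ, a ^ 2 + a * b + b ^ 2 = y ^ 2 + 3 * z ^ 2 := by
  rcases (by omega : a % 2 = 0 ∨ b % 2 = 0 ∨ (a + b) % 2 = 0) with h | h | h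
  · obtain ⟨k, rfl⟩ : ∃ k, a = 2 * k := ⟨a / 2, by omega⟩
    exact ⟨b + k, k, by ring⟩
  · obtain ⟨k, rfl⟩ : ∃ k, b = 2 * k := ⟨b / 2, by omega⟩
    exact ⟨a + k, k, by ring⟩
  · obtain ⟨k, hk⟩ : ∃ k, b = 2 * k - a := ⟨(a + b) / 2, by omega⟩
    subst hk
    exact ⟨a - k, k, by ring⟩

lemma R126 {m : ℤ} (h3 : m % 3 = 1) (h : S3 (3 * m)) :
    ∃ x y z : ℤ, x ^ 2 + 2 * y ^ 2 + 6 * z ^ 2 = m := by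
  obtain ⟨p, q, r, h⟩ := h
  obtain ⟨i, j, k, hijk⟩ := S3_pos (p := p) (q := q) (r := r) (by omega) (by omega)
  obtain ⟨y, z, hyz⟩ := eis (i - j) (j - k)
  refine ⟨i + j + k + 1, y, z, ?_⟩
  have : (i + j + k + 1) ^ 2 + 2 * (y ^ 2 + 3 * z ^ 2) = m := by
    rw [← hyz]
    linarith
  linarith

lemma A6 : ∀ n, 1 ≤ n → A 6 n := by
  apply A_scale
  intro n hn h4
  by_cases h3 : n % 3 = 2
  · have key : ∀ w : ℤ, w % 3 ≠ 0 → 0 ≤ n - w ^ 2 → S3 (3 * (n - w ^ 2)) → A 6 n := by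
      intro w hw h0 hs
      have := sq_mod3 w
      obtain ⟨x, y, z, h⟩ := R126 (by omega) hs
      exact ⟨x, y, w, z, by linarith, hw⟩
    by_cases h1 : n % 4 = 3 ∨ n % 8 = 2
    · exact key 1 (by norm_num) (by omega) (s3_int _ (by omega) (by omega))
    by_cases h2 : n % 8 = 6 ∨ n % 8 = 5
    · exact key 2 (by norm_num) (by omega) (s3_int _ (by omega) (by omega))
    · have h8 : n % 8 = 1 := by
        rcases (by omega : n % 8 = 0 ∨ n % 8 = 1 ∨ n % 8 = 2 ∨ n % 8 = 3 ∨ n % 8 = 4 ∨ n % 8 = 5 ∨ n % 8 = 6 ∨ n % 8 = 7)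
          with e | e | e | e | e | e | e | e <;> omega
      have h24 : n % 24 = 17 := by omega
      exact key 4 (by norm_num) (by omega) (s3_int _ (by omega) (by omega))
  · by_cases h : n % 16 = 14
    · exact A_of_U 2 (U_of_G (by omega) (by omega) (by first | exact G1_odd (by omega) | exact G1_a (by omega) (by omega) | exact G1_four (by omega)))
    · exact A_of_U 0 (U_of_G (by omega) (by omega) (by first | exact G1_odd (by omega) | exact G1_a (by omega) (by omega) | exact G1_four (by omega)))

lemma A7 : ∀ n, 1 ≤ n → A 7 n := by
  apply A_scale
  intro n hn h4
  by_cases h3 : n % 3 = 2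
  · by_cases hs : n ≤ 28
    · have : n = 2 ∨ n = 5 ∨ n = 11 ∨ n = 14 ∨ n = 17 ∨ n = 23 ∨ n = 26 := by omega
      rcases this with rfl | rfl | rfl | rfl | rfl | rfl | rfl
      · exact ⟨1, 0, 1, 0, by norm_num, by norm_num⟩
      · exact ⟨2, 0, 1, 0, by norm_num, by norm_num⟩
      · exact ⟨0, 0, 2, 1, by norm_num, by norm_num⟩
      · exact ⟨2, 1, 1, 1, by norm_num, by norm_num⟩
      · exact ⟨4, 0, 1, 0, by norm_num, by norm_num⟩
      · exact ⟨0, 0, 4, 1, by norm_num, by norm_num⟩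
      · exact ⟨5, 0, 1, 0, by norm_num, by norm_num⟩
    · by_cases h : n % 2 = 1
      · exact A_of_U 2 (U_of_G (by omega) (by omega) (by first | exact G1_odd (by omega) | exact G1_a (by omega) (by omega) | exact G1_four (by omega)))
      · exact A_of_U 1 (U_of_G (by omega) (by omega) (by first | exact G1_odd (by omega) | exact G1_a (by omega) (by omega) | exact G1_four (by omega)))
  · by_cases h : n % 16 = 14
    · by_cases h0 : n % 3 = 1
      · exact A_of_U 1 (U_of_G (by omega) (by omega) (by first | exact G1_odd (by omega) | exact G1_a (by omega) (by omega) | exact G1_four (by omega)))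
      · by_cases hs : n = 30
        · subst hs
          exact ⟨1, 0, 1, 2, by norm_num, by norm_num⟩
        · exact A_of_U 3 (U_of_G (by omega) (by omega) (by first | exact G1_odd (by omega) | exact G1_a (by omega) (by omega) | exact G1_four (by omega)))
    · exact A_of_U 0 (U_of_G (by omega) (by omega) (by first | exact G1_odd (by omega) | exact G1_a (by omega) (by omega) | exact G1_four (by omega)))

lemma A8 : ∀ n, 1 ≤ n → A 8 n := by
  apply A_scale
  intro n hn h4
  by_cases h3 : n % 3 = 2
  · by_cases hs : n ≤ 8
    · have : n = 2 ∨ n = 5 := by omega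
      rcases this with rfl | rfl
      · exact ⟨1, 0, 1, 0, by norm_num, by norm_num⟩
      · exact ⟨2, 0, 1, 0, by norm_num, by norm_num⟩
    · by_cases h : n % 16 = 6
      · exact A_of_U 2 (U_of_G (by omega) (by omega) (by first | exact G1_odd (by omega) | exact G1_a (by omega) (by omega) | exact G1_four (by omega)))
      · exact A_of_U 1 (U_of_G (by omega) (by omega) (by first | exact G1_odd (by omega) | exact G1_a (by omega) (by omega) | exact G1_four (by omega)))
  · by_cases h : n % 16 = 14
    · by_cases h0 : n % 3 = 0
      · exact A_of_U 1 (U_of_G (by omega) (by omega) (by first | exact G1_odd (by omega) | exact G1_a (by omega) (by omega) | exact G1_four (by omega)))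
      · by_cases hs : n = 46
        · subst hs
          exact ⟨4, 3, 2, 1, by norm_num, by norm_num⟩
        · exact A_of_U 3 (U_of_G (by omega) (by omega) (by first | exact G1_odd (by omega) | exact G1_a (by omega) (by omega) | exact G1_four (by omega)))
    · exact A_of_U 0 (U_of_G (by omega) (by omega) (by first | exact G1_odd (by omega) | exact G1_a (by omega) (by omega) | exact G1_four (by omega)))

lemma A9_aux {n p q r : ℤ} (h3 : n % 3 = 2) (y : ℤ) (h : p ^ 2 + q ^ 2 + r ^ 2 = n - 18 * y ^ 2) :
    A 9 n := by
  have hp := sq_mod3 p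
  have hq := sq_mod3 q
  have hr := sq_mod3 r
  by_cases h1 : p % 3 = 0
  · obtain ⟨p', rfl⟩ : ∃ k, p = 3 * k := ⟨p / 3, by omega⟩
    exact ⟨q, 3 * y, r, p', by linarith, by omega⟩
  by_cases h2 : q % 3 = 0
  · obtain ⟨p', rfl⟩ : ∃ k, q = 3 * k := ⟨q / 3, by omega⟩
    exact ⟨p, 3 * y, r, p', by linarith, by omega⟩
  · obtain ⟨p', rfl⟩ : ∃ k, r = 3 * k := ⟨r / 3, by omega⟩
    exact ⟨p, 3 * y, q, p', by linarith, by omega⟩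

lemma A9 : ∀ n, 1 ≤ n → A 9 n := by
  apply A_scale
  intro n hn h4
  by_cases h3 : n % 3 = 2
  · by_cases h7 : n % 8 = 7
    · obtain ⟨p, q, r, h⟩ := s3_int (n - 18 * 1 ^ 2) (by omega) (by omega)
      exact A9_aux h3 1 h
    · have h8 : n % 8 = 1 ∨ n % 8 = 2 ∨ n % 8 = 3 ∨ n % 8 = 5 ∨ n % 8 = 6 := by omega
      obtain ⟨p, q, r, h⟩ := s3_int (n - 18 * 0 ^ 2) (by omega) (by omega)
      exact A9_aux h3 0 h
  · by_cases h : n % 16 = 14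
    · exact A_of_U 1 (U_of_G (by omega) (by omega) (by first | exact G1_odd (by omega) | exact G1_a (by omega) (by omega) | exact G1_four (by omega)))
    · exact A_of_U 0 (U_of_G (by omega) (by omega) (by first | exact G1_odd (by omega) | exact G1_a (by omega) (by omega) | exact G1_four (by omega)))

lemma A10 : ∀ n, 1 ≤ n → A 10 n := by
  apply A_scale
  intro n hn h4
  by_cases h3 : n % 3 = 2
  · by_cases hs : n ≤ 10 ∨ n = 26
    · have : n = 2 ∨ n = 5 ∨ n = 26 := by omega
      rcases this with rfl | rfl | rfl
      · exact ⟨1, 0, 1, 0, by norm_num, by norm_num⟩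
      · exact ⟨2, 0, 1, 0, by norm_num, by norm_num⟩
      · exact ⟨5, 0, 1, 0, by norm_num, by norm_num⟩
    · by_cases h : n % 8 = 2
      · exact A_of_U 2 (U_of_G (by omega) (by omega) (by first | exact G1_odd (by omega) | exact G1_a (by omega) (by omega) | exact G1_four (by omega)))
      by_cases h6 : n % 8 = 6
      · exact A_of_U 1 (U_of_G (by omega) (by omega) (G1_four (by omega)))
      · have h2 : n % 2 = 1 := by
          rcases (by omega : n % 4 = 1 ∨ n % 4 = 2 ∨ n % 4 = 3) with e | e | e <;> omega
        exact A_of_U 1 (U_of_G (by omega) (by omega) (by first | exact G1_odd (by omega) | exact G1_a (by omega) (by omega) | exact G1_four (by omega)))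
  · by_cases h : n % 16 = 14
    · by_cases h0 : n % 3 = 1
      · exact A_of_U 1 (U_of_G (by omega) (by omega) (by first | exact G1_odd (by omega) | exact G1_a (by omega) (by omega) | exact G1_four (by omega)))
      · by_cases hs : n = 30 ∨ n = 78
        · rcases hs with rfl | rfl
          · exact ⟨4, 0, 2, 1, by norm_num, by norm_num⟩
          · exact ⟨8, 0, 2, 1, by norm_num, by norm_num⟩
        · exact A_of_U 3 (U_of_G (by omega) (by omega) (by first | exact G1_odd (by omega) | exact G1_a (by omega) (by omega) | exact G1_four (by omega)))
    · exact A_of_U 0 (U_of_G (by omega) (by omega) (by first | exact G1_odd (by omega) | exact G1_a (by omega) (by omega) | exact G1_four (by omega)))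

def B (β n : ℤ) : Prop :=
  ∃ x y w t : ℤ, x ^ 2 + 2 * y ^ 2 + w ^ 2 + β * (3 * t ^ 2 - 2 * t) = n ∧ w % 3 ≠ 0

def octs : List ℕ := [0, 1, 5, 8, 16, 21]

lemma octs_spec (p : ℕ) (hp : p ∈ octs) : (p : ℤ) ≤ 21 ∧ ∃ t : ℤ, 3 * t ^ 2 - 2 * t = p := by
  simp only [octs, List.mem_cons, List.not_mem_nil, or_false] at hp
  rcases hp with rfl | rfl | rfl | rfl | rfl | rfl
  · exact ⟨by norm_num, 0, by norm_num⟩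
  · exact ⟨by norm_num, 1, by norm_num⟩
  · exact ⟨by norm_num, -1, by norm_num⟩
  · exact ⟨by norm_num, 2, by norm_num⟩
  · exact ⟨by norm_num, -2, by norm_num⟩
  · exact ⟨by norm_num, 3, by norm_num⟩

def smallB (β n : ℕ) : Bool :=
  (List.range 15).any fun w => (w % 3 != 0) && (List.range 15).any fun x => (List.range 15).any fun y =>
    octs.any fun p => x ^ 2 + 2 * y ^ 2 + w ^ 2 + β * p == n

lemma B_of_small {β n : ℕ} (h : smallB β n = true) : B β n := by
  simp only [smallB, List.any_eq_true, Bool.and_eq_true, bne_iff_ne, beq_iff_eq] at h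
  obtain ⟨w, -, hw, x, -, y, -, p, hp, h⟩ := h
  obtain ⟨-, t, ht⟩ := octs_spec p hp
  refine ⟨x, y, w, t, ?_, by omega⟩
  rw [ht]
  exact_mod_cast h

def goodRes (m : ℤ) : Bool := decide (G1 m) && decide (m % 3 ≠ 2)

lemma G1_congr {m m' : ℤ} (h : ∃ k, m = m' + 256 * k) (h' : G1 m') : G1 m := by
  obtain ⟨k, rfl⟩ := h
  rcases h' with h' | ⟨h4, h'⟩ | ⟨h4, h'⟩
  · left; unfold G0 at *; omega
  · right; left
    refine ⟨by omega, ?_⟩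
    have : (m' + 256 * k) / 4 = m' / 4 + 64 * k := by omega
    rw [this]
    unfold G0 at *; omega
  · right; right
    refine ⟨by omega, ?_⟩
    have : (m' + 256 * k) / 16 = m' / 16 + 16 * k := by omega
    rw [this]
    unfold G0 at *; omega

lemma B_of_U {β n : ℤ} (t : ℤ) (h : U112 (n - β * (3 * t ^ 2 - 2 * t))) : B β n := by
  obtain ⟨x, y, w, h, hw⟩ := h
  exact ⟨x, y, w, t, by linarith, hw⟩

lemma B_large {β : ℕ} (r : ℕ) (h : (octs.any fun p => goodRes ((r : ℤ) - β * p)) = true)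
    (n : ℕ) (hn : β * 21 < n) (hr : n % 768 = r) : B β n := by
  simp only [List.any_eq_true, goodRes, Bool.and_eq_true, decide_eq_true_eq] at h
  obtain ⟨p, hp, h1, h2⟩ := h
  obtain ⟨hp21, t, ht⟩ := octs_spec p hp
  apply B_of_U t
  rw [ht]
  have hb : (β : ℤ) * p ≤ β * 21 := by gcongr
  have hn' : (β : ℤ) * 21 < n := by exact_mod_cast hn
  have e : (n : ℤ) = r + 768 * (n / 768 : ℕ) := by omega
  have e2 : (n : ℤ) - β * p = ((r : ℤ) - β * p) + 256 * (3 * (n / 768 : ℕ)) := by rw [e]; ring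
  refine U_of_G (by linarith) ?_ (G1_congr ⟨_, e2⟩ h1)
  rw [e2]; omega

def smallG (β n : ℕ) : Bool :=
  octs.any fun p => Nat.blt (β * p) n && goodRes (((n - β * p : ℕ)) : ℤ)

lemma B_of_smallG {β n : ℕ} (h : smallG β n = true) : B β n := by
  simp only [smallG, List.any_eq_true, goodRes, Bool.and_eq_true, decide_eq_true_eq,
    Nat.blt_eq] at h
  obtain ⟨p, hp, hlt, h1, h2⟩ := h
  obtain ⟨-, t, ht⟩ := octs_spec p hp
  apply B_of_U t
  rw [ht]
  have e : (n : ℤ) - β * p = ((n - β * p : ℕ) : ℤ) := by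
    rw [Nat.cast_sub hlt.le]; push_cast; ring
  rw [e]
  exact U_of_G (by omega) h2 h1

lemma B_all {β : ℕ} (h1 : ((List.range 768).all fun r => octs.any fun p => goodRes ((r : ℤ) - β * p)) = true)
    (h2 : ((List.range (β * 21 + 1)).all fun n => n == 0 || (smallG β n || smallB β n)) = true) (n : ℤ) (hn : 1 ≤ n) :
    B β n := by
  lift n to ℕ using by omega
  by_cases h : β * 21 < n
  · rw [List.all_eq_true] at h1
    exact B_large (n % 768) (h1 _ (List.mem_range.2 (Nat.mod_lt _ (by norm_num)))) n h rfl
  · rw [List.all_eq_true] at h2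
    have := h2 n (List.mem_range.2 (by omega))
    simp only [Bool.or_eq_true, beq_iff_eq] at this
    rcases this with h0 | h0 | h0
    · omega
    · exact B_of_smallG h0
    · exact B_of_small h0

lemma B4 : ∀ n : ℤ, 1 ≤ n → B 4 n := B_all (β := 4) (by decide +kernel) (by decide +kernel)
lemma B5 : ∀ n : ℤ, 1 ≤ n → B 5 n := B_all (β := 5) (by decide +kernel) (by decide +kernel)
lemma B7 : ∀ n : ℤ, 1 ≤ n → B 7 n := B_all (β := 7) (by decide +kernel) (by decide +kernel)
lemma B8 : ∀ n : ℤ, 1 ≤ n → B 8 n := B_all (β := 8) (by decide +kernel) (by decide +kernel)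
lemma B10 : ∀ n : ℤ, 1 ≤ n → B 10 n := B_all (β := 10) (by decide +kernel) (by decide +kernel)

def C6 (L : ℤ) : Prop :=
  ∃ x y w s : ℤ, x ^ 2 + 2 * y ^ 2 + w ^ 2 + 2 * s ^ 2 = L ∧ w % 3 ≠ 0 ∧ s % 3 ≠ 0

lemma C6_of_U {L : ℤ} (s : ℤ) (hs : s % 3 ≠ 0) (h : U112 (L - 2 * s ^ 2)) : C6 L := by
  obtain ⟨x, y, w, h, hw⟩ := h
  exact ⟨x, y, w, s, by linarith, hw, hs⟩

lemma C6_aux {m x w s : ℤ} (h3 : m % 3 = 1) (h : x ^ 2 + 2 * s ^ 2 + w ^ 2 = m)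
    (hns : ∀ k : ℤ, k ^ 2 ≠ m) (hw : w % 3 = 0) (hs : s % 3 = 0) :
    ∃ x s w : ℤ, x ^ 2 + 2 * s ^ 2 + w ^ 2 = m ∧ w % 3 ≠ 0 ∧ s % 3 ≠ 0 := by
  obtain ⟨c, rfl⟩ : ∃ k, w = 3 * k := ⟨w / 3, by omega⟩
  obtain ⟨d, rfl⟩ : ∃ k, s = 3 * k := ⟨s / 3, by omega⟩
  have h0 : c ≠ 0 ∨ d ≠ 0 := by
    by_contra hcd
    push Not at hcd
    apply hns x
    rw [← h, hcd.1, hcd.2]; ring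
  obtain ⟨a, b, hab, ha⟩ := nine_rep _ c d le_rfl h0
  refine ⟨x, b, a, by linarith, ha, ?_⟩
  have h1 := sq_mod3 a
  have h2 := sq_mod3 b
  omega

lemma C6_of_R {L : ℤ} (h3 : L % 3 = 1) (y : ℤ) (hns : ∀ k : ℤ, k ^ 2 ≠ L - 18 * y ^ 2)
    (h : R112 (L - 18 * y ^ 2)) : C6 L := by
  obtain ⟨x, s, w, h⟩ := h
  have hx := sq_mod3 x
  have hw := sq_mod3 w
  have hs := sq_mod3 s
  have : ∃ x s w : ℤ, x ^ 2 + 2 * s ^ 2 + w ^ 2 = L - 18 * y ^ 2 ∧ w % 3 ≠ 0 ∧ s % 3 ≠ 0 := by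
    by_cases hs0 : s % 3 = 0
    · by_cases hw0 : w % 3 = 0
      · exact C6_aux (by omega) h hns hw0 hs0
      · exact C6_aux (x := w) (w := x) (s := s) (by omega) (by linarith) hns (by omega) hs0
    · exact ⟨x, s, w, h, by omega, hs0⟩
  obtain ⟨x, s, w, h, hw, hs⟩ := this
  exact ⟨x, 3 * y, w, s, by linarith, hw, hs⟩

lemma C6_all : ∀ L, 3 ≤ L → C6 L := by
  apply scale4 C6 3 (by norm_num)
  · intro L hL h
    by_cases h4 : L % 4 = 0
    · have : L = 4 ∨ L = 8 := by omega
      rcases this with rfl | rfl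
      · exact ⟨1, 0, 1, 1, by norm_num, by norm_num, by norm_num⟩
      · exact ⟨0, 1, 2, 1, by norm_num, by norm_num, by norm_num⟩
    clear h
    by_cases h3 : L % 3 = 1
    · by_cases hsq : ∃ k : ℤ, k ^ 2 = L
      · obtain ⟨k, hk⟩ := hsq
        have hk4 := sq_mod4 k
        have hL18 : 18 < L := by
          by_contra hle
          have : L = 7 ∨ L = 10 ∨ L = 13 := by omega
          have hL13 : L ≤ 13 := by omega
          have hk1 : k < 4 := by nlinarith
          have hk2 : -4 < k := by nlinarith
          interval_cases k <;> omega
        refine C6_of_R h3 1 ?_ (R_of_G1 (by omega) (G1_odd (by omega)))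
        intro j hj
        have := sq_mod4 j
        omega
      · push Not at hsq
        by_cases h14 : L % 16 = 14
        · refine C6_of_R h3 1 ?_ (R_of_G1 (by omega) (G1_four (by omega)))
          intro j hj
          have hj4 := sq_mod4 j
          obtain ⟨i, rfl⟩ : ∃ i, j = 2 * i := ⟨j / 2, by omega⟩
          have := sq_mod4 i
          have e : (2 * i) ^ 2 = 4 * i ^ 2 := by ring
          omega
        · refine C6_of_R h3 0 ?_ (R_of_G1 (by omega) (G1_a (by omega) (by omega)))
          intro j hj
          exact hsq j (by linarith)
    · by_cases h2 : L % 2 = 1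
      · exact C6_of_U 1 (by norm_num) (U_of_G (by omega) (by omega) (G1_odd (by omega)))
      have h42 : L % 4 = 2 := by omega
      by_cases h8 : L % 8 = 6
      · exact C6_of_U 1 (by norm_num) (U_of_G (by omega) (by omega) (G1_four (by omega)))
      · have h82 : L % 8 = 2 := by omega
        exact C6_of_U 2 (by norm_num) (U_of_G (by omega) (by omega) (G1_a (by omega) (by omega)))
  · rintro n ⟨x, y, w, s, h, hw, hs⟩
    exact ⟨2 * x, 2 * y, 2 * w, 2 * s, by linear_combination 4 * h, by omega, by omega⟩

lemma exists_t (s : ℤ) (h : s % 3 ≠ 0) : ∃ t : ℤ, s ^ 2 = (3 * t - 1) ^ 2 := by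
  rcases (by omega : s % 3 = 2 ∨ s % 3 = 1) with h | h
  · exact ⟨(s + 1) / 3, by congr 1; omega⟩
  · refine ⟨(-s + 1) / 3, ?_⟩
    rw [← neg_sq s]; congr 1; omega

lemma B6 : ∀ n : ℤ, 1 ≤ n → B 6 n := by
  intro n hn
  obtain ⟨x, y, w, s, h, hw, hs⟩ := C6_all (n + 2) (by omega)
  obtain ⟨t, ht⟩ := exists_t s hs
  exact ⟨x, y, w, t, by linear_combination h - 2 * ht, hw⟩

lemma R123_aux {M i j k : ℤ} (h : (6 * i + 4) ^ 2 + (6 * j + 4) ^ 2 + (6 * k + 4) ^ 2 = 6 * M)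
    (hij : (i - j) % 3 ≠ 0) : ∃ w y s : ℤ, w ^ 2 + 2 * y ^ 2 + 3 * s ^ 2 = M ∧ s % 3 ≠ 0 :=
  ⟨i + j - 2 * k, i + j + k + 2, i - j, by linarith, hij⟩

lemma R123 {M : ℤ} (h2 : M % 2 = 0) (h3 : M % 3 = 1) (h : S3 (6 * M)) :
    ∃ w y s : ℤ, w ^ 2 + 2 * y ^ 2 + 3 * s ^ 2 = M ∧ s % 3 ≠ 0 := by
  obtain ⟨p, q, r, h⟩ := h
  obtain ⟨i, j, k, hijk⟩ := S3_pos (p := p) (q := q) (r := r) (by omega) (by omega)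
  rw [h] at hijk
  have h1 := sq_mod4 (3 * i + 1)
  have h2 := sq_mod4 (3 * j + 1)
  have h3 := sq_mod4 (3 * k + 1)
  obtain ⟨i, rfl⟩ : ∃ a, i = 2 * a + 1 := ⟨i / 2, by omega⟩
  obtain ⟨j, rfl⟩ : ∃ a, j = 2 * a + 1 := ⟨j / 2, by omega⟩
  obtain ⟨k, rfl⟩ : ∃ a, k = 2 * a + 1 := ⟨k / 2, by omega⟩
  have hM : M = 6 * (i ^ 2 + j ^ 2 + k ^ 2) + 8 * (i + j + k) + 8 := by linarith
  have hs : (i + j + k) % 3 = 1 := by omega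
  rcases (by omega : (i - j) % 3 ≠ 0 ∨ (i - k) % 3 ≠ 0 ∨ (j - k) % 3 ≠ 0) with hd | hd | hd
  · exact R123_aux (k := k) (by linarith) hd
  · exact R123_aux (k := j) (by linarith) hd
  · exact R123_aux (k := i) (by linarith) hd

lemma B9_aux {n : ℤ} (h3 : n % 3 = 2) (x : ℤ) (hx : x % 3 ≠ 0) (k : ℤ) (hk : n + 3 - x ^ 2 = 2 * k)
    (hk0 : 0 ≤ k) (h : S3 (3 * k)) : B 9 n := by
  have hx3 := sq_mod3 x
  have h' : S3 (6 * (2 * k)) := by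
    have : 6 * (2 * k) = 4 * (3 * k) := by ring
    rw [this]; exact s3_four h
  obtain ⟨w, y, s, h, hs⟩ := R123 (M := 2 * k) (by omega) (by omega) h'
  obtain ⟨t, ht⟩ := exists_t s hs
  exact ⟨w, y, x, t, by linear_combination h - hk - 3 * ht, hx⟩

lemma B9 : ∀ n : ℤ, 1 ≤ n → B 9 n := by
  intro n hn
  by_cases h3 : n % 3 = 2
  · by_cases hs : n < 60
    · lift n to ℕ using by omega
      have key : ((List.range 60).all fun n => n % 3 != 2 || smallB 9 n) = true := by decide +kernel
      rw [List.all_eq_true] at key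
      have := key n (List.mem_range.2 (by omega))
      simp only [Bool.or_eq_true, bne_iff_ne] at this
      rcases this with h0 | h0
      · omega
      · exact B_of_small h0
    · rcases (by omega : n % 2 = 1 ∨ n % 2 = 0) with h2 | h2
      · obtain ⟨k, hk⟩ : ∃ k, n = 2 * k + 1 := ⟨n / 2, by omega⟩
        by_cases hb : k % 4 = 2 ∨ k % 8 = 1 ∨ k % 8 = 3 ∨ k % 8 = 7
        · exact B9_aux h3 2 (by norm_num) k (by omega) (by omega) (s3_int _ (by omega) (by omega))
        · have : k % 8 = 5 ∨ k % 8 = 0 ∨ k % 8 = 4 := by omega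
          exact B9_aux h3 4 (by norm_num) (k - 6) (by omega) (by omega)
            (s3_int _ (by omega) (by omega))
      · obtain ⟨k, hk⟩ : ∃ k, n = 2 * k - 2 := ⟨n / 2 + 1, by omega⟩
        by_cases hb : k % 4 = 2 ∨ k % 8 = 1 ∨ k % 8 = 3 ∨ k % 8 = 7
        · exact B9_aux h3 1 (by norm_num) k (by omega) (by omega) (s3_int _ (by omega) (by omega))
        by_cases h5 : k % 8 = 5
        · exact B9_aux h3 5 (by norm_num) (k - 12) (by omega) (by omega)
            (s3_int _ (by omega) (by omega))
        · obtain ⟨l, rfl⟩ : ∃ l, k = 4 * l := ⟨k / 4, by omega⟩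
          by_cases hb : l % 4 = 2 ∨ l % 8 = 1 ∨ l % 8 = 3 ∨ l % 8 = 7
          · refine B9_aux h3 1 (by norm_num) (4 * l) (by omega) (by omega) ?_
            rw [mul_left_comm]
            exact s3_four (s3_int _ (by omega) (by omega))
          by_cases h5 : l % 8 = 5
          · refine B9_aux h3 5 (by norm_num) (4 * (l - 3)) (by omega) (by omega) ?_
            rw [mul_left_comm]
            exact s3_four (s3_int _ (by omega) (by omega))
          · have : l % 8 = 0 ∨ l % 8 = 4 := by omega
            refine B9_aux h3 7 (by norm_num) (4 * (l - 6)) (by omega) (by omega) ?_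
            rw [mul_left_comm]
            exact s3_four (s3_int _ (by omega) (by omega))
  · by_cases h : n % 2 = 0
    · by_cases h9 : n ≤ 9
      · have : n = 4 ∨ n = 6 := by omega
        rcases this with rfl | rfl
        · exact ⟨0, 0, 2, 0, by norm_num, by norm_num⟩
        · exact ⟨0, 1, 2, 0, by norm_num, by norm_num⟩
      · exact B_of_U 1 (U_of_G (by omega) (by omega) (G1_odd (by omega)))
    · exact B_of_U 0 (U_of_G (by omega) (by omega) (G1_odd (by omega)))

theorem universal_case_4_11 :
    (∀ α : ℤ, 6 ≤ α → α ≤ 10 → ∀ N : ℤ, 0 ≤ N →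
      ∃ x y z t : ℤ,
        x ^ 2 + 2 * y ^ 2 + α * z ^ 2 + 3 * (3 * t ^ 2 - 2 * t) = N) ∧
    (∀ β : ℤ, 4 ≤ β → β ≤ 10 → ∀ N : ℤ, 0 ≤ N →
      ∃ x y z t : ℤ,
        x ^ 2 + 2 * y ^ 2 + 3 * (3 * z ^ 2 - 2 * z) + β * (3 * t ^ 2 - 2 * t) = N) := by
  constructor
  · intro α h1 h2 N hN
    have h : A α (N + 1) := by
      rcases (by omega : α = 6 ∨ α = 7 ∨ α = 8 ∨ α = 9 ∨ α = 10) with rfl | rfl | rfl | rfl | rfl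
      · exact A6 _ (by omega)
      · exact A7 _ (by omega)
      · exact A8 _ (by omega)
      · exact A9 _ (by omega)
      · exact A10 _ (by omega)
    obtain ⟨x, y, w, z, h, hw⟩ := h
    obtain ⟨t, ht⟩ := exists_t w hw
    exact ⟨x, y, z, t, by linear_combination h - ht⟩
  · intro β h1 h2 N hN
    have h : B β (N + 1) := by
      rcases (by omega : β = 4 ∨ β = 5 ∨ β = 6 ∨ β = 7 ∨ β = 8 ∨ β = 9 ∨ β = 10) with
        rfl | rfl | rfl | rfl | rfl | rfl | rfl
      · exact B4 _ (by omega)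
      · exact B5 _ (by omega)
      · exact B6 _ (by omega)
      · exact B7 _ (by omega)
      · exact B8 _ (by omega)
      · exact B9 _ (by omega)
      · exact B10 _ (by omega)
    obtain ⟨x, y, w, t, h, hw⟩ := h
    obtain ⟨z, hz⟩ := exists_t w hw
    exact ⟨x, y, z, t, by linear_combination h - hz⟩
end

section
/- For every integer α with 4 ≤ α ≤ 18 and every nonnegative integer N, the equation x² + αy² + (3z² − 2z) + 3(3t² − 2t) = N has an integer solution in ℤ⁴; and for every integer β with 3 ≤ β ≤ 18 and every nonnegative integer N, the equation x² + (3y² − 2y) + 3(3z² − 2z) + β(3t² − 2t) = N has an integer solution in ℤ⁴. That is, the quaternary mixed sums x²+αy²+P₈(z)+3P₈(t) (4 ≤ α ≤ 18) and x²+P₈(y)+3P₈(z)+βP₈(t) (3 ≤ β ≤ 18) are universal. -/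
def selS (a b c d e f x y z w : ℤ) : ℤ :=
  a*(x-y)^2 + b*(x-z)^2 + c*(x-w)^2 + d*(y-z)^2 + e*(y-w)^2 + f*(z-w)^2

def selD (a b c d e f : ℤ) : ℤ :=
  (a+b+c)*((a+d+e)*(b+d+f) - d*d) - a*(a*(b+d+f) + d*b) - b*(a*d + (a+d+e)*b)

lemma sel_bound (a b c d e f : ℤ) (ha : 0 ≤ a) (hb : 0 ≤ b) (hc : 0 ≤ c) (hd : 0 ≤ d)
    (he : 0 ≤ e) (hf : 0 ≤ f) (h : selD a b c d e f = 3) : a ≤ 3 := by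
  by_contra hlt
  push Not at hlt
  have h2 : selD a b c d e f = a * ((b+d)*(c+e) + (b+d)*f + (c+e)*f) +
     (b*d*(c+e) + c*e*(b+d) + f*((b+c)*(d+e) - 0)) := by
    unfold selD; ring
  set B := (b+d)*(c+e) + (b+d)*f + (c+e)*f with hB
  have p1 : 0 ≤ (b+d)*(c+e) := by positivity
  have p2 : 0 ≤ (b+d)*f := by positivity
  have p3 : 0 ≤ (c+e)*f := by positivity
  have hA : 0 ≤ b*d*(c+e) + c*e*(b+d) + f*((b+c)*(d+e) - 0) := by
    rw [sub_zero]; positivity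
  have hB0 : B = 0 := by
    by_contra hne
    have : 1 ≤ B := by omega
    nlinarith
  have q1 : (b+d)*(c+e) = 0 := by omega
  have q2 : (b+d)*f = 0 := by omega
  have q3 : (c+e)*f = 0 := by omega
  have hA0 : b*d*(c+e) + c*e*(b+d) + f*((b+c)*(d+e) - 0) = 0 := by
    rcases mul_eq_zero.mp q1 with h | h
    · have : b = 0 := by omega
      have : d = 0 := by omega
      subst b d
      rcases mul_eq_zero.mp q3 with h | h
      · have : c = 0 := by omega
        have : e = 0 := by omega
        subst c e; ring
      · subst f; ring
    · have : c = 0 := by omega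
      have : e = 0 := by omega
      subst c e
      rcases mul_eq_zero.mp q2 with h | h
      · have : b = 0 := by omega
        have : d = 0 := by omega
        subst b d; ring
      · subst f; ring
  rw [hB0, hA0] at h2
  omega

def natD (a b c d e f : ℕ) : ℕ :=
  a * ((b+d)*(c+e) + (b+d)*f + (c+e)*f) + (b*d*(c+e) + c*e*(b+d) + f*((b+c)*(d+e)))

def natS (a b c d e f x y z : ℕ) : ℕ :=
  let g := fun m n : ℕ => (m - n + (n - m))^2
  a*g x y + b*g x z + c*g x 0 + d*g y z + e*g y 0 + f*g z 0

def isT (a b c d e f : ℕ) : Bool :=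
  (a+b+c+d+e+f == 5) && (a^2+b^2+c^2+d^2+e^2+f^2 == 11)

def chk (a b c d e f : ℕ) : Bool :=
  if natD a b c d e f = 3 then
    isT a b c d e f || (List.range 4).any fun x => (List.range 4).any fun y => (List.range 4).any fun z =>
      natS a b c d e f x y z % 9 == 6
  else true

lemma chk_all : ∀ a < 4, ∀ b < 4, ∀ c < 4, ∀ d < 4, ∀ e < 4, ∀ f < 4, chk a b c d e f = true := by
  decide +kernel

set_option synthInstance.maxSize 2000 in
set_option synthInstance.maxHeartbeats 200000 in
lemma T_aux : ∀ a < 4, ∀ b < 4, ∀ c < 4, ∀ d < 4, ∀ e < 4, ∀ f < 4, isT a b c d e f = true →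
    ∃ i j k : Fin 6, ∀ l : Fin 6, ![a,b,c,d,e,f] l =
      (if l = i then 1 else 0) + (if l = j then 1 else 0) + (if l = k then 3 else 0) := by
  decide +kernel

lemma T_rep (a b c d e f : ℕ) (h : isT a b c d e f = true) (p q r s t u : ℤ) :
    ∃ x y z : ℤ, a*p^2+b*q^2+c*r^2+d*s^2+e*t^2+f*u^2 = x^2+y^2+3*z^2 := by
  have h' := h
  simp only [isT, Bool.and_eq_true, beq_iff_eq] at h'
  obtain ⟨h1, h2⟩ := h'
  obtain ⟨i, j, k, hl⟩ := T_aux a (by nlinarith) b (by nlinarith) c (by nlinarith)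
    d (by nlinarith) e (by nlinarith) f (by nlinarith) h
  let v : Fin 6 → ℤ := ![p,q,r,s,t,u]
  refine ⟨v i, v j, v k, ?_⟩
  have e1 : a*p^2+b*q^2+c*r^2+d*s^2+e*t^2+f*u^2 =
      ∑ l : Fin 6, ((![a,b,c,d,e,f] l : ℕ) : ℤ) * v l ^ 2 := by
    simp [Fin.sum_univ_succ, v]; ring
  rw [e1]
  simp only [hl]
  push_cast
  simp [add_mul, Finset.sum_add_distrib]

lemma sel_term (a b c d e f : ℤ) (ha : 0 ≤ a) (hb : 0 ≤ b) (hc : 0 ≤ c) (hd : 0 ≤ d)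
    (he : 0 ≤ e) (hf : 0 ≤ f) (h : selD a b c d e f = 3)
    (hP : ∀ x y z w, selS a b c d e f x y z w % 9 ≠ 6) (x y z w : ℤ) :
    ∃ p q r : ℤ, selS a b c d e f x y z w = p^2+q^2+3*r^2 := by
  have la := sel_bound a b c d e f ha hb hc hd he hf h
  have lb := sel_bound b a c d f e hb ha hc hd hf he (by rw [← h]; unfold selD; ring)
  have lc := sel_bound c a b e f d hc ha hb he hf hd (by rw [← h]; unfold selD; ring)
  have ld := sel_bound d a e b f c hd ha he hb hf hc (by rw [← h]; unfold selD; ring)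
  have le := sel_bound e a d c f b he ha hd hc hf hb (by rw [← h]; unfold selD; ring)
  have lf := sel_bound f b d c e a hf hb hd hc he ha (by rw [← h]; unfold selD; ring)
  lift a to ℕ using ha
  lift b to ℕ using hb
  lift c to ℕ using hc
  lift d to ℕ using hd
  lift e to ℕ using he
  lift f to ℕ using hf
  have hc := chk_all a (by omega) b (by omega) c (by omega) d (by omega) e (by omega) f (by omega)
  have hD : natD a b c d e f = 3 := by
    zify
    rw [← h]; unfold selD natD; push_cast; ring
  rw [chk, if_pos hD, Bool.or_eq_true] at hc
  rcases hc with hc | hc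
  · exact T_rep a b c d e f hc _ _ _ _ _ _
  · exfalso
    simp only [List.any_eq_true, beq_iff_eq] at hc
    obtain ⟨X, -, Y, -, Z, -, hS⟩ := hc
    have hg : ∀ m n : ℕ, (((m - n + (n - m))^2 : ℕ) : ℤ) = ((m:ℤ) - n)^2 := by
      intro m n
      rcases le_total m n with hh | hh
      · rw [Nat.sub_eq_zero_of_le hh]; push_cast [Nat.cast_sub hh]; ring
      · rw [Nat.sub_eq_zero_of_le hh]; push_cast [Nat.cast_sub hh]; ring
    apply hP X Y Z 0
    have : selS a b c d e f X Y Z 0 = ((natS a b c d e f X Y Z : ℕ) : ℤ) := by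
      unfold selS natS
      simp only [Nat.cast_add, Nat.cast_mul, hg, Nat.cast_zero]
    rw [this]
    exact_mod_cast hS

lemma sel_red (n : ℕ) : ∀ (a b c d e f : ℤ), a+b+c+d+e+f ≤ n → selD a b c d e f = 3 →
    (∀ x y z w, 0 ≤ selS a b c d e f x y z w) →
    (∀ x y z w, selS a b c d e f x y z w % 9 ≠ 6) → ∀ (x y z w : ℤ),
    ∃ p q r : ℤ, selS a b c d e f x y z w = p^2+q^2+3*r^2 := by
  induction n with
  | zero =>
    intro a b c d e f hs hD hp hP x y z w
    exfalso
    have h0 := hp 1 0 0 0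
    have h1 := hp 0 1 0 0
    have h2 := hp 0 0 1 0
    have h3 := hp 0 0 0 1
    have h4 := hp 1 1 0 0
    have h5 := hp 1 0 1 0
    have h6 := hp 1 0 0 1
    simp only [selS] at h0 h1 h2 h3 h4 h5 h6
    norm_num at h0 h1 h2 h3 h4 h5 h6 hs
    have : a + b + c = 0 := by omega
    have : a + d + e = 0 := by omega
    have : b + d + f = 0 := by omega
    have : c + e + f = 0 := by omega
    have : a = 0 := by omega
    have : b = 0 := by omega
    have : c = 0 := by omega
    have : d = 0 := by omega
    have : e = 0 := by omega
    have : f = 0 := by omega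
    subst a b c d e f
    simp [selD] at hD
  | succ n ih =>
    have key : ∀ (a b c d e f : ℤ), a+b+c+d+e+f ≤ (n+1 : ℕ) → selD a b c d e f = 3 →
        (∀ x y z w, 0 ≤ selS a b c d e f x y z w) →
        (∀ x y z w, selS a b c d e f x y z w % 9 ≠ 6) → a < 0 → ∀ (x y z w : ℤ),
        ∃ p q r : ℤ, selS a b c d e f x y z w = p^2+q^2+3*r^2 := by
      intro a b c d e f hs hD hp hP ha x y z w
      have inv : ∀ x y z w, selS a b c d e f x y z w =
          selS (-a) (a+c) (a+b) (d+a) (e+a) (f-a) (-x+z+w) y z w := by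
        intro x y z w; unfold selS; ring
      have inv' : ∀ x y z w, selS (-a) (a+c) (a+b) (d+a) (e+a) (f-a) x y z w =
          selS a b c d e f (-x+z+w) y z w := by
        intro x y z w; unfold selS; ring
      rw [inv]
      refine ih _ _ _ _ _ _ ?_ ?_ ?_ ?_ _ _ _ _
      · push_cast at hs; omega
      · rw [← hD]; unfold selD; ring
      · intro x y z w; rw [inv']; exact hp _ _ _ _
      · intro x y z w; rw [inv']; exact hP _ _ _ _
    intro a b c d e f hs hD hp hP x y z w
    by_cases ha : a < 0
    · exact key a b c d e f hs hD hp hP ha x y z w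
    by_cases hb : b < 0
    · have inv : ∀ x y z w, selS a b c d e f x y z w = selS b a c d f e x z y w := by
        intro x y z w; unfold selS; ring
      rw [inv]
      exact key b a c d f e (by omega) (by rw [← hD]; unfold selD; ring)
        (fun x y z w => by rw [← inv]; exact hp _ _ _ _)
        (fun x y z w => by rw [← inv]; exact hP _ _ _ _) hb _ _ _ _
    by_cases hc : c < 0
    · have inv : ∀ x y z w, selS a b c d e f x y z w = selS c a b e f d x w y z := by
        intro x y z w; unfold selS; ring
      rw [inv]
      exact key c a b e f d (by omega) (by rw [← hD]; unfold selD; ring)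
        (fun x y z w => by rw [← inv]; exact hp _ _ _ _)
        (fun x y z w => by rw [← inv]; exact hP _ _ _ _) hc _ _ _ _
    by_cases hd : d < 0
    · have inv : ∀ x y z w, selS a b c d e f x y z w = selS d a e b f c y z x w := by
        intro x y z w; unfold selS; ring
      rw [inv]
      exact key d a e b f c (by omega) (by rw [← hD]; unfold selD; ring)
        (fun x y z w => by rw [← inv]; exact hp _ _ _ _)
        (fun x y z w => by rw [← inv]; exact hP _ _ _ _) hd _ _ _ _
    by_cases he : e < 0
    · have inv : ∀ x y z w, selS a b c d e f x y z w = selS e a d c f b y w x z := by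
        intro x y z w; unfold selS; ring
      rw [inv]
      exact key e a d c f b (by omega) (by rw [← hD]; unfold selD; ring)
        (fun x y z w => by rw [← inv]; exact hp _ _ _ _)
        (fun x y z w => by rw [← inv]; exact hP _ _ _ _) he _ _ _ _
    by_cases hf : f < 0
    · have inv : ∀ x y z w, selS a b c d e f x y z w = selS f b d c e a z w x y := by
        intro x y z w; unfold selS; ring
      rw [inv]
      exact key f b d c e a (by omega) (by rw [← hD]; unfold selD; ring)
        (fun x y z w => by rw [← inv]; exact hp _ _ _ _)
        (fun x y z w => by rw [← inv]; exact hP _ _ _ _) hf _ _ _ _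
    exact sel_term a b c d e f (by omega) (by omega) (by omega) (by omega) (by omega) (by omega)
      hD hP x y z w

/-- binary data produce a representation -/
lemma rep_of_data (m a g c b : ℤ) (hm : m % 3 = 1) (hc : 0 < c) (hb : 0 < b)
    (h1 : a * c - g^2 = b) (h2 : m * b - 3 * c = 1) :
    ∃ u x v : ℤ, m = u^2 + 3*x^2 + 3*v^2 := by
  have val : ∀ x y z w, selS (-g) (-3) (a+g+3) 0 (c+g) (3*m+3) x y z w =
      a*(x-w)^2 + 2*g*((x-w)*(y-w)) + c*(y-w)^2 + 6*((x-w)*(z-w)) + 3*m*(z-w)^2 := by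
    intro x y z w; unfold selS; ring
  have hm0 : 0 < m := by nlinarith
  have pos : ∀ X Y Z : ℤ, 0 ≤ a*X^2 + 2*g*(X*Y) + c*Y^2 + 6*(X*Z) + 3*m*Z^2 := by
    intro X Y Z
    have e : c * b * (a*X^2 + 2*g*(X*Y) + c*Y^2 + 6*(X*Z) + 3*m*Z^2) =
      b*(c*Y+g*X)^2 + (b*X+3*c*Z)^2 + 3*c*Z^2 := by
      rw [← h1] at h2 ⊢
      linear_combination (3 * c * Z^2) * h2
    have : 0 ≤ c * b * (a*X^2 + 2*g*(X*Y) + c*Y^2 + 6*(X*Z) + 3*m*Z^2) := by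
      rw [e]; positivity
    by_contra hneg
    push Not at hneg
    have := mul_neg_of_pos_of_neg (mul_pos hc hb) hneg
    omega
  have hb3 : b % 3 = 1 := by
    have : (m * b) % 3 = 1 := by omega
    rw [Int.mul_emod, hm] at this
    omega
  have P : ∀ X Y Z : ℤ, (a*X^2 + 2*g*(X*Y) + c*Y^2 + 6*(X*Z) + 3*m*Z^2) % 9 ≠ 6 := by
    intro X Y Z h6
    have hq : (a*X^2 + 2*g*(X*Y) + c*Y^2) % 3 = 0 := by
      have : a*X^2 + 2*g*(X*Y) + c*Y^2 + 3*(2*(X*Z)+m*Z^2) =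
        a*X^2 + 2*g*(X*Y) + c*Y^2 + 6*(X*Z) + 3*m*Z^2 := by ring
      omega
    have hd : (a*c-g^2) % 3 = 1 := by rw [h1]; exact hb3
    have hXY : (3:ℤ) ∣ X ∧ (3:ℤ) ∣ Y := by
      have key : ∀ a g c X Y : ZMod 3, a*c-g^2 = 1 → a*X^2 + 2*g*(X*Y) + c*Y^2 = 0 →
        X = 0 ∧ Y = 0 := by decide
      have k := key a g c X Y ?_ ?_
      · exact ⟨(ZMod.intCast_zmod_eq_zero_iff_dvd X 3).mp k.1, (ZMod.intCast_zmod_eq_zero_iff_dvd Y 3).mp k.2⟩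
      · have := (ZMod.intCast_eq_intCast_iff (a*c-g^2) 1 3).mpr hd
        push_cast at this; exact this
      · have := (ZMod.intCast_eq_intCast_iff (a*X^2 + 2*g*(X*Y) + c*Y^2) 0 3).mpr hq
        push_cast at this; exact this
    obtain ⟨⟨X', rfl⟩, ⟨Y', rfl⟩⟩ := hXY
    obtain ⟨k, hk⟩ : ∃ k, m = 3*k+1 := ⟨m/3, by omega⟩
    have e : a*(3*X')^2 + 2*g*((3*X')*(3*Y')) + c*(3*Y')^2 + 6*((3*X')*Z) + 3*m*Z^2 =
      9*(a*X'^2+2*g*(X'*Y')+c*Y'^2+2*X'*Z+k*Z^2) + 3*(Z^2) := by rw [hk]; ring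
    rw [e] at h6
    have hz : Z^2 % 3 = 0 ∨ Z^2 % 3 = 1 := by
      have : Z % 3 = 0 ∨ Z % 3 = 1 ∨ Z % 3 = 2 := by omega
      rcases this with h | h | h <;> simp [pow_two, Int.mul_emod, h]
    omega
  obtain ⟨p, q, r, h⟩ := sel_red ((-g) + (-3) + (a+g+3) + 0 + (c+g) + (3*m+3)).toNat
    (-g) (-3) (a+g+3) 0 (c+g) (3*m+3) (Int.self_le_toNat _)
    (by unfold selD; rw [← h1] at h2; linear_combination 3 * h2)
    (fun x y z w => by rw [val]; exact pos _ _ _)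
    (fun x y z w => by rw [val]; exact P _ _ _) 0 0 1 0
  rw [val] at h
  have hpq : (3:ℤ) ∣ p ∧ (3:ℤ) ∣ q := by
    have key : ∀ p q : ZMod 3, p^2 + q^2 = 0 → p = 0 ∧ q = 0 := by decide
    have k := key p q ?_
    · exact ⟨(ZMod.intCast_zmod_eq_zero_iff_dvd p 3).mp k.1, (ZMod.intCast_zmod_eq_zero_iff_dvd q 3).mp k.2⟩
    · have : (p^2+q^2) % 3 = 0 := by omega
      have := (ZMod.intCast_eq_intCast_iff (p^2+q^2) 0 3).mpr this
      push_cast at this; exact this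
  obtain ⟨⟨p', rfl⟩, ⟨q', rfl⟩⟩ := hpq
  exact ⟨r, p', q', by linarith⟩

open NumberTheorySymbols

lemma cop_aux (a m k r s : ℕ) (h : k * a + 1 = r * m) (ha : a % 2 = 1) : a.Coprime (2^s * m) := by
  apply Nat.Coprime.mul_right
  · apply Nat.Coprime.pow_right
    rw [Nat.coprime_two_right]
    exact Nat.odd_iff.mpr ha
  · rw [← Nat.isCoprime_iff_coprime]
    refine ⟨-k, r, ?_⟩
    have : (k:ℤ) * a + 1 = r * m := by exact_mod_cast h
    linarith

lemma jac_rel (t : ℤ) (p b m : ℕ) (h : t * p = 1 - m * b) : J(t | b) * J(p | b) = 1 := by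
  rw [← jacobiSym.mul_left, h, jacobiSym.mod_left' (a₂ := 1), jacobiSym.one_left]
  simp [Int.sub_emod]

lemma sq_of_jac (b : ℤ) (p : ℕ) (hp : p.Prime) (h : J(-b | p) = 1) :
    ∃ g : ℤ, (p:ℤ) ∣ g^2 + b := by
  have : Fact p.Prime := ⟨hp⟩
  obtain ⟨y, hy⟩ := ZMod.isSquare_of_jacobiSym_eq_one h
  refine ⟨(y.val : ℤ), ?_⟩
  rw [← ZMod.intCast_zmod_eq_zero_iff_dvd]
  push_cast at hy ⊢
  rw [ZMod.natCast_zmod_val]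
  linear_combination -hy

lemma rep_all (m : ℕ) (hm : m % 3 = 1) :
    ∃ u x v : ℤ, (m:ℤ) = u^2 + 3*x^2 + 3*v^2 := by
  induction m using Nat.strong_induction_on with
  | _ m ih =>
  have hm0 : m ≠ 0 := by omega
  have h4 : m % 4 = 0 ∨ m % 4 = 1 ∨ m % 4 = 2 ∨ m % 4 = 3 := by omega
  rcases h4 with h4 | h4 | h4 | h4
  · obtain ⟨k, rfl⟩ : ∃ k, m = 4 * k := ⟨m/4, by omega⟩
    obtain ⟨u, x, v, h⟩ := ih k (by omega) (by omega)
    refine ⟨2*u, 2*x, 2*v, ?_⟩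
    push_cast; rw [h]; ring
  · obtain ⟨a, ha⟩ : ∃ a, 6 * a + 1 = 7 * m := ⟨(7*m-1)/6, by omega⟩
    obtain ⟨p, hpa, hp, hmod⟩ := Nat.forall_exists_prime_gt_and_modEq (a+2) (q := 2^2*m) (a := a)
      (by positivity) (cop_aux a m 6 7 2 ha (by omega))
    obtain ⟨j, hj⟩ := (Nat.modEq_iff_dvd' (by omega)).mp hmod.symm
    have hpj : p = a + 4*m*j := (show p = a + 2^2*m*j by omega).trans (by ring)
    have hb : 6 * p + 1 = m * (24*j+7) := by rw [hpj]; linarith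
    obtain ⟨b, hbd⟩ : ∃ b, b = 24*j+7 := ⟨_, rfl⟩
    rw [← hbd] at hb
    have hbZ : (6:ℤ) * p + 1 = m * b := by exact_mod_cast hb
    have hrel := jac_rel (-6) p b m (by linarith)
    have h6 : J(-6 | b) = 1 := by
      rw [jacobiSym.mod_right _ (Nat.odd_iff.mpr (by omega))]
      have : b % (4 * (-6:ℤ).natAbs) = 7 := by norm_num; omega
      rw [this]; norm_num
    rw [h6, one_mul] at hrel
    have hpo : p % 2 = 1 := by
      rcases hp.eq_two_or_odd with h | h
      · omega
      · exact h
    have hJ : J(-(b:ℤ) | p) = 1 := by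
      rw [jacobiSym.neg _ (Nat.odd_iff.mpr hpo)]
      have : p % 4 = 1 ∨ p % 4 = 3 := by omega
      rcases this with h | h
      · rw [ZMod.χ₄_nat_one_mod_four h, one_mul,
          jacobiSym.quadratic_reciprocity_one_mod_four' (Nat.odd_iff.mpr (by omega)) h, hrel]
      · rw [ZMod.χ₄_nat_three_mod_four h,
          jacobiSym.quadratic_reciprocity_three_mod_four (by omega) h, hrel]; norm_num
    obtain ⟨g, hg⟩ := sq_of_jac b p hp hJ
    obtain ⟨g', hg'⟩ : ∃ g' : ℤ, (2*(p:ℤ)) ∣ g'^2 + b := by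
      have hcop : IsCoprime (2:ℤ) p := by
        have := (Nat.coprime_two_left (n := p)).mpr (Nat.odd_iff.mpr hpo)
        exact_mod_cast Nat.isCoprime_iff_coprime.mpr this
      rcases Int.even_or_odd g with h | h
      · refine ⟨g + p, hcop.mul_dvd ?_ ?_⟩
        · have h1 : Odd (g + p) := h.add_odd (by exact_mod_cast Nat.odd_iff.mpr hpo)
          have h2 : Odd (b:ℤ) := by exact_mod_cast Nat.odd_iff.mpr (by omega : b % 2 = 1)
          exact even_iff_two_dvd.mp (h1.pow.add_odd h2)
        · have : (g+p)^2 + (b:ℤ) = (g^2+b) + p*(2*g+p) := by ring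
          rw [this]; exact dvd_add hg (dvd_mul_right _ _)
      · refine ⟨g, hcop.mul_dvd ?_ hg⟩
        have h2 : Odd (b:ℤ) := by exact_mod_cast Nat.odd_iff.mpr (by omega : b % 2 = 1)
        exact even_iff_two_dvd.mp (h.pow.add_odd h2)
    obtain ⟨A, hA⟩ := hg'
    have := hp.pos
    exact rep_of_data m A g' (2*p) b (by omega) (by omega) (by omega) (by linarith) (by linarith)
  · obtain ⟨a, ha⟩ : ∃ a, 3 * a + 1 = 7 * m := ⟨(7*m-1)/3, by omega⟩
    obtain ⟨p, hpa, hp, hmod⟩ := Nat.forall_exists_prime_gt_and_modEq (a+2) (q := 2^2*m) (a := a)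
      (by positivity) (cop_aux a m 3 7 2 ha (by omega))
    obtain ⟨j, hj⟩ := (Nat.modEq_iff_dvd' (by omega)).mp hmod.symm
    have hpj : p = a + 4*(m*j) := (show p = a + 2^2*m*j by omega).trans (by ring)
    have hb : 3 * p + 1 = m * (12*j+7) := by rw [hpj]; linarith
    obtain ⟨b, hbd⟩ : ∃ b, b = 12*j+7 := ⟨_, rfl⟩
    rw [← hbd] at hb
    have hbZ : (3:ℤ) * p + 1 = m * b := by exact_mod_cast hb
    have hrel := jac_rel (-3) p b m (by linarith)
    have h6 : J(-3 | b) = 1 := by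
      rw [jacobiSym.mod_right _ (Nat.odd_iff.mpr (by omega))]
      have : b % (4 * (-3:ℤ).natAbs) = 7 := by norm_num; omega
      rw [this]; norm_num
    rw [h6, one_mul] at hrel
    have h : p % 4 = 3 := by omega
    have hJ : J(-(b:ℤ) | p) = 1 := by
      rw [jacobiSym.neg _ (Nat.odd_iff.mpr (by omega))]
      rw [ZMod.χ₄_nat_three_mod_four h,
          jacobiSym.quadratic_reciprocity_three_mod_four (by omega) h, hrel]; norm_num
    obtain ⟨g, A, hA⟩ := sq_of_jac b p hp hJ
    have := hp.pos
    exact rep_of_data m A g p b (by omega) (by omega) (by omega) (by linarith) (by linarith)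
  · obtain ⟨a, ha⟩ : ∃ a, 3 * a + 1 = 22 * m := ⟨(22*m-1)/3, by omega⟩
    obtain ⟨p, hpa, hp, hmod⟩ := Nat.forall_exists_prime_gt_and_modEq (a+2) (q := 2^3*m) (a := a)
      (by positivity) (cop_aux a m 3 22 3 ha (by omega))
    obtain ⟨j, hj⟩ := (Nat.modEq_iff_dvd' (by omega)).mp hmod.symm
    have hpj : p = a + 8*(m*j) := (show p = a + 2^3*m*j by omega).trans (by ring)
    have hb : 3 * p + 1 = 2 * m * (12*j+11) := by rw [hpj]; linarith
    obtain ⟨b, hbd⟩ : ∃ b, b = 12*j+11 := ⟨_, rfl⟩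
    rw [← hbd] at hb
    have hbZ : (3:ℤ) * p + 1 = 2 * m * b := by exact_mod_cast hb
    have hrel := jac_rel (-3) p b (2*m) (by push_cast; linarith)
    have h6 : J(-3 | b) = -1 := by
      rw [jacobiSym.mod_right _ (Nat.odd_iff.mpr (by omega))]
      have : b % (4 * (-3:ℤ).natAbs) = 11 := by norm_num; omega
      rw [this]; norm_num
    rw [h6] at hrel
    have h : p % 8 = 3 := by omega
    have h2 : J(-2 | p) = 1 := by
      rw [jacobiSym.mod_right _ (Nat.odd_iff.mpr (by omega))]
      have : p % (4 * (-2:ℤ).natAbs) = 3 := by norm_num; omega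
      rw [this]; norm_num
    have hJ : J(-(2*b:ℤ) | p) = 1 := by
      rw [show -(2*b:ℤ) = (-2) * b by ring, jacobiSym.mul_left, h2, one_mul,
          jacobiSym.quadratic_reciprocity_three_mod_four (by omega) (by omega)]
      linarith
    obtain ⟨g, A, hA⟩ := sq_of_jac (2*b) p hp hJ
    have := hp.pos
    exact rep_of_data m A g p (2*b) (by omega) (by omega) (by omega) (by linarith) (by linarith)

def Good (m : ℤ) : Prop := ∃ u x v : ℤ, m = u^2 + 3*x^2 + 3*v^2 ∧ ¬ (3:ℤ) ∣ v

lemma r7a (u x v : ℤ) (hx : 3 ∣ x) (hu : ¬ (3:ℤ) ∣ u) (hv : 3 ∣ v) (h : (7:ℤ) ∣ u+3*x+3*v) :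
    Good (u^2 + 3*x^2 + 3*v^2) := by
  obtain ⟨j, hj⟩ := h
  refine ⟨u-2*j, x-2*j, v-2*j, ?_, by omega⟩
  linear_combination (4*j) * hj

lemma r7b (u x v : ℤ) (hu : ¬ (3:ℤ) ∣ u) (hv : 3 ∣ v) (h : (7:ℤ) ∣ 2*u+3*v) :
    Good (u^2 + 3*x^2 + 3*v^2) := by
  obtain ⟨j, hj⟩ := h
  refine ⟨u-4*j, x, v-2*j, ?_, by omega⟩
  linear_combination (4*j) * hj

lemma r11a (u x v : ℤ) (hx : 3 ∣ x) (hu : ¬ (3:ℤ) ∣ u) (hv : 3 ∣ v) (h : (11:ℤ) ∣ 4*u+3*x+3*v) :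
    Good (u^2 + 3*x^2 + 3*v^2) := by
  obtain ⟨j, hj⟩ := h
  refine ⟨u-4*j, x-j, v-j, ?_, by omega⟩
  linear_combination (2*j) * hj

lemma r11b (u x v : ℤ) (hx : 3 ∣ x) (hu : ¬ (3:ℤ) ∣ u) (hv : 3 ∣ v) (h : (11:ℤ) ∣ 2*u+v+3*x) :
    Good (u^2 + 3*x^2 + 3*v^2) := by
  obtain ⟨j, hj⟩ := h
  refine ⟨u-6*j, x-3*j, v-j, ?_, by omega⟩
  linear_combination (6*j) * hj

lemma dec7 : ∀ u x v : ZMod 7, (u^2+3*x^2+3*v^2 = 0 ∨ u^2+3*x^2+3*v^2 = 3 ∨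
    u^2+3*x^2+3*v^2 = 5 ∨ u^2+3*x^2+3*v^2 = 6) →
    ∃ s ∈ [(1:ZMod 7), -1], ∃ t ∈ [(1:ZMod 7), -1], u+3*(s*x)+3*(t*v) = 0 ∨ 2*u+3*(t*v)=0 ∨ 2*u+3*(s*x)=0 := by
  decide +kernel

lemma dec11 : ∀ u x v : ZMod 11, (u^2+3*x^2+3*v^2 = 0 ∨ u^2+3*x^2+3*v^2 = 2 ∨
    u^2+3*x^2+3*v^2 = 6 ∨ u^2+3*x^2+3*v^2 = 7 ∨ u^2+3*x^2+3*v^2 = 8 ∨ u^2+3*x^2+3*v^2 = 10) →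
    ∃ s ∈ [(1:ZMod 11), -1], ∃ t ∈ [(1:ZMod 11), -1], 4*u+3*(s*x)+3*(t*v) = 0 ∨
      2*u+t*v+3*(s*x)=0 ∨ 2*u+s*x+3*(t*v)=0 := by
  decide +kernel

lemma good_swap {u x v : ℤ} (h : Good (u^2 + 3*x^2 + 3*v^2)) : Good (u^2 + 3*v^2 + 3*x^2) := by
  rwa [show u^2 + 3*v^2 + 3*x^2 = u^2 + 3*x^2 + 3*v^2 by ring]

lemma good7 (m : ℕ) (hm : m % 3 = 1) (h : m % 7 = 0 ∨ m % 7 = 3 ∨ m % 7 = 5 ∨ m % 7 = 6) :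
    Good m := by
  obtain ⟨u, x, v, e⟩ := rep_all m hm
  by_cases hv : (3:ℤ) ∣ v
  swap
  · exact ⟨u, x, v, e, hv⟩
  by_cases hx : (3:ℤ) ∣ x
  swap
  · exact ⟨u, v, x, by rw [e]; ring, hx⟩
  have hu : ¬ (3:ℤ) ∣ u := by
    rintro ⟨k, rfl⟩
    have : (m:ℤ) = 3 * (3*k^2+x^2+v^2) := by rw [e]; ring
    omega
  have hz : ((m:ℕ) : ZMod 7) = (u:ZMod 7)^2+3*(x:ZMod 7)^2+3*(v:ZMod 7)^2 := by
    have := congrArg (Int.cast : ℤ → ZMod 7) e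
    push_cast at this; exact this
  have hmm : ((m:ℕ) : ZMod 7) = ((m % 7 : ℕ) : ZMod 7) := by simp
  obtain ⟨s, hs, t, ht, H⟩ := dec7 u x v (by
    rw [← hz, hmm]
    rcases h with h | h | h | h <;> rw [h] <;> decide)
  obtain ⟨s', hs', hs1⟩ : ∃ s' : ℤ, (s' = 1 ∨ s' = -1) ∧ (s' : ZMod 7) = s := by
    simp at hs
    rcases hs with rfl | rfl
    · exact ⟨1, by simp, by simp⟩
    · exact ⟨-1, by simp, by simp⟩
  obtain ⟨t', ht', ht1⟩ : ∃ s' : ℤ, (s' = 1 ∨ s' = -1) ∧ (s' : ZMod 7) = t := by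
    simp at ht
    rcases ht with rfl | rfl
    · exact ⟨1, by simp, by simp⟩
    · exact ⟨-1, by simp, by simp⟩
  have e2 : (m:ℤ) = u^2 + 3*(s'*x)^2 + 3*(t'*v)^2 := by
    rw [e]; rcases hs' with rfl | rfl <;> rcases ht' with rfl | rfl <;> ring
  rw [e2]
  subst hs1 ht1
  have hx' := hx.mul_left s'
  have hv' := hv.mul_left t'
  rcases H with H | H | H
  · exact r7a _ _ _ hx' hu hv' ((ZMod.intCast_zmod_eq_zero_iff_dvd _ 7).mp (by push_cast; exact H))
  · exact r7b _ _ _ hu hv' ((ZMod.intCast_zmod_eq_zero_iff_dvd _ 7).mp (by push_cast; exact H))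
  · exact good_swap (r7b _ _ _ hu hx' ((ZMod.intCast_zmod_eq_zero_iff_dvd _ 7).mp (by push_cast; exact H)))

lemma good11 (m : ℕ) (hm : m % 3 = 1) (h : m % 11 = 0 ∨ m % 11 = 2 ∨ m % 11 = 6 ∨ m % 11 = 7 ∨
    m % 11 = 8 ∨ m % 11 = 10) : Good m := by
  obtain ⟨u, x, v, e⟩ := rep_all m hm
  by_cases hv : (3:ℤ) ∣ v
  swap
  · exact ⟨u, x, v, e, hv⟩
  by_cases hx : (3:ℤ) ∣ x
  swap
  · exact ⟨u, v, x, by rw [e]; ring, hx⟩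
  have hu : ¬ (3:ℤ) ∣ u := by
    rintro ⟨k, rfl⟩
    have : (m:ℤ) = 3 * (3*k^2+x^2+v^2) := by rw [e]; ring
    omega
  have hz : ((m:ℕ) : ZMod 11) = (u:ZMod 11)^2+3*(x:ZMod 11)^2+3*(v:ZMod 11)^2 := by
    have := congrArg (Int.cast : ℤ → ZMod 11) e
    push_cast at this; exact this
  have hmm : ((m:ℕ) : ZMod 11) = ((m % 11 : ℕ) : ZMod 11) := by simp
  obtain ⟨s, hs, t, ht, H⟩ := dec11 u x v (by
    rw [← hz, hmm]
    rcases h with h | h | h | h | h | h <;> rw [h] <;> decide)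
  obtain ⟨s', hs', hs1⟩ : ∃ s' : ℤ, (s' = 1 ∨ s' = -1) ∧ (s' : ZMod 11) = s := by
    simp at hs
    rcases hs with rfl | rfl
    · exact ⟨1, by simp, by simp⟩
    · exact ⟨-1, by simp, by simp⟩
  obtain ⟨t', ht', ht1⟩ : ∃ s' : ℤ, (s' = 1 ∨ s' = -1) ∧ (s' : ZMod 11) = t := by
    simp at ht
    rcases ht with rfl | rfl
    · exact ⟨1, by simp, by simp⟩
    · exact ⟨-1, by simp, by simp⟩
  have e2 : (m:ℤ) = u^2 + 3*(s'*x)^2 + 3*(t'*v)^2 := by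
    rw [e]; rcases hs' with rfl | rfl <;> rcases ht' with rfl | rfl <;> ring
  rw [e2]
  subst hs1 ht1
  have hx' := hx.mul_left s'
  have hv' := hv.mul_left t'
  rcases H with H | H | H
  · exact r11a _ _ _ hx' hu hv' ((ZMod.intCast_zmod_eq_zero_iff_dvd _ 11).mp (by push_cast; exact H))
  · exact r11b _ _ _ hx' hu hv' ((ZMod.intCast_zmod_eq_zero_iff_dvd _ 11).mp (by push_cast; exact H))
  · exact good_swap (r11b _ _ _ hv' hu hx' ((ZMod.intCast_zmod_eq_zero_iff_dvd _ 11).mp (by push_cast; exact H)))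

def Tern (N : ℤ) : Prop := ∃ x z t : ℤ, x^2 + (3*z^2-2*z) + 3*(3*t^2-2*t) = N

lemma tern_of_good (N : ℤ) (h : Good (3*N+4)) : Tern N := by
  obtain ⟨u, x, v, e, hv⟩ := h
  have hu : ¬ (3:ℤ) ∣ u := by
    rintro ⟨k, rfl⟩
    have : 3*N+4 = 3 * (3*k^2+x^2+v^2) := by rw [e]; ring
    omega
  obtain ⟨z, hz⟩ : ∃ z : ℤ, u^2 = (3*z-1)^2 := by
    have : u % 3 = 1 ∨ u % 3 = 2 := by omega
    rcases this with h | h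
    · exact ⟨-(u/3), by rw [show u = 3*(u/3)+1 by omega, show (3*(u/3)+1)/3 = u/3 by omega]; ring⟩
    · exact ⟨u/3+1, by congr 1; omega⟩
  obtain ⟨t, ht⟩ : ∃ z : ℤ, v^2 = (3*z-1)^2 := by
    have : v % 3 = 1 ∨ v % 3 = 2 := by omega
    rcases this with h | h
    · exact ⟨-(v/3), by rw [show v = 3*(v/3)+1 by omega, show (3*(v/3)+1)/3 = v/3 by omega]; ring⟩
    · exact ⟨v/3+1, by congr 1; omega⟩
  rw [hz, ht] at e
  exact ⟨x, z, t, by linarith⟩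

lemma tern7 (N : ℤ) (hN : 0 ≤ N) (h : N % 7 = 1 ∨ N % 7 = 2 ∨ N % 7 = 3 ∨ N % 7 = 5) :
    Tern N := by
  apply tern_of_good
  lift N to ℕ using hN
  exact_mod_cast good7 (3*N+4) (by omega) (by omega)

lemma tern11 (N : ℤ) (hN : 0 ≤ N) (h : N % 11 = 1 ∨ N % 11 = 2 ∨ N % 11 = 3 ∨ N % 11 = 5 ∨
    N % 11 = 6 ∨ N % 11 = 8) : Tern N := by
  apply tern_of_good
  lift N to ℕ using hN
  exact_mod_cast good11 (3*N+4) (by omega) (by omega)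

def p8l : List ℤ := [0, 1, -1, 2, -2, 3, -3, 4, -4, 5, -5, 6, -6, 7, -7, 8, -8, 9, -9, 10, -10,
  11, -11, 12, -12, 13, -13, 14, -14]

def smallChk (N : ℕ) : Bool :=
  N == 18 || (p8l.any fun t => p8l.any fun z => (List.range 25).any fun x =>
    (x:ℤ)^2 + (3*z^2-2*z) + 3*(3*t^2-2*t) == (N:ℤ))

lemma smallChk_all : ∀ N < 600, smallChk N = true := by
  decide +kernel

lemma tern_small (N : ℤ) (h0 : 0 ≤ N) (h : N < 600) (h18 : N ≠ 18) : Tern N := by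
  lift N to ℕ using h0
  have := smallChk_all N (by omega)
  simp only [smallChk, Bool.or_eq_true, beq_iff_eq, List.any_eq_true] at this
  rcases this with h | ⟨t, -, z, -, x, -, h⟩
  · omega
  · exact ⟨x, z, t, h⟩

lemma tern_shift (α N : ℤ) (h1 : 3 ≤ α) (h2 : α ≤ 18) (h0 : 0 ≤ N) : (∃ y : ℤ, Tern (N - α * y^2)) ∧
    ∃ y : ℤ, Tern (N - α * (3*y^2-2*y)) := by
  by_cases hs : N < 600
  · by_cases h18 : N = 18
    · subst h18
      exact ⟨⟨1, tern_small _ (by omega) (by omega) (by omega)⟩,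
        ⟨1, tern_small _ (by omega) (by omega) (by omega)⟩⟩
    · exact ⟨⟨0, by simpa using tern_small N h0 hs h18⟩, ⟨0, by simpa using tern_small N h0 hs h18⟩⟩
  have hN : N % 7 = 0 ∨ N % 7 = 1 ∨ N % 7 = 2 ∨ N % 7 = 3 ∨ N % 7 = 4 ∨ N % 7 = 5 ∨ N % 7 = 6 := by
    omega
  have hM : N % 11 = 0 ∨ N % 11 = 1 ∨ N % 11 = 2 ∨ N % 11 = 3 ∨ N % 11 = 4 ∨ N % 11 = 5 ∨
      N % 11 = 6 ∨ N % 11 = 7 ∨ N % 11 = 8 ∨ N % 11 = 9 ∨ N % 11 = 10 := by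
    omega
  by_cases h7 : α = 7 ∨ α = 14
  · constructor
    · rcases h7 with rfl | rfl <;> rcases hM with h | h | h | h | h | h | h | h | h | h | h <;>
      first
      | exact ⟨0, tern11 _ (by omega) (by omega)⟩
      | exact ⟨1, tern11 _ (by omega) (by omega)⟩
      | exact ⟨2, tern11 _ (by omega) (by omega)⟩
      | exact ⟨3, tern11 _ (by omega) (by omega)⟩
      | exact ⟨4, tern11 _ (by omega) (by omega)⟩
      | exact ⟨5, tern11 _ (by omega) (by omega)⟩
    · rcases h7 with rfl | rfl <;> rcases hM with h | h | h | h | h | h | h | h | h | h | h <;>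
      first
      | exact ⟨0, tern11 _ (by omega) (by omega)⟩
      | exact ⟨1, tern11 _ (by omega) (by omega)⟩
      | exact ⟨-1, tern11 _ (by omega) (by omega)⟩
      | exact ⟨2, tern11 _ (by omega) (by omega)⟩
      | exact ⟨3, tern11 _ (by omega) (by omega)⟩
      | exact ⟨4, tern11 _ (by omega) (by omega)⟩
  · have ha : α % 7 = 1 ∨ α % 7 = 2 ∨ α % 7 = 3 ∨ α % 7 = 4 ∨ α % 7 = 5 ∨ α % 7 = 6 := by omega
    constructor
    · rcases ha with h' | h' | h' | h' | h' | h' <;> rcases hN with h | h | h | h | h | h | h <;>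
      first
      | exact ⟨0, tern7 _ (by omega) (by omega)⟩
      | exact ⟨1, tern7 _ (by omega) (by omega)⟩
      | exact ⟨2, tern7 _ (by omega) (by omega)⟩
      | exact ⟨3, tern7 _ (by omega) (by omega)⟩
    · rcases ha with h' | h' | h' | h' | h' | h' <;> rcases hN with h | h | h | h | h | h | h <;>
      first
      | exact ⟨0, tern7 _ (by omega) (by omega)⟩
      | exact ⟨1, tern7 _ (by omega) (by omega)⟩
      | exact ⟨-1, tern7 _ (by omega) (by omega)⟩
      | exact ⟨-2, tern7 _ (by omega) (by omega)⟩

theorem universal_case_4_15 :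
    (∀ α : ℤ, 4 ≤ α → α ≤ 18 → ∀ N : ℤ, 0 ≤ N →
      ∃ x y z t : ℤ,
        x ^ 2 + α * y ^ 2 + (3 * z ^ 2 - 2 * z) + 3 * (3 * t ^ 2 - 2 * t) = N) ∧
    (∀ β : ℤ, 3 ≤ β → β ≤ 18 → ∀ N : ℤ, 0 ≤ N →
      ∃ x y z t : ℤ,
        x ^ 2 + (3 * y ^ 2 - 2 * y) + 3 * (3 * z ^ 2 - 2 * z) +
          β * (3 * t ^ 2 - 2 * t) = N) := by
  constructor
  · intro α h1 h2 N hN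
    obtain ⟨⟨y, x, z, t, h⟩, -⟩ := tern_shift α N (by omega) h2 hN
    exact ⟨x, y, z, t, by linarith⟩
  · intro β h1 h2 N hN
    obtain ⟨-, ⟨y, x, z, t, h⟩⟩ := tern_shift β N h1 h2 hN
    exact ⟨x, z, t, y, by linarith⟩
end

section
/- For every integer α with 5 ≤ α ≤ 12 and every nonnegative integer N, the equation x² + 5y² + αz² + 2(3t² − 2t) = N has an integer solution in ℤ⁴; and for every integer β with 2 ≤ β ≤ 12 and every nonnegative integer N, the equation x² + 5y² + 2(3z² − 2z) + β(3t² − 2t) = N has an integer solution in ℤ⁴. That is, the quaternary mixed sums x²+5y²+αz²+2P₈(t) (5 ≤ α ≤ 12) and x²+5y²+2P₈(z)+βP₈(t) (2 ≤ β ≤ 12) are universal. -/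
theorem exists_round (a f : ℤ) (ha : 0 < a) : ∃ t : ℤ, 2 * |f + t * a| ≤ a := by
  have h1 := Int.emod_nonneg (2 * f + a) (by omega : (2 * a) ≠ 0)
  have h2 := Int.emod_lt_of_pos (2 * f + a) (by omega : 0 < 2 * a)
  have h3 := Int.emod_add_mul_ediv (2 * f + a) (2 * a)
  refine ⟨-((2 * f + a) / (2 * a)), ?_⟩
  set q := (2 * f + a) / (2 * a)
  set r := (2 * f + a) % (2 * a)
  have : 2 * (f + -q * a) = r - a := by linear_combination -h3
  rw [show 2 * |f + -q * a| = |2 * (f + -q * a)| by rw [abs_mul]; simp, this, abs_le]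
  constructor <;> linarith

set_option maxHeartbeats 400000 in
/-- reduction of positive ternary forms; tuple is a,b,c,d,e,f for a x²+b y²+c z²+2d yz+2e xz+2f xy -/
theorem ternary_reduce (P : ℤ → ℤ → ℤ → ℤ → ℤ → ℤ → Prop) (D : ℤ) (hD : 0 < D)
    (hpos : ∀ a b c d e f, P a b c d e f → 0 < a ∧ 0 < a * b - f ^ 2 ∧
      a * b * c + 2 * d * e * f - a * d ^ 2 - b * e ^ 2 - c * f ^ 2 = D)
    (m1 : ∀ a b c d e f, P a b c d e f → P b a c e d f)
    (m2 : ∀ a b c d e f, P a b c d e f → P a c b d f e)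
    (m3 : ∀ a b c d e f t, P a b c d e f →
      P a (b + 2 * t * f + t ^ 2 * a) c (d + t * e) e (f + t * a))
    (hex : ∃ a b c d e f, P a b c d e f) :
    ∃ a b c d e f, P a b c d e f ∧ 2 * |f| ≤ a ∧ 2 * |e| ≤ a ∧ a ≤ b ∧
      2 * |a * d - e * f| ≤ a * b - f ^ 2 ∧ a * b - f ^ 2 ≤ a * c - e ^ 2 ∧
      27 * a ^ 3 ≤ 64 * D ∧ 3 * (a * b - f ^ 2) ^ 2 ≤ 4 * a * D := by
  classical
  have m4 : ∀ a b c d e f t, P a b c d e f →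
      P a b (c + 2 * t * e + t ^ 2 * a) (d + t * f) (e + t * a) f := fun a b c d e f t h =>
    m2 _ _ _ _ _ _ (m3 _ _ _ _ _ _ t (m2 _ _ _ _ _ _ h))
  have m5 : ∀ a b c d e f t, P a b c d e f →
      P a b (c + 2 * t * d + t ^ 2 * b) (d + t * b) (e + t * f) f := fun a b c d e f t h =>
    m1 _ _ _ _ _ _ (m4 _ _ _ _ _ _ t (m1 _ _ _ _ _ _ h))
  have e1 : ∃ n : ℕ, ∃ a b c d e f, P a b c d e f ∧ a = n := by
    obtain ⟨a, b, c, d, e, f, h⟩ := hex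
    exact ⟨a.toNat, a, b, c, d, e, f, h, by have := (hpos _ _ _ _ _ _ h).1; omega⟩
  have e2 : ∃ m : ℕ, ∃ a b c d e f, P a b c d e f ∧ a = Nat.find e1 ∧ a * b - f ^ 2 = m := by
    obtain ⟨a, b, c, d, e, f, h, h'⟩ := Nat.find_spec e1
    refine ⟨(a * b - f ^ 2).toNat, a, b, c, d, e, f, h, h', ?_⟩
    have := (hpos _ _ _ _ _ _ h).2.1; omega
  obtain ⟨a, b, c, d, e, f, h, ha, hm⟩ := Nat.find_spec e2
  have mina : ∀ a' b' c' d' e' f', P a' b' c' d' e' f' → a ≤ a' := by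
    intro a' b' c' d' e' f' h'
    have hp := (hpos _ _ _ _ _ _ h').1
    have := Nat.find_min' e1 (m := a'.toNat) ⟨a', b', c', d', e', f', h', by omega⟩
    omega
  have minm : ∀ b' c' d' e' f', P a b' c' d' e' f' → a * b - f ^ 2 ≤ a * b' - f' ^ 2 := by
    intro b' c' d' e' f' h'
    have hp := (hpos _ _ _ _ _ _ h').2.1
    have := Nat.find_min' e2 (m := (a * b' - f' ^ 2).toNat) ⟨a, b', c', d', e', f', h', ha, by omega⟩
    omega
  clear hm ha
  have hp0 := hpos _ _ _ _ _ _ h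
  -- reduce h12
  obtain ⟨t, ht⟩ := exists_round (a * b - f ^ 2) (a * d - e * f) hp0.2.1
  have h1 := m5 _ _ _ _ _ _ t h
  obtain ⟨s, hs⟩ := exists_round a (e + t * f) hp0.1
  have h2 := m4 _ _ _ _ _ _ s h1
  obtain ⟨r, hr⟩ := exists_round a f hp0.1
  have h3 := m3 _ _ _ _ _ _ r h2
  clear h1 h2
  generalize hc' : (c + 2 * t * d + t ^ 2 * b + 2 * s * (e + t * f) + s ^ 2 * a) = c' at h3
  generalize hd' : d + t * b + s * f + r * (e + t * f + s * a) = d' at h3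
  generalize he' : e + t * f + s * a = e' at h3 hs hd'
  generalize hf' : f + r * a = f' at h3 hr
  generalize hb' : b + 2 * r * f + r ^ 2 * a = b' at h3
  have hh : a * b - f ^ 2 = a * b' - f' ^ 2 := by subst hb' hf'; ring
  have hh2 : a * d - e * f + t * (a * b - f ^ 2) = a * d' - e' * f' := by
    subst hd' he' hf'; ring
  rw [hh2, hh] at ht
  rw [hh] at minm
  have hp := hpos _ _ _ _ _ _ h3
  have k1 := minm _ _ _ _ _ (m2 _ _ _ _ _ _ h3)
  have k2 := mina _ _ _ _ _ _ (m1 _ _ _ _ _ _ h3)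
  refine ⟨a, b', c', d', e', f', h3, hr, hs, k2, ht, k1, ?_⟩
  obtain ⟨p1, p2, p3⟩ := hp
  have q1 : (2 * (a * d' - e' * f')) ^ 2 ≤ (a * b' - f' ^ 2) ^ 2 := by
    apply sq_le_sq'
    · have := neg_abs_le (a * d' - e' * f'); linarith
    · have := le_abs_self (a * d' - e' * f'); linarith
  have q2 : (2 * f') ^ 2 ≤ a ^ 2 := by
    apply sq_le_sq'
    · have := neg_abs_le f'; linarith
    · have := le_abs_self f'; linarith
  have q3 : (a * b' - f' ^ 2) * (a * c' - e' ^ 2) - (a * d' - e' * f') ^ 2 = a * D := by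
    rw [← p3]; ring
  have q4 : 3 * (a * b' - f' ^ 2) ^ 2 ≤ 4 * a * D := by
    have := mul_le_mul_of_nonneg_left k1 p2.le
    nlinarith only [this, q1, q3]
  have q5 : 3 * a ^ 2 ≤ 4 * (a * b' - f' ^ 2) := by
    have := mul_le_mul_of_nonneg_left k2 p1.le
    nlinarith only [this, q2]
  refine ⟨?_, q4⟩
  have q6 : (3 * a ^ 2) ^ 2 ≤ (4 * (a * b' - f' ^ 2)) ^ 2 := by
    exact pow_le_pow_left₀ (by positivity) q5 2
  have q7 : a * (27 * a ^ 3) ≤ a * (64 * D) := by linarith [show (3 * a ^ 2) ^ 2 * 3 = a * (27 * a ^ 3) by ring]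
  exact le_of_mul_le_mul_left q7 p1


def TForm (a b c d e f x y z : ℤ) : ℤ :=
  a * x ^ 2 + b * y ^ 2 + c * z ^ 2 + 2 * d * y * z + 2 * e * x * z + 2 * f * x * y

def Pf (D k a b c d e f : ℤ) : Prop :=
  (0 < a ∧ 0 < a * b - f ^ 2 ∧
      a * b * c + 2 * d * e * f - a * d ^ 2 - b * e ^ 2 - c * f ^ 2 = D) ∧
  ∃ x y z, TForm a b c d e f x y z = k

def An (a b c d e f : ℤ) : Prop :=
  ∀ x y z : ℤ, (5 : ℤ) ∣ TForm a b c d e f x y z →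
    (5 : ℤ) ∣ a * x + f * y + e * z ∧ (5 : ℤ) ∣ f * x + b * y + d * z ∧
    (5 : ℤ) ∣ e * x + d * y + c * z

theorem Pf_m1 (D k a b c d e f : ℤ) (h : Pf D k a b c d e f) : Pf D k b a c e d f := by
  obtain ⟨⟨h1, h2, h3⟩, x, y, z, h4⟩ := h
  refine ⟨⟨?_, ?_, ?_⟩, y, x, z, ?_⟩
  · by_contra hb
    nlinarith [sq_nonneg f]
  · linarith
  · linarith
  · rw [← h4]; unfold TForm; ring

theorem Pf_m2 (D k : ℤ) (hD : 0 < D) (a b c d e f : ℤ) (h : Pf D k a b c d e f) :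
    Pf D k a c b d f e := by
  obtain ⟨⟨h1, h2, h3⟩, x, y, z, h4⟩ := h
  refine ⟨⟨h1, ?_, ?_⟩, x, z, y, ?_⟩
  · have : (a * b - f ^ 2) * (a * c - e ^ 2) = (a * d - e * f) ^ 2 + a * D := by
      rw [← h3]; ring
    have h5 : 0 < (a * b - f ^ 2) * (a * c - e ^ 2) := by rw [this]; positivity
    exact (pos_iff_pos_of_mul_pos h5).mp h2
  · linarith
  · rw [← h4]; unfold TForm; ring

theorem Pf_m3 (D k : ℤ) (a b c d e f t : ℤ) (h : Pf D k a b c d e f) :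
    Pf D k a (b + 2 * t * f + t ^ 2 * a) c (d + t * e) e (f + t * a) := by
  obtain ⟨⟨h1, h2, h3⟩, x, y, z, h4⟩ := h
  refine ⟨⟨h1, ?_, ?_⟩, x - t * y, y, z, ?_⟩
  · linarith
  · linarith
  · rw [← h4]; unfold TForm; ring

theorem An_m1 (a b c d e f : ℤ) (h : An a b c d e f) : An b a c e d f := by
  intro x y z hx
  obtain ⟨h1, h2, h3⟩ := h y x z (by convert hx using 1; unfold TForm; ring)
  refine ⟨?_, ?_, ?_⟩
  · convert h2 using 1; ring
  · convert h1 using 1; ring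
  · convert h3 using 1; ring

theorem An_m2 (a b c d e f : ℤ) (h : An a b c d e f) : An a c b d f e := by
  intro x y z hx
  obtain ⟨h1, h2, h3⟩ := h x z y (by convert hx using 1; unfold TForm; ring)
  refine ⟨?_, ?_, ?_⟩
  · convert h1 using 1; ring
  · convert h3 using 1; ring
  · convert h2 using 1; ring

theorem An_m3 (a b c d e f t : ℤ) (h : An a b c d e f) :
    An a (b + 2 * t * f + t ^ 2 * a) c (d + t * e) e (f + t * a) := by
  intro x y z hx
  obtain ⟨h1, h2, h3⟩ := h (x + t * y) y z (by convert hx using 1; unfold TForm; ring)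
  refine ⟨?_, ?_, ?_⟩
  · convert h1 using 1; ring
  · obtain ⟨u, hu⟩ := h1
    obtain ⟨v, hv⟩ := h2
    exact ⟨v + t * u, by linear_combination hv + t * hu⟩
  · convert h3 using 1; ring

theorem three_sq_of_form (k a b c d e f : ℤ) (h : Pf 1 k a b c d e f) :
    ∃ x y z : ℤ, x ^ 2 + y ^ 2 + z ^ 2 = k := by
  obtain ⟨a, b, c, d, e, f, h, h1, h2, h3, h4, h5, h6, h7⟩ :=
    ternary_reduce (Pf 1 k) 1 one_pos (fun a b c d e f h => h.1) (Pf_m1 1 k) (Pf_m2 1 k one_pos)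
      (Pf_m3 1 k) ⟨_, _, _, _, _, _, h⟩
  obtain ⟨⟨p1, p2, p3⟩, x, y, z, hk⟩ := h
  have ha : a = 1 := by
    by_contra hne
    have : 2 ≤ a := by omega
    nlinarith [mul_nonneg (by linarith : 0 ≤ a - 2) (by positivity : 0 ≤ a ^ 2)]
  subst ha
  have hf : f = 0 := by rw [← abs_eq_zero]; have := abs_nonneg f; omega
  have he : e = 0 := by rw [← abs_eq_zero]; have := abs_nonneg e; omega
  subst hf he
  have hb : b = 1 := by
    by_contra hne
    have : 2 ≤ b := by omega
    nlinarith
  subst hb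
  have hd : d = 0 := by
    rw [← abs_eq_zero]; have := abs_nonneg d; simp at h4; omega
  subst hd
  have hc : c = 1 := by linarith
  subst hc
  exact ⟨x, y, z, by rw [← hk]; unfold TForm; ring⟩

theorem rep10_of_form (k a b c d e f : ℤ) (h : Pf 10 k a b c d e f) (h' : An a b c d e f) (hodd : k % 2 = 1) :
    ∃ x y z : ℤ, x ^ 2 + 2 * y ^ 2 + 5 * z ^ 2 = k := by
  obtain ⟨a, b, c, d, e, f, ⟨h, h'⟩, h1, h2, h3, h4, h5, h6, h7⟩ :=
    ternary_reduce (fun a b c d e f => Pf 10 k a b c d e f ∧ An a b c d e f) 10 (by norm_num)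
      (fun a b c d e f h => h.1.1)
      (fun a b c d e f h => ⟨Pf_m1 10 k _ _ _ _ _ _ h.1, An_m1 _ _ _ _ _ _ h.2⟩)
      (fun a b c d e f h => ⟨Pf_m2 10 k (by norm_num) _ _ _ _ _ _ h.1, An_m2 _ _ _ _ _ _ h.2⟩)
      (fun a b c d e f t h => ⟨Pf_m3 10 k _ _ _ _ _ _ t h.1, An_m3 _ _ _ _ _ _ t h.2⟩)
      ⟨_, _, _, _, _, _, h, h'⟩
  obtain ⟨⟨p1, p2, p3⟩, x, y, z, hk⟩ := h
  have ha : a ≤ 2 := by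
    by_contra hne
    have : 3 ≤ a := by omega
    nlinarith [mul_nonneg (by linarith : 0 ≤ a - 3) (by positivity : 0 ≤ a ^ 2)]
  -- a specialisation of anisotropy
  have key : ∀ x y z : ℤ, TForm a b c d e f x y z % 5 = 0 → (a * x + f * y + e * z) % 5 = 0 := by
    intro x y z h
    exact Int.emod_eq_zero_of_dvd (h' x y z (Int.dvd_of_emod_eq_zero h)).1
  have hh : a * b - f ^ 2 ≤ 5 := by
    by_contra hne
    have : 6 ≤ a * b - f ^ 2 := by omega
    nlinarith
  have f1 := abs_le.mp (show |f| ≤ 1 by omega)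
  have e1 := abs_le.mp (show |e| ≤ 1 by omega)
  have b1 : b ≤ 6 := by
    nlinarith
  have c1 : 0 < a * c - e ^ 2 := by linarith
  have d1 := abs_le.mp (show |a * d - e * f| ≤ 2 by omega)
  have key1 := key 1 2 0
  have a1 : a = 1 ∨ a = 2 := by omega
  obtain ⟨f1, f2⟩ := f1
  obtain ⟨e1, e2⟩ := e1
  rcases a1 with rfl | rfl
  · have hf : f = 0 := by rw [← abs_eq_zero]; have := abs_nonneg f; omega
    have he : e = 0 := by rw [← abs_eq_zero]; have := abs_nonneg e; omega
    subst hf he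
    have d2 : -2 ≤ d ∧ d ≤ 2 := by omega
    obtain ⟨d2, d3⟩ := d2
    rw [show (1 : ℤ) * d - 0 * 0 = d by ring] at h4
    interval_cases b <;> interval_cases d <;> norm_num at * <;> try omega
    · exfalso
      norm_num [TForm] at key1
    · have hc : c = 5 := by omega
      subst hc
      exact ⟨x, y, z, by rw [← hk]; unfold TForm; ring⟩
  · exfalso
    have d2 : -2 ≤ d ∧ d ≤ 2 := by
      have : -1 ≤ e * f ∧ e * f ≤ 1 := by constructor <;> nlinarith
      omega
    obtain ⟨d2, d3⟩ := d2
    have hp : (b % 2 = 1 ∨ c % 2 = 1) := by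
      by_contra hcon
      obtain ⟨b', hb'⟩ : ∃ b', b = 2 * b' := ⟨b / 2, by omega⟩
      obtain ⟨c', hc'⟩ : ∃ c', c = 2 * c' := ⟨c / 2, by omega⟩
      have : k = 2 * (x ^ 2 + b' * y ^ 2 + c' * z ^ 2 + d * y * z + e * x * z + f * x * y) := by
        rw [← hk, hb', hc']; unfold TForm; ring
      omega
    clear hk
    unfold TForm at key1
    clear h' key d1 h7
    have h8 := abs_le.mp (show |2 * d - e * f| ≤ (2 * b - f ^ 2) / 2 by omega)
    clear h4 h1 h2
    interval_cases f <;> interval_cases e <;> interval_cases b <;> interval_cases d <;> omega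


open scoped NumberTheorySymbols in
theorem sqrt_of_jacobi (p : ℕ) (hp : p.Prime) (m δ : ℤ) (h1 : J(m | p) = 1)
    (h2 : ∃ s : ℤ, (p : ℤ) ∣ m * (-δ) - s ^ 2 ∧ IsCoprime s p) : ∃ b : ℤ, (p : ℤ) ∣ b ^ 2 + δ := by
  haveI := Fact.mk hp
  obtain ⟨s, h2, h3⟩ := h2
  have e1 : J(m * (-δ) | p) = J(s ^ 2 | p) := jacobiSym.mod_left' (Int.emod_eq_emod_iff_emod_sub_eq_zero.mpr (Int.emod_eq_zero_of_dvd h2))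
  rw [jacobiSym.mul_left, h1, one_mul, jacobiSym.sq_one' (Int.isCoprime_iff_gcd_eq_one.mp h3)] at e1
  obtain ⟨r, hr⟩ := ZMod.isSquare_of_jacobiSym_eq_one e1
  refine ⟨r.val, ?_⟩
  rw [← ZMod.intCast_zmod_eq_zero_iff_dvd]
  push_cast
  rw [ZMod.natCast_zmod_val, pow_two, ← hr]
  push_cast
  ring

theorem prime_crt (m n : ℕ) (hm : m ≠ 0) (hn : n ≠ 0) (co : m.Coprime n) (a b : ℕ)
    (ha : a.Coprime m) (hb : b.Coprime n) :
    ∃ p > 5, p.Prime ∧ p % m = a % m ∧ p % n = b % n := by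
  obtain ⟨c, hc1, hc2⟩ := Nat.chineseRemainder co a b
  have h1 : c.Coprime m := by
    rw [Nat.Coprime, hc1.gcd_eq]; exact ha
  have h2 : c.Coprime n := by
    rw [Nat.Coprime, hc2.gcd_eq]; exact hb
  obtain ⟨p, hp5, hp, hmod⟩ := Nat.forall_exists_prime_gt_and_modEq 5 (q := m * n) (a := c)
    (Nat.mul_ne_zero hm hn) (Nat.Coprime.mul_right h1 h2)
  exact ⟨p, hp5, hp, (hmod.of_mul_right n).trans hc1, (hmod.of_mul_left m).trans hc2⟩

theorem three_sq_aux (k δ a b : ℤ) (ha : 0 < a) (hδ : 0 < δ) (h : a = k * δ - 1)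
    (hd : a ∣ b ^ 2 + δ) : ∃ x y z : ℤ, x ^ 2 + y ^ 2 + z ^ 2 = k := by
  obtain ⟨c, hc⟩ := hd
  have hd : a * c - b ^ 2 = δ := by linarith
  apply three_sq_of_form k a c k 1 0 b
  refine ⟨⟨ha, by linarith, ?_⟩, 0, 0, 1, by unfold TForm; ring⟩
  linear_combination k * hd - h

open scoped NumberTheorySymbols in
theorem jm1_1 (p : ℕ) (hp : p % 4 = 1) : J(-1 | p) = 1 := by
  rw [jacobiSym.at_neg_one (Nat.odd_iff.mpr (by omega)), ZMod.χ₄_nat_one_mod_four hp]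
open scoped NumberTheorySymbols in
theorem jm1_3 (p : ℕ) (hp : p % 4 = 3) : J(-1 | p) = -1 := by
  rw [jacobiSym.at_neg_one (Nat.odd_iff.mpr (by omega)), ZMod.χ₄_nat_three_mod_four hp]
open scoped NumberTheorySymbols in
theorem jm2_1 (p : ℕ) (hp : p % 8 = 1 ∨ p % 8 = 3) : J(-2 | p) = 1 := by
  rw [jacobiSym.at_neg_two (Nat.odd_iff.mpr (by omega)), ZMod.χ₈'_nat_eq_if_mod_eight,
    if_neg (by omega), if_pos hp]
open scoped NumberTheorySymbols in
theorem jm2_5 (p : ℕ) (hp : p % 8 = 5 ∨ p % 8 = 7) : J(-2 | p) = -1 := by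
  rw [jacobiSym.at_neg_two (Nat.odd_iff.mpr (by omega)), ZMod.χ₈'_nat_eq_if_mod_eight,
    if_neg (by omega), if_neg (by omega)]

theorem coprime_odd_pow (k j : ℕ) (hk : k % 2 = 1) : (2 ^ j).Coprime k :=
  Nat.Coprime.pow_left _ ((Nat.coprime_two_left).mpr (Nat.odd_iff.mpr hk))

open scoped NumberTheorySymbols in
theorem three_sq_two (k : ℕ) (hk : k % 2 = 1) :
    ∃ x y z : ℤ, x ^ 2 + y ^ 2 + z ^ 2 = ((2 * k : ℕ) : ℤ) := by
  have hk0 : 0 < k := by omega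
  obtain ⟨p, hp5, hp, h1, h2⟩ := prime_crt 8 k (by norm_num) (by omega) (coprime_odd_pow k 3 hk)
    3 (2 * k - 1) (by norm_num) (by
      have : (2 * k - 1).Coprime (2 * k) := by
        rw [Nat.coprime_self_sub_left (by omega)]; simp
      exact Nat.Coprime.coprime_mul_left_right this)
  have h3 : (p : ℤ) % k = (-1) % k := by
    have : ((p % k : ℕ) : ℤ) = (((2 * k - 1) % k : ℕ) : ℤ) := by rw [h2]
    push_cast [Nat.cast_sub (show 1 ≤ 2 * k by omega)] at this
    rw [this, show (2 * (k : ℤ) - 1) = -1 + k * 2 by ring, Int.add_mul_emod_self_left]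
  have hpk : J(k | p) = 1 := by
    have e1 : J(p | k) = J(-1 | k) := jacobiSym.mod_left' h3
    rcases (show k % 4 = 1 ∨ k % 4 = 3 by omega) with h | h
    · rw [jacobiSym.quadratic_reciprocity_one_mod_four h (Nat.odd_iff.mpr (by omega)), e1, jm1_1 k h]
    · rw [jacobiSym.quadratic_reciprocity_three_mod_four h (by omega), e1, jm1_3 k h]; norm_num
  have hd : (k : ℤ) ∣ p + 1 := by
    have := Int.emod_eq_emod_iff_emod_sub_eq_zero.mp h3
    simpa using Int.dvd_of_emod_eq_zero this
  obtain ⟨r, hr⟩ := hd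
  have hr2 : r % 2 = 0 := by
    by_contra hcon
    have : ((k : ℤ) * r) % 2 = 1 := by
      rw [Int.mul_emod, show (k : ℤ) % 2 = 1 by omega, show r % 2 = 1 by omega]; norm_num
    omega
  obtain ⟨δ, hδ⟩ : ∃ δ, r = 2 * δ := ⟨r / 2, by omega⟩
  have hpos : 0 < δ := by
    by_contra hcon
    have : (k : ℤ) * r ≤ 0 := mul_nonpos_of_nonneg_of_nonpos (by omega) (by omega)
    omega
  obtain ⟨b, hb⟩ := sqrt_of_jacobi p hp (-2 * k) δ
    (by rw [jacobiSym.mul_left, jm2_1 p (by omega), hpk]; norm_num)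
    ⟨1, ⟨1, by rw [hδ] at hr; linear_combination -hr⟩, isCoprime_one_left⟩
  apply three_sq_aux _ δ p b (by omega) hpos _ hb
  push_cast
  rw [hδ] at hr
  linear_combination hr

open scoped NumberTheorySymbols in
theorem three_sq_odd (k : ℕ) (hk : k % 8 = 1 ∨ k % 8 = 3 ∨ k % 8 = 5) :
    ∃ x y z : ℤ, x ^ 2 + y ^ 2 + z ^ 2 = (k : ℤ) := by
  have hk0 : 0 < k := by omega
  obtain ⟨p, hp5, hp, h1, h2⟩ := prime_crt 4 k (by norm_num) (by omega)
    (coprime_odd_pow k 2 (by omega))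
    (if k % 8 = 5 then 3 else 1) ((k - 1) / 2) (by split_ifs <;> norm_num) (by
      have : (k - 1).Coprime k := by
        rw [Nat.coprime_self_sub_left (by omega)]; simp
      exact Nat.Coprime.coprime_dvd_left (Nat.div_dvd_of_dvd (by omega)) this)
  have hd : (k : ℤ) ∣ 2 * p + 1 := by
    have h3 : (k : ℤ) ∣ p - ((k - 1) / 2 : ℕ) := by
      have := (Nat.modEq_iff_dvd.mp (show (k - 1) / 2 ≡ p [MOD k] from h2.symm))
      exact this
    have h4 : (((k - 1) / 2 : ℕ) : ℤ) * 2 = k - 1 := by omega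
    obtain ⟨u, hu⟩ := h3
    exact ⟨2 * u + 1, by linear_combination 2 * hu + h4⟩
  obtain ⟨δ, hδ⟩ := hd
  have e1 : J(p | k) = J(-2 | k) := by
    have e2 : J(-2 * p | k) = J(1 | k) := jacobiSym.mod_left' (by
      apply Int.emod_eq_emod_iff_emod_sub_eq_zero.mpr (Int.emod_eq_zero_of_dvd ⟨-δ, by linear_combination -hδ⟩))
    rw [jacobiSym.mul_left, jacobiSym.one_left] at e2
    rcases jacobiSym.trichotomy (-2) k with h | h | h <;> rw [h] at e2 <;> rw [h] <;> omega
  have hm : J(-1 * k | p) = 1 := by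
    rw [jacobiSym.mul_left]
    split_ifs at h1 with h5
    · rw [jm1_3 p (by omega), jacobiSym.quadratic_reciprocity_one_mod_four (by omega)
        (Nat.odd_iff.mpr (by omega)), e1, jm2_5 k (by omega)]; norm_num
    · rw [jm1_1 p (by omega), jacobiSym.quadratic_reciprocity_one_mod_four' 
        (Nat.odd_iff.mpr (by omega)) (by omega), e1, jm2_1 k (by omega)]; norm_num
  have hpos : 0 < δ := by
    by_contra hcon
    have : (k : ℤ) * δ ≤ 0 := mul_nonpos_of_nonneg_of_nonpos (by omega) (by omega)
    omega
  have hδ2 : δ % 2 = 1 := by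
    by_contra hcon
    have : ((k : ℤ) * δ) % 2 = 0 := by
      rw [Int.mul_emod, show δ % 2 = 0 by omega]; norm_num
    omega
  obtain ⟨b, hb⟩ := sqrt_of_jacobi p hp (-1 * k) δ hm
    ⟨1, ⟨2, by linear_combination -hδ⟩, isCoprime_one_left⟩
  have hp2 : p % 2 = 1 := by split_ifs at h1 <;> omega
  obtain ⟨b', hb'1, hb'2⟩ : ∃ b' : ℤ, b' % 2 = 1 ∧ (p : ℤ) ∣ b' ^ 2 + δ := by
    rcases (show b % 2 = 1 ∨ b % 2 = 0 by omega) with h | h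
    · exact ⟨b, h, hb⟩
    · refine ⟨b + p, by omega, ?_⟩
      obtain ⟨u, hu⟩ := hb
      exact ⟨u + 2 * b + p, by linear_combination hu⟩
  apply three_sq_aux _ δ (2 * p) b' (by omega) hpos (by linear_combination hδ)
  apply IsCoprime.mul_dvd _ _ hb'2
  · exact Int.isCoprime_iff_gcd_eq_one.mpr ((Nat.coprime_two_left).mpr (Nat.odd_iff.mpr hp2))
  · apply Int.dvd_of_emod_eq_zero
    rw [Int.add_emod, pow_two, Int.mul_emod, hb'1, hδ2]; norm_num

/-- three squares theorem, nonzero mod 4 part -/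
theorem three_sq (k : ℤ) (h0 : 0 ≤ k)
    (h : k % 8 = 1 ∨ k % 8 = 2 ∨ k % 8 = 3 ∨ k % 8 = 5 ∨ k % 8 = 6) :
    ∃ x y z : ℤ, x ^ 2 + y ^ 2 + z ^ 2 = k := by
  lift k to ℕ using h0
  rcases (show k % 2 = 1 ∨ k % 2 = 0 by omega) with h2 | h2
  · exact three_sq_odd k (by omega)
  · obtain ⟨j, hj⟩ : ∃ j, k = 2 * j := ⟨k / 2, by omega⟩
    rw [hj]
    exact three_sq_two j (by omega)

open scoped NumberTheorySymbols in
/-- 1,5,10 -/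
theorem rep_1_5_10 (k : ℤ) (h0 : 0 ≤ k) (h2 : k % 2 = 1) (h5 : k % 5 = 1 ∨ k % 5 = 4) :
    ∃ x y z : ℤ, x ^ 2 + 5 * y ^ 2 + 10 * z ^ 2 = k := by
  lift k to ℕ using h0
  have hk0 : 0 < k := by omega
  obtain ⟨r, s, hrs⟩ : ∃ r s : ℕ, 5 * r + 2 = s * k := by
    rcases h5 with h | h
    · exact ⟨(2 * k - 2) / 5, 2, by omega⟩
    · exact ⟨(3 * k - 2) / 5, 3, by omega⟩
  have hrk : r.Coprime k := by
    have h1 : Nat.gcd r k ∣ 2 := by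
      have a1 : Nat.gcd r k ∣ 5 * r + 2 := hrs ▸ (Nat.gcd_dvd_right r k).mul_left s
      exact (Nat.dvd_add_right ((Nat.gcd_dvd_left r k).mul_left 5)).mp a1
    have h3 := Nat.gcd_dvd_right r k
    rcases (Nat.dvd_prime Nat.prime_two).mp h1 with h | h
    · exact h
    · rw [h] at h3; omega
  obtain ⟨p, hp5, hp, h1, hpr⟩ := prime_crt 8 k (by norm_num) (by omega)
    (coprime_odd_pow k 3 (by omega))
    (if k % 8 = 1 ∨ k % 8 = 3 then 1 else 5) r (by split_ifs <;> norm_num) hrk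
  have hd : (k : ℤ) ∣ 5 * p + 2 := by
    obtain ⟨u, hu⟩ := (Nat.modEq_iff_dvd.mp (show r ≡ p [MOD k] from hpr.symm))
    have : (5 * r + 2 : ℤ) = s * k := by exact_mod_cast hrs
    exact ⟨5 * u + s, by linear_combination 5 * hu + this⟩
  obtain ⟨δ, hδ⟩ := hd
  have hpo : p % 2 = 1 := by split_ifs at h1 <;> omega
  have hp4 : p % 4 = 1 := by split_ifs at h1 <;> omega
  have e5 : J((5 : ℕ) | k) = 1 := by
    rw [jacobiSym.quadratic_reciprocity_one_mod_four (by norm_num) (Nat.odd_iff.mpr (by omega)),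
      jacobiSym.mod_left]
    rcases h5 with h | h
    · rw [show ((k : ℤ) % ((5 : ℕ) : ℤ)) = 1 by omega, jacobiSym.one_left]
    · rw [show ((k : ℤ) % ((5 : ℕ) : ℤ)) = 2 ^ 2 by omega]
      exact jacobiSym.sq_one' (by norm_num)
  have e1 : J(p | k) = J(-2 | k) := by
    have e2 : J((5 : ℕ) * p | k) = J(-2 | k) := jacobiSym.mod_left' (by
      apply Int.emod_eq_emod_iff_emod_sub_eq_zero.mpr (Int.emod_eq_zero_of_dvd ⟨δ, by push_cast; linear_combination hδ⟩))
    rwa [jacobiSym.mul_left, e5, one_mul] at e2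
  have hm : J(-2 * k | p) = 1 := by
    rw [jacobiSym.mul_left, jacobiSym.quadratic_reciprocity_one_mod_four' 
        (Nat.odd_iff.mpr (by omega)) hp4, e1]
    split_ifs at h1 with h5
    · rw [jm2_1 p (by omega), jm2_1 k (by omega)]; norm_num
    · rw [jm2_5 p (by omega), jm2_5 k (by omega)]; norm_num
  have hpos : 0 < δ := by
    by_contra hcon
    have : (k : ℤ) * δ ≤ 0 := mul_nonpos_of_nonneg_of_nonpos (by omega) (by omega)
    omega
  obtain ⟨b, c, hc⟩ := sqrt_of_jacobi p hp (-2 * k) δ hm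
    ⟨2, ⟨10, by linear_combination -2 * hδ⟩,
      Int.isCoprime_iff_gcd_eq_one.mpr ((Nat.coprime_two_left).mpr (Nat.odd_iff.mpr hpo))⟩
  have hdel : (p : ℤ) * c - b ^ 2 = δ := by linarith
  have hδ5 : δ % 5 = 2 ∨ δ % 5 = 3 := by
    have hm5 : (k * δ : ℤ) % 5 = 2 := by omega
    rw [Int.mul_emod] at hm5
    have := Int.emod_nonneg δ (show (5 : ℤ) ≠ 0 by norm_num)
    have := Int.emod_lt_of_pos δ (show (0 : ℤ) < 5 by norm_num)
    rcases h5 with h | h <;> rw [h] at hm5 <;> omega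
  have hpn5 : IsCoprime (5 : ℤ) p := by
    apply Int.isCoprime_iff_gcd_eq_one.mpr
    exact (Nat.coprime_primes Nat.prime_five hp).mpr (by omega)
  obtain ⟨Y, Z, X, hXYZ⟩ := rep10_of_form (5 * k) p c (5 * k) 5 0 b
    ⟨⟨by omega, by linarith, by linear_combination 5 * k * hdel - 5 * hδ⟩,
      0, 0, 1, by unfold TForm; ring⟩
    (by
      intro x y z hxyz
      have h3 : (5 : ℤ) ∣ (p * x + b * y) ^ 2 + δ * y ^ 2 := by
        obtain ⟨u, hu⟩ := hxyz
        unfold TForm at hu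
        exact ⟨p * u - p * k * z ^ 2 - 2 * p * y * z, by linear_combination p * hu - y ^ 2 * hdel⟩
      have h4 : (5 : ℤ) ∣ p * x + b * y ∧ (5 : ℤ) ∣ y := by
        generalize (p : ℤ) * x + b * y = w at h3
        have h3' := Int.emod_eq_zero_of_dvd h3
        have hw : w % 5 = 0 ∨ w % 5 = 1 ∨ w % 5 = 2 ∨ w % 5 = 3 ∨ w % 5 = 4 := by omega
        have hy : y % 5 = 0 ∨ y % 5 = 1 ∨ y % 5 = 2 ∨ y % 5 = 3 ∨ y % 5 = 4 := by omega
        rw [Int.dvd_iff_emod_eq_zero, Int.dvd_iff_emod_eq_zero]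
        rcases hw with hw | hw | hw | hw | hw <;> rcases hy with hy | hy | hy | hy | hy <;>
        rcases hδ5 with hδ5 | hδ5 <;>
        simp [Int.add_emod, Int.mul_emod, pow_two, hw, hy, hδ5] at h3' ⊢
      obtain ⟨⟨u, hu⟩, v, hv⟩ := h4
      refine ⟨⟨u, by linear_combination hu⟩, ?_, ⟨y + k * z, by ring⟩⟩
      have : (5 : ℤ) ∣ p * (b * x + c * y) := ⟨b * u + δ * v, by linear_combination b * hu + y * hdel + δ * hv⟩
      obtain ⟨w, hw⟩ := hpn5.dvd_of_dvd_mul_left this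
      exact ⟨w + z, by linear_combination hw⟩)
    (by omega)
  have h3 : (Y ^ 2 + 2 * Z ^ 2) % 5 = 0 := by omega
  have h4 : Y % 5 = 0 ∧ Z % 5 = 0 := by
    have hw : Y % 5 = 0 ∨ Y % 5 = 1 ∨ Y % 5 = 2 ∨ Y % 5 = 3 ∨ Y % 5 = 4 := by omega
    have hy : Z % 5 = 0 ∨ Z % 5 = 1 ∨ Z % 5 = 2 ∨ Z % 5 = 3 ∨ Z % 5 = 4 := by omega
    rcases hw with hw | hw | hw | hw | hw <;> rcases hy with hy | hy | hy | hy | hy <;>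
        simp [Int.add_emod, Int.mul_emod, pow_two, hw, hy] at h3 ⊢
  obtain ⟨y, hy⟩ : ∃ y, Y = 5 * y := ⟨Y / 5, by omega⟩
  obtain ⟨z, hz⟩ : ∃ z, Z = 5 * z := ⟨Z / 5, by omega⟩
  refine ⟨X, y, z, ?_⟩
  rw [hy, hz] at hXYZ
  linarith


theorem sq3 (x : ℤ) : (x % 3 = 0 ∧ x ^ 2 % 3 = 0) ∨ (x % 3 = 1 ∧ x ^ 2 % 3 = 1) ∨
    (x % 3 = 2 ∧ x ^ 2 % 3 = 1) := by
  rcases (show x % 3 = 0 ∨ x % 3 = 1 ∨ x % 3 = 2 by omega) with h | h | h <;>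
    simp [h, pow_two, Int.mul_emod]

theorem sq5 (x : ℤ) : (x % 5 = 0 ∧ x ^ 2 % 5 = 0) ∨ (x % 5 = 1 ∧ x ^ 2 % 5 = 1) ∨
    (x % 5 = 2 ∧ x ^ 2 % 5 = 4) ∨ (x % 5 = 3 ∧ x ^ 2 % 5 = 4) ∨ (x % 5 = 4 ∧ x ^ 2 % 5 = 1) := by
  rcases (show x % 5 = 0 ∨ x % 5 = 1 ∨ x % 5 = 2 ∨ x % 5 = 3 ∨ x % 5 = 4 by omega) with
    h | h | h | h | h <;> simp [h, pow_two, Int.mul_emod]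

theorem sq16 (x : ℤ) : (x % 4 = 0 ∧ x ^ 2 % 16 = 0) ∨ (x % 4 = 2 ∧ x ^ 2 % 16 = 4) ∨
    (x % 2 = 1 ∧ x ^ 2 % 8 = 1) := by
  have h : x % 16 = 0 ∨ x % 16 = 1 ∨ x % 16 = 2 ∨ x % 16 = 3 ∨ x % 16 = 4 ∨ x % 16 = 5 ∨
    x % 16 = 6 ∨ x % 16 = 7 ∨ x % 16 = 8 ∨ x % 16 = 9 ∨ x % 16 = 10 ∨ x % 16 = 11 ∨
    x % 16 = 12 ∨ x % 16 = 13 ∨ x % 16 = 14 ∨ x % 16 = 15 := by omega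
  have h2 : x ^ 2 % 16 = ((x % 16) * (x % 16)) % 16 := by rw [pow_two, Int.mul_emod]
  rcases h with h | h | h | h | h | h | h | h | h | h | h | h | h | h | h | h <;>
    rw [h] at h2 <;> omega

theorem p8_of (u : ℤ) (h : u % 3 ≠ 0) : ∃ z : ℤ, u ^ 2 = 3 * (3 * z ^ 2 - 2 * z) + 1 := by
  rcases (show u % 3 = 2 ∨ u % 3 = 1 by omega) with h | h
  · refine ⟨(u + 1) / 3, ?_⟩
    obtain ⟨z, hz⟩ : ∃ z, u = 3 * z - 1 := ⟨(u + 1) / 3, by omega⟩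
    rw [show (u + 1) / 3 = z by omega, hz]; ring
  · refine ⟨(-u + 1) / 3, ?_⟩
    obtain ⟨z, hz⟩ : ∃ z, u = -(3 * z - 1) := ⟨(-u + 1) / 3, by omega⟩
    rw [show (-u + 1) / 3 = z by omega, hz]; ring

/-- choose a sign -/
theorem sgn3 (x y : ℤ) (h : x % 3 = 0 ↔ y % 3 = 0) :
    ∃ x' : ℤ, (x' = x ∨ x' = -x) ∧ x' ^ 2 = x ^ 2 ∧ (x' - y) % 3 = 0 := by
  have hx : x % 3 = 0 ∨ x % 3 = 1 ∨ x % 3 = 2 := by omega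
  have hy : y % 3 = 0 ∨ y % 3 = 1 ∨ y % 3 = 2 := by omega
  rcases (show (x - y) % 3 = 0 ∨ (-x - y) % 3 = 0 by omega) with h | h
  · exact ⟨x, Or.inl rfl, rfl, h⟩
  · exact ⟨-x, Or.inr rfl, by ring, h⟩

theorem corA_aux (k a b c : ℤ) (h : a ^ 2 + b ^ 2 + c ^ 2 = 5 * k) (hc : c % 5 = 0) :
    ∃ x y z : ℤ, x ^ 2 + y ^ 2 + 5 * z ^ 2 = k := by
  have key : ∀ a : ℤ, a ^ 2 + b ^ 2 + c ^ 2 = 5 * k → (a + 2 * b) % 5 = 0 →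
      ∃ x y z : ℤ, x ^ 2 + y ^ 2 + 5 * z ^ 2 = k := by
    intro a h1 h2
    obtain ⟨x, hx⟩ : ∃ x, a = 5 * x - 2 * b := ⟨(a + 2 * b) / 5, by omega⟩
    obtain ⟨z, hz⟩ : ∃ z, c = 5 * z := ⟨c / 5, by omega⟩
    subst hx hz
    refine ⟨x, 2 * x - b, z, ?_⟩
    have : 5 * (x ^ 2 + (2 * x - b) ^ 2 + 5 * z ^ 2) = 5 * k := by rw [← h1]; ring
    linarith
  have h2 : (a + 2 * b) % 5 = 0 ∨ (-a + 2 * b) % 5 = 0 := by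
    have := sq5 a; have := sq5 b; have := sq5 c; omega
  rcases h2 with h2 | h2
  · exact key a h h2
  · exact key (-a) (by rw [← h]; ring) h2

theorem corA0 (k : ℤ) (h0 : 0 ≤ k)
    (h : k % 8 = 1 ∨ k % 8 = 2 ∨ k % 8 = 5 ∨ k % 8 = 6 ∨ k % 8 = 7) :
    ∃ x y z : ℤ, x ^ 2 + y ^ 2 + 5 * z ^ 2 = k := by
  obtain ⟨a, b, c, h1⟩ := three_sq (5 * k) (by omega) (by omega)
  have h2 : c % 5 = 0 ∨ b % 5 = 0 ∨ a % 5 = 0 := by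
    have := sq5 a; have := sq5 b; have := sq5 c; omega
  rcases h2 with h2 | h2 | h2
  · exact corA_aux k a b c h1 h2
  · exact corA_aux k a c b (by rw [← h1]; ring) h2
  · exact corA_aux k b c a (by rw [← h1]; ring) h2

theorem corA4 (k j : ℤ) (hk : k = 4 * j) (h : ∃ x y z : ℤ, x ^ 2 + y ^ 2 + 5 * z ^ 2 = j) :
    ∃ x y z : ℤ, x ^ 2 + y ^ 2 + 5 * z ^ 2 = k := by
  obtain ⟨x, y, z, h⟩ := h
  exact ⟨2 * x, 2 * y, 2 * z, by rw [hk, ← h]; ring⟩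

def gK (k : ℤ) : Prop := (k % 8 = 1 ∨ k % 8 = 2 ∨ k % 8 = 5 ∨ k % 8 = 6 ∨ k % 8 = 7) ∨
  (k % 32 = 4 ∨ k % 32 = 8 ∨ k % 32 = 20 ∨ k % 32 = 24 ∨ k % 32 = 28) ∨
  (k % 128 = 16 ∨ k % 128 = 32 ∨ k % 128 = 80 ∨ k % 128 = 96 ∨ k % 128 = 112)

instance (k : ℤ) : Decidable (gK k) := by unfold gK; infer_instance

theorem corA (k : ℤ) (h0 : 0 ≤ k) (h : gK k) :
    ∃ x y z : ℤ, x ^ 2 + y ^ 2 + 5 * z ^ 2 = k := by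
  rcases h with h | h | h
  · exact corA0 k h0 h
  · exact corA4 k (k / 4) (by omega) (corA0 _ (by omega) (by omega))
  · exact corA4 k (k / 4) (by omega) (corA4 _ (k / 16) (by omega) (corA0 _ (by omega) (by omega)))

def gB (n : ℤ) : Prop := n % 2 = 0 ∧ gK ((3 * n + 2) / 2)

instance (k : ℤ) : Decidable (gB k) := by unfold gB; infer_instance

theorem gB_congr (a b : ℤ) (h : (a - b) % 256 = 0) (ha : gB a) : gB b := by
  obtain ⟨s, hs⟩ : ∃ s, a = b + 256 * s := ⟨(a - b) / 256, by omega⟩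
  obtain ⟨h1, h2⟩ := ha
  refine ⟨by omega, ?_⟩
  have e : (3 * a + 2) / 2 = (3 * b + 2) / 2 + 128 * (3 * s) := by omega
  rw [e] at h2
  generalize (3 * b + 2) / 2 = u at *
  unfold gK at *
  rwa [show (u + 128 * (3 * s)) % 8 = u % 8 by omega, show (u + 128 * (3 * s)) % 32 = u % 32 by omega,
    show (u + 128 * (3 * s)) % 128 = u % 128 by omega] at h2

theorem thmF (n : ℤ) (h0 : 0 ≤ n) (h : gB n) :
    ∃ x y z : ℤ, x ^ 2 + 5 * y ^ 2 + 2 * (3 * z ^ 2 - 2 * z) = n := by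
  obtain ⟨h2, h⟩ := h
  obtain ⟨w, Y, S, h1⟩ := corA _ (by omega) h
  have key : ∀ w Y : ℤ, w ^ 2 + Y ^ 2 + 5 * S ^ 2 = (3 * n + 2) / 2 → w % 3 ≠ 0 →
      (Y % 3 = 0 ↔ S % 3 = 0) →
      ∃ x y z : ℤ, x ^ 2 + 5 * y ^ 2 + 2 * (3 * z ^ 2 - 2 * z) = n := by
    intro w Y h1 hw hY
    obtain ⟨Y', -, hY1, hY2⟩ := sgn3 Y S hY
    obtain ⟨z, hz⟩ := p8_of w hw
    obtain ⟨y, hy⟩ : ∃ y, Y' = S + 3 * y := ⟨(Y' - S) / 3, by omega⟩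
    refine ⟨y + 2 * S, y, z, ?_⟩
    have e : 2 * ((3 * n + 2) / 2) = 3 * n + 2 := by omega
    rw [← h1, ← hY1, hy, hz] at e
    linarith
  have c : (w % 3 ≠ 0 ∧ (Y % 3 = 0 ↔ S % 3 = 0)) ∨ (Y % 3 ≠ 0 ∧ (w % 3 = 0 ↔ S % 3 = 0)) := by
    have := sq3 w; have := sq3 Y; have := sq3 S; omega
  rcases c with ⟨c1, c2⟩ | ⟨c1, c2⟩
  · exact key w Y h1 c1 c2
  · exact key Y w (by rw [← h1]; ring) c1 c2

def RA (α N : ℤ) : Prop := ∃ x y z t : ℤ,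
        x ^ 2 + 5 * y ^ 2 + α * z ^ 2 + 2 * (3 * t ^ 2 - 2 * t) = N
def RB (β N : ℤ) : Prop := ∃ x y z t : ℤ,
        x ^ 2 + 5 * y ^ 2 + 2 * (3 * z ^ 2 - 2 * z) + β * (3 * t ^ 2 - 2 * t) = N

theorem RA_F (α N z : ℤ) (h0 : α * z ^ 2 ≤ N) (h : gB (N - α * z ^ 2)) : RA α N := by
  obtain ⟨x, y, t, h1⟩ := thmF _ (by linarith) h
  exact ⟨x, y, z, t, by linarith⟩

theorem RB_F (β N t : ℤ) (h0 : β * (3 * t ^ 2 - 2 * t) ≤ N)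
    (h : gB (N - β * (3 * t ^ 2 - 2 * t))) : RB β N := by
  obtain ⟨x, y, z, h1⟩ := thmF _ (by linarith) h
  exact ⟨x, y, z, t, by linarith⟩

/-- brute force searches -/
def qs (y N : ℕ) : Bool := [0,1,4,9,16,25,36,49,64,81,100,121,144,169,196,225,256].any fun x => Nat.beq (x + y) N
def qA (α N : ℕ) : Bool := [0,2,10,16,32,42,66,80,112,130,170].any fun u =>
  Nat.ble u N && [0,1,4,9,16,25].any fun z => Nat.ble (α * z + u) N && [0,1,4,9,16,25,36,49].any fun y => 
   Nat.ble (5 * y + (α * z + u)) N && qs (5 * y + (α * z + u)) N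
def qB (β N : ℕ) : Bool := [0,2,10,16,32,42,66,80,112,130,170].any fun u =>
  Nat.ble u N && [0,1,5,8,16,21,33,40].any fun z => Nat.ble (β * z + u) N && [0,1,4,9,16,25,36,49].any fun y => 
   Nat.ble (5 * y + (β * z + u)) N && qs (5 * y + (β * z + u)) N
theorem mem_sq (x : ℕ) (h : x ∈ [0,1,4,9,16,25,36,49,64,81,100,121,144,169,196,225,256]) : ∃ y : ℤ, y ^ 2 = x := by
  simp only [List.mem_cons, List.not_mem_nil, or_false] at h
  rcases h with rfl | rfl | rfl | rfl | rfl | rfl | rfl | rfl | rfl | rfl | rfl | rfl | rfl | rfl | rfl | rfl | rfl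
  exacts [⟨0, rfl⟩, ⟨1, rfl⟩, ⟨2, rfl⟩, ⟨3, rfl⟩, ⟨4, rfl⟩, ⟨5, rfl⟩, ⟨6, rfl⟩, ⟨7, rfl⟩, ⟨8, rfl⟩, ⟨9, rfl⟩, ⟨10, rfl⟩, ⟨11, rfl⟩, ⟨12, rfl⟩, ⟨13, rfl⟩, ⟨14, rfl⟩, ⟨15, rfl⟩, ⟨16, rfl⟩]
theorem mem_p8 (x : ℕ) (h : x ∈ [0,1,5,8,16,21,33,40,56,65,85]) : ∃ t : ℤ, 3 * t ^ 2 - 2 * t = x := by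
  simp only [List.mem_cons, List.not_mem_nil, or_false] at h
  rcases h with rfl | rfl | rfl | rfl | rfl | rfl | rfl | rfl | rfl | rfl | rfl
  exacts [⟨0, rfl⟩, ⟨1, rfl⟩, ⟨-1, rfl⟩, ⟨2, rfl⟩, ⟨-2, rfl⟩, ⟨3, rfl⟩, ⟨-3, rfl⟩, ⟨4, rfl⟩, ⟨-4, rfl⟩, ⟨5, rfl⟩, ⟨-5, rfl⟩]
theorem mem_2p8 (u : ℕ) (h : u ∈ [0,2,10,16,32,42,66,80,112,130,170]) : ∃ t : ℤ, 2 * (3 * t ^ 2 - 2 * t) = u := by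
  obtain ⟨t, ht⟩ := mem_p8 (u / 2) (by
    simp only [List.mem_cons, List.not_mem_nil, or_false] at h ⊢; omega)
  refine ⟨t, ?_⟩
  rw [ht]
  simp only [List.mem_cons, List.not_mem_nil, or_false] at h; omega
theorem RA_q (α N : ℕ) (h : qA α N = true) : RA α N := by
  simp only [qA, qs, List.any_eq_true, Bool.and_eq_true, Nat.beq_eq] at h
  obtain ⟨u, hu, -, z, hz, -, y, hy, -, x, hx, h⟩ := h
  obtain ⟨t, ht⟩ := mem_2p8 u hu
  obtain ⟨x', hx⟩ := mem_sq x hx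
  obtain ⟨y', hy⟩ := mem_sq y (by simp only [List.mem_cons, List.not_mem_nil, or_false] at hy ⊢; omega)
  obtain ⟨z', hz⟩ := mem_sq z (by simp only [List.mem_cons, List.not_mem_nil, or_false] at hz ⊢; omega)
  refine ⟨x', y', z', t, ?_⟩
  rw [ht, hx, hy, hz, ← h]; push_cast; ring
theorem RB_q (α N : ℕ) (h : qB α N = true) : RB α N := by
  simp only [qB, qs, List.any_eq_true, Bool.and_eq_true, Nat.beq_eq] at h
  obtain ⟨u, hu, -, z, hz, -, y, hy, -, x, hx, h⟩ := h
  obtain ⟨t, ht⟩ := mem_2p8 u hu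
  obtain ⟨x', hx⟩ := mem_sq x hx
  obtain ⟨y', hy⟩ := mem_sq y (by simp only [List.mem_cons, List.not_mem_nil, or_false] at hy ⊢; omega)
  obtain ⟨z', hz⟩ := mem_p8 z (by simp only [List.mem_cons, List.not_mem_nil, or_false] at hz ⊢; omega)
  refine ⟨x', y', t, z', ?_⟩
  rw [ht, hx, hy, hz, ← h]; push_cast; ring

theorem tabA1 : ∀ p ∈ List.range 13, 5 ≤ p → ∀ r ∈ List.range 256, (p % 2 = 1 ∨ r % 2 = 0) →
    ∃ z ∈ ([0, 1, 2, 3, 4, 5] : List ℤ), gB ((r : ℤ) - p * z ^ 2) := by decide +kernel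

theorem tabA2 : ∀ p ∈ List.range 13, 5 ≤ p → ∀ r ∈ List.range 300, (p % 2 = 1 ∨ r % 2 = 0) →
    (∃ z ∈ ([0, 1, 2, 3, 4, 5] : List ℤ), (p : ℤ) * z ^ 2 ≤ r ∧ gB ((r : ℤ) - p * z ^ 2)) ∨
    qA p r = true := by decide +kernel

theorem tabB1 : ∀ p ∈ List.range 13, 2 ≤ p → ∀ r ∈ List.range 256, (p % 2 = 1 ∨ r % 2 = 0) →
    (p = 10 → r ≠ 252) →
    ∃ z ∈ ([0, 1, -1, 2, -2] : List ℤ), gB ((r : ℤ) - p * (3 * z ^ 2 - 2 * z)) := by decide +kernel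

theorem tabB2 : ∀ p ∈ List.range 13, 2 ≤ p → ∀ r ∈ List.range 192, (p % 2 = 1 ∨ r % 2 = 0) →
    (∃ z ∈ ([0, 1, -1, 2, -2] : List ℤ), (p : ℤ) * (3 * z ^ 2 - 2 * z) ≤ r ∧
      gB ((r : ℤ) - p * (3 * z ^ 2 - 2 * z))) ∨
    qB p r = true := by decide +kernel

theorem RA_easy (p N : ℕ) (h1 : 5 ≤ p) (h2 : p ≤ 12) (h : p % 2 = 1 ∨ N % 2 = 0) : RA p N := by
  by_cases hN : N < 300
  · rcases tabA2 p (List.mem_range.mpr (by omega)) h1 N (List.mem_range.mpr hN) h with ⟨z, -, h3, h4⟩ | h3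
    · exact RA_F _ _ z h3 h4
    · exact RA_q _ _ h3
  · obtain ⟨z, hz, h3⟩ := tabA1 p (List.mem_range.mpr (by omega)) h1 (N % 256)
      (List.mem_range.mpr (by omega)) (by omega)
    refine RA_F _ _ z ?_ (gB_congr _ _ ?_ h3)
    · simp only [List.mem_cons, List.not_mem_nil, or_false] at hz
      rcases hz with rfl | rfl | rfl | rfl | rfl | rfl <;> omega
    · rw [show ((N % 256 : ℕ) : ℤ) - p * z ^ 2 - (N - p * z ^ 2) = ((N % 256 : ℕ) : ℤ) - N by ring]
      omega

theorem RB_easy' (p N : ℕ) (h1 : 2 ≤ p) (h2 : p ≤ 12) (h : p % 2 = 1 ∨ N % 2 = 0)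
    (h' : p = 10 → N % 256 ≠ 252 ∨ N < 192) : RB p N := by
  by_cases hN : N < 192
  · rcases tabB2 p (List.mem_range.mpr (by omega)) h1 N (List.mem_range.mpr hN) h with ⟨z, -, h3, h4⟩ | h3
    · exact RB_F _ _ z h3 h4
    · exact RB_q _ _ h3
  · obtain ⟨z, hz, h3⟩ := tabB1 p (List.mem_range.mpr (by omega)) h1 (N % 256)
      (List.mem_range.mpr (by omega)) (by omega) (by omega)
    refine RB_F _ _ z ?_ (gB_congr _ _ ?_ h3)
    · simp only [List.mem_cons, List.not_mem_nil, or_false] at hz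
      rcases hz with rfl | rfl | rfl | rfl | rfl <;> omega
    · rw [show ((N % 256 : ℕ) : ℤ) - p * (3 * z ^ 2 - 2 * z) - (N - p * (3 * z ^ 2 - 2 * z)) =
        ((N % 256 : ℕ) : ℤ) - N by ring]
      omega

theorem RB_scale (N' N : ℤ) (hN : N + 4 = 4 * (N' + 4)) (h : RB 10 N') : RB 10 N := by
  obtain ⟨x, y, z, t, h⟩ := h
  obtain ⟨z', hz⟩ := p8_of (2 * (3 * z - 1)) (by omega)
  obtain ⟨t', ht⟩ := p8_of (2 * (3 * t - 1)) (by omega)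
  refine ⟨2 * x, 2 * y, z', t', ?_⟩
  linarith

theorem RB_easy (p N : ℕ) (h1 : 2 ≤ p) (h2 : p ≤ 12) (h : p % 2 = 1 ∨ N % 2 = 0) : RB p N := by
  induction N using Nat.strong_induction_on with
  | _ N ih =>
    by_cases h3 : p = 10 → N % 256 ≠ 252 ∨ N < 192
    · exact RB_easy' p N h1 h2 h h3
    · push Not at h3
      obtain ⟨rfl, h3, h4⟩ := h3
      have := ih ((N - 12) / 4) (by omega) (by omega)
      exact RB_scale _ _ (by omega) this


theorem rotR (X c : ℤ) (hX : X % 3 = 0) (hc : c % 3 = 0) (hn : ¬ (X % 9 = 0 ∧ c % 9 = 0)) :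
    ∃ X' c' : ℤ, X' ^ 2 + 2 * c' ^ 2 = X ^ 2 + 2 * c ^ 2 ∧ (X' - X) % 4 = 0 ∧ (c' - c) % 2 = 0 ∧
      c' % 3 ≠ 0 := by
  obtain ⟨x, rfl⟩ : ∃ x, X = 3 * x := ⟨X / 3, by omega⟩
  obtain ⟨d, rfl⟩ : ∃ d, c = 3 * d := ⟨c / 3, by omega⟩
  have hx : x % 3 = 0 ∨ x % 3 = 1 ∨ x % 3 = 2 := by omega
  have hd : d % 3 = 0 ∨ d % 3 = 1 ∨ d % 3 = 2 := by omega
  rcases (show (d - 2 * x) % 3 ≠ 0 ∨ (-d - 2 * x) % 3 ≠ 0 by omega) with h | h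
  · exact ⟨-x - 4 * d, d - 2 * x, by ring, by omega, by omega, h⟩
  · exact ⟨-x + 4 * d, -d - 2 * x, by ring, by omega, by omega, h⟩

theorem lemR0 (m : ℕ) : ∀ X c : ℤ, X.natAbs + c.natAbs ≤ m → X % 3 = 0 → c % 3 = 0 →
    ¬ (X = 0 ∧ c = 0) →
    ∃ X' c' : ℤ, X' ^ 2 + 2 * c' ^ 2 = X ^ 2 + 2 * c ^ 2 ∧ (X' - X) % 4 = 0 ∧ (c' - c) % 2 = 0 ∧
      c' % 3 ≠ 0 := by
  induction m with
  | zero => intro X c h1 h2 h3 h4; omega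
  | succ m ih =>
    intro X c h1 h2 h3 h4
    by_cases h9 : X % 9 = 0 ∧ c % 9 = 0
    · obtain ⟨X1, c1, e1, e2, e3, e4⟩ := ih (X / 3) (c / 3) (by omega) (by omega) (by omega) (by omega)
      obtain ⟨X2, c2, g1, g2, g3, g4⟩ := rotR (3 * X1) (3 * c1) (by omega) (by omega) (by omega)
      refine ⟨X2, c2, ?_, by omega, by omega, g4⟩
      obtain ⟨x, rfl⟩ : ∃ x, X = 3 * x := ⟨X / 3, by omega⟩
      obtain ⟨d, rfl⟩ : ∃ d, c = 3 * d := ⟨c / 3, by omega⟩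
      rw [show 3 * x / 3 = x by omega, show 3 * d / 3 = d by omega] at e1
      rw [g1]; linear_combination 9 * e1
    · exact rotR X c h2 h3 h9

theorem lemR1 (a b c : ℤ) (hab : (a + b) % 3 = 0) (hc : c % 3 = 0) (hn : ¬ (a + b = 0 ∧ c = 0)) :
    ∃ a' b' c' : ℤ, a' ^ 2 + b' ^ 2 + c' ^ 2 = a ^ 2 + b ^ 2 + c ^ 2 ∧ (a' - a) % 2 = 0 ∧
      (b' - b) % 2 = 0 ∧ (c' - c) % 2 = 0 ∧ c' % 3 ≠ 0 := by
  obtain ⟨X, d, e1, e2, e3, e4⟩ := lemR0 _ (a + b) c le_rfl hab hc hn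
  obtain ⟨s, hs⟩ : ∃ s, X = a + b + 4 * s := ⟨(X - (a + b)) / 4, by omega⟩
  refine ⟨a + 2 * s, b + 2 * s, d, ?_, by omega, by omega, e3, e4⟩
  subst hs
  have : 2 * ((a + 2 * s) ^ 2 + (b + 2 * s) ^ 2 + d ^ 2) = 2 * (a ^ 2 + b ^ 2 + c ^ 2) := by
    linear_combination e1
  linarith

theorem lemR (a b c : ℤ) (hK : (a ^ 2 + b ^ 2 + c ^ 2) % 3 = 2) (hn : ¬ (a ^ 2 = b ^ 2 ∧ c = 0)) :
    ∃ a' b' c' : ℤ, a' ^ 2 + b' ^ 2 + c' ^ 2 = a ^ 2 + b ^ 2 + c ^ 2 ∧ (a' - a) % 2 = 0 ∧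
      (b' - b) % 2 = 0 ∧ (c' - c) % 2 = 0 ∧ c' % 3 ≠ 0 := by
  by_cases hc : c % 3 = 0
  · obtain ⟨a1, h1, h2, h3⟩ := sgn3 a (-b) (by
      have := sq3 a; have := sq3 b; have := sq3 c; omega)
    obtain ⟨a', b', c', e1, e2, e3, e4, e5⟩ := lemR1 a1 b c (by omega) hc (by
      rintro ⟨u, v⟩; apply hn; refine ⟨?_, v⟩; rw [← h2]
      rw [show a1 = -b by omega]; ring)
    exact ⟨a', b', c', by rw [e1, h2], by rcases h1 with h1 | h1 <;> omega, e3, e4, e5⟩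
  · exact ⟨a, b, c, rfl, by omega, by omega, by omega, hc⟩

theorem rotS (X c : ℤ) (hX : X % 3 = 0) (hc : c % 3 = 0) (hn : ¬ (X % 9 = 0 ∧ c % 9 = 0))
    (hX2 : X % 2 = 0) (hc2 : c % 2 = 0) :
    ∃ X' c' : ℤ, X' ^ 2 + 5 * c' ^ 2 = X ^ 2 + 5 * c ^ 2 ∧ X' % 2 = 0 ∧ c' % 2 = 0 ∧
      X' % 3 ≠ 0 := by
  obtain ⟨x, rfl⟩ : ∃ x, X = 3 * x := ⟨X / 3, by omega⟩
  obtain ⟨d, rfl⟩ : ∃ d, c = 3 * d := ⟨c / 3, by omega⟩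
  have hx : x % 3 = 0 ∨ x % 3 = 1 ∨ x % 3 = 2 := by omega
  have hd : d % 3 = 0 ∨ d % 3 = 1 ∨ d % 3 = 2 := by omega
  rcases (show (2 * x - 5 * d) % 3 ≠ 0 ∨ (2 * x + 5 * d) % 3 ≠ 0 by omega) with h | h
  · exact ⟨2 * x - 5 * d, x + 2 * d, by ring, by omega, by omega, h⟩
  · exact ⟨2 * x + 5 * d, x - 2 * d, by ring, by omega, by omega, h⟩

theorem lemS (m : ℕ) : ∀ X c : ℤ, X.natAbs + c.natAbs ≤ m → X % 3 = 0 → c % 3 = 0 →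
    X % 2 = 0 → c % 2 = 0 → ¬ (X = 0 ∧ c = 0) →
    ∃ X' c' : ℤ, X' ^ 2 + 5 * c' ^ 2 = X ^ 2 + 5 * c ^ 2 ∧ X' % 2 = 0 ∧ c' % 2 = 0 ∧
      X' % 3 ≠ 0 := by
  induction m with
  | zero => intro X c h1 h2 h3 _ _ h4; omega
  | succ m ih =>
    intro X c h1 h2 h3 p1 p2 h4
    by_cases h9 : X % 9 = 0 ∧ c % 9 = 0
    · obtain ⟨X1, c1, e1, e2, e3, e4⟩ := ih (X / 3) (c / 3) (by omega) (by omega) (by omega)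
        (by omega) (by omega) (by omega)
      obtain ⟨X2, c2, g1, g2, g3, g4⟩ := rotS (3 * X1) (3 * c1) (by omega) (by omega) (by omega)
        (by omega) (by omega)
      refine ⟨X2, c2, ?_, by omega, by omega, g4⟩
      obtain ⟨x, rfl⟩ : ∃ x, X = 3 * x := ⟨X / 3, by omega⟩
      obtain ⟨d, rfl⟩ : ∃ d, c = 3 * d := ⟨c / 3, by omega⟩
      rw [show 3 * x / 3 = x by omega, show 3 * d / 3 = d by omega] at e1
      rw [g1]; linear_combination 9 * e1
    · exact rotS X c h2 h3 h9 p1 p2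

theorem sec1 (p : ℤ) (h2 : p % 2 = 1) (h3 : p % 3 ≠ 0) :
    ∃ x y : ℤ, 6 * (x ^ 2 + 5 * y ^ 2) = p ^ 2 + 5 := by
  rcases (show p % 6 = 5 ∨ p % 6 = 1 by omega) with h | h
  · obtain ⟨y, rfl⟩ : ∃ y, p = 6 * y - 1 := ⟨(p + 1) / 6, by omega⟩
    exact ⟨1 - y, y, by ring⟩
  · obtain ⟨y, rfl⟩ : ∃ y, p = -(6 * y - 1) := ⟨(1 - p) / 6, by omega⟩
    exact ⟨1 - y, y, by ring⟩

theorem sec5 (p : ℤ) (h2 : p % 2 = 1) (h3 : p % 3 ≠ 0) :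
    ∃ x y : ℤ, 6 * (x ^ 2 + 5 * y ^ 2) = p ^ 2 + 125 := by
  rcases (show p % 6 = 1 ∨ p % 6 = 5 by omega) with h | h
  · obtain ⟨y, rfl⟩ : ∃ y, p = 6 * y - 5 := ⟨(p + 5) / 6, by omega⟩
    exact ⟨5 - y, y, by ring⟩
  · obtain ⟨y, rfl⟩ : ∃ y, p = -(6 * y - 5) := ⟨(5 - p) / 6, by omega⟩
    exact ⟨5 - y, y, by ring⟩

/-- three squares, k ≡ 1 mod 4: the third one is odd, the others even -/
theorem three_sq_1mod4 (k : ℤ) (h0 : 0 ≤ k) (h : k % 4 = 1) :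
    ∃ a b c : ℤ, a ^ 2 + b ^ 2 + c ^ 2 = k ∧ a % 2 = 0 ∧ b % 2 = 0 ∧ c % 2 = 1 := by
  obtain ⟨a, b, c, h1⟩ := three_sq k h0 (by omega)
  have := sq16 a; have := sq16 b; have := sq16 c
  rcases (show (a % 2 = 0 ∧ b % 2 = 0 ∧ c % 2 = 1) ∨ (a % 2 = 0 ∧ c % 2 = 0 ∧ b % 2 = 1) ∨
    (c % 2 = 0 ∧ b % 2 = 0 ∧ a % 2 = 1) by omega) with h | h | h
  · exact ⟨a, b, c, h1, h⟩
  · exact ⟨a, c, b, by linarith, h⟩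
  · exact ⟨c, b, a, by linarith, h⟩

theorem A6_s12 (n : ℤ) (h0 : 0 ≤ n) (hn : n % 2 = 1) : RA 6 n := by
  obtain ⟨a, b, c, h1, ha, hb, hc⟩ := three_sq_1mod4 (6 * n - 1) (by omega) (by omega)
  obtain ⟨a, b, c, h2, ha', hb', hc', h3⟩ := lemR a b c (by omega) (by rintro ⟨-, h⟩; omega)
  rw [h1] at h2
  have key : ∀ a b : ℤ, a ^ 2 + b ^ 2 + c ^ 2 = 6 * n - 1 → a % 6 = 0 → b % 2 = 0 → b % 3 ≠ 0 →
      RA 6 n := by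
    intro a b h2 ha hb hb3
    obtain ⟨z, rfl⟩ : ∃ z, a = 6 * z := ⟨a / 6, by omega⟩
    obtain ⟨u, rfl⟩ : ∃ u, b = 2 * u := ⟨b / 2, by omega⟩
    obtain ⟨t, ht⟩ := p8_of u (by omega)
    obtain ⟨x, y, hxy⟩ := sec1 c (by omega) h3
    exact ⟨x, y, z, t, by linarith⟩
  have := sq3 a; have := sq3 b; have := sq3 c
  rcases (show (a % 3 = 0 ∧ b % 3 ≠ 0) ∨ (b % 3 = 0 ∧ a % 3 ≠ 0) by omega) with h | h
  · exact key a b h2 (by omega) (by omega) h.2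
  · exact key b a (by linarith) (by omega) (by omega) h.2

theorem not_dvd3 (a b c K : ℤ) (h : a ^ 2 + b ^ 2 + c ^ 2 = K) (h3 : K % 3 = 0) (h9 : K % 9 ≠ 0) :
    a % 3 ≠ 0 ∧ b % 3 ≠ 0 ∧ c % 3 ≠ 0 := by
  by_contra hcon
  have hh : a % 3 = 0 ∧ b % 3 = 0 ∧ c % 3 = 0 := by
    have := sq3 a; have := sq3 b; have := sq3 c; omega
  obtain ⟨x, rfl⟩ : ∃ x, a = 3 * x := ⟨a / 3, by omega⟩
  obtain ⟨y, rfl⟩ : ∃ y, b = 3 * y := ⟨b / 3, by omega⟩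
  obtain ⟨z, rfl⟩ : ∃ z, c = 3 * z := ⟨c / 3, by omega⟩
  have : K = 9 * (x ^ 2 + y ^ 2 + z ^ 2) := by rw [← h]; ring
  omega

/-- pick section 1 or 5 -/
theorem secj (e j : ℤ) (hj : j = 0 ∨ j = 1) (p : ℤ) (h2 : p % 2 = 1) (h3 : p % 3 ≠ 0)
    (he : p ^ 2 + 5 + 120 * j = 6 * e) : ∃ x y : ℤ, x ^ 2 + 5 * y ^ 2 = e := by
  rcases hj with rfl | rfl
  · obtain ⟨x, y, h⟩ := sec1 p h2 h3
    exact ⟨x, y, by linarith⟩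
  · obtain ⟨x, y, h⟩ := sec5 p h2 h3
    exact ⟨x, y, by linarith⟩

theorem B2 (n : ℤ) (h0 : 20 ≤ n) (hn : n % 2 = 1) : RB 2 n := by
  obtain ⟨j, hj, h9⟩ : ∃ j : ℤ, (j = 0 ∨ j = 1) ∧ (6 * n + 3 - 120 * j) % 9 ≠ 0 := by
    by_cases h : (6 * n + 3) % 9 = 0
    · exact ⟨1, by omega, by omega⟩
    · exact ⟨0, by omega, by omega⟩
  obtain ⟨a, b, c, h1, ha, hb, hc⟩ := three_sq_1mod4 (6 * n + 3 - 120 * j) (by omega) (by omega)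
  obtain ⟨a3, b3, c3⟩ := not_dvd3 _ _ _ _ h1 (by omega) h9
  obtain ⟨u, rfl⟩ : ∃ u, a = 2 * u := ⟨a / 2, by omega⟩
  obtain ⟨v, rfl⟩ : ∃ v, b = 2 * v := ⟨b / 2, by omega⟩
  obtain ⟨z, hz⟩ := p8_of u (by omega)
  obtain ⟨t, ht⟩ := p8_of v (by omega)
  obtain ⟨x, y, hxy⟩ := secj (n - 2 * (3 * z ^ 2 - 2 * z) - 2 * (3 * t ^ 2 - 2 * t)) j hj c hc c3
    (by linarith)
  exact ⟨x, y, z, t, by linarith⟩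

theorem B8_s12 (n : ℤ) (h0 : 20 ≤ n) (hn : n % 2 = 1) : RB 8 n := by
  obtain ⟨j, hj, h9⟩ : ∃ j : ℤ, (j = 0 ∨ j = 1) ∧ (6 * n + 15 - 120 * j) % 9 ≠ 0 := by
    by_cases h : (6 * n + 15) % 9 = 0
    · exact ⟨1, by omega, by omega⟩
    · exact ⟨0, by omega, by omega⟩
  have fin : ∀ a b c : ℤ, a ^ 2 + b ^ 2 + c ^ 2 = 6 * n + 15 - 120 * j → a % 2 = 0 → b % 4 = 0 →
      c % 2 = 1 → RB 8 n := by
    intro a b c h1 ha hb hc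
    obtain ⟨a3, b3, c3⟩ := not_dvd3 _ _ _ _ h1 (by omega) h9
    obtain ⟨u, rfl⟩ : ∃ u, a = 2 * u := ⟨a / 2, by omega⟩
    obtain ⟨v, rfl⟩ : ∃ v, b = 4 * v := ⟨b / 4, by omega⟩
    obtain ⟨z, hz⟩ := p8_of u (by omega)
    obtain ⟨t, ht⟩ := p8_of v (by omega)
    obtain ⟨x, y, hxy⟩ := secj (n - 2 * (3 * z ^ 2 - 2 * z) - 8 * (3 * t ^ 2 - 2 * t)) j hj c hc c3
      (by linarith)
    exact ⟨x, y, z, t, by linarith⟩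
  obtain ⟨a, b, c, h1, ha, hb, hc⟩ := three_sq_1mod4 (6 * n + 15 - 120 * j) (by omega) (by omega)
  obtain ⟨a3, b3, c3⟩ := not_dvd3 _ _ _ _ h1 (by omega) h9
  rcases (show b % 4 = 0 ∨ a % 4 = 0 ∨ (a % 4 = 2 ∧ b % 4 = 2) by omega) with h | h | h
  · exact fin a b c h1 ha h hc
  · exact fin b a c (by linarith) hb h hc
  · obtain ⟨a', g1, g2, g3⟩ := sgn3 a c (by omega)
    obtain ⟨b', k1, k2, k3⟩ := sgn3 b c (by omega)
    obtain ⟨s, hs⟩ : ∃ s, a' + b' + c = 3 * s := ⟨(a' + b' + c) / 3, by omega⟩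
    have hs2 : s % 2 = 1 := by rcases g1 with g1 | g1 <;> rcases k1 with k1 | k1 <;> omega
    refine fin (a' - 2 * s) (b' - 2 * s) (c - 2 * s) ?_ ?_ ?_ (by omega)
    · rw [← h1, ← g2, ← k2]
      linear_combination -4 * s * hs
    · rcases g1 with g1 | g1 <;> omega
    · rcases k1 with k1 | k1 <;> omega

theorem B4_s12 (n : ℤ) (h0 : 160 ≤ n) (hn : n % 2 = 1) : RB 4 n := by
  obtain ⟨j, hj, hsq⟩ : ∃ j : ℤ, (j = 0 ∨ j = 1) ∧ ∀ s : ℤ, s ^ 2 ≠ 6 * n + 7 - 120 * j := by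
    by_contra hcon
    push Not at hcon
    obtain ⟨s, hs⟩ := hcon 0 (by omega)
    obtain ⟨r, hr⟩ := hcon 1 (by omega)
    rw [← sq_abs] at hs hr
    have := sq16 |s|
    have := sq16 |r|
    have h1 := abs_nonneg s
    have h2 := abs_nonneg r
    have h3 : 31 < |s| := by nlinarith
    have h4 : |r| < |s| := by nlinarith
    have h5 : |r| ≤ |s| - 2 := by omega
    nlinarith
  have hK1 : (6 * n + 7 - 120 * j) % 12 = 1 := by omega
  have hK0 : 0 ≤ 6 * n + 7 - 120 * j := by omega
  obtain ⟨a, b, c, h1⟩ := three_sq (2 * (6 * n + 7 - 120 * j)) (by omega) (by omega)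
  have fin : ∀ p q v : ℤ, p ^ 2 + q ^ 2 + 8 * v ^ 2 = 6 * n + 7 - 120 * j → p % 3 ≠ 0 → q % 3 ≠ 0 →
      v % 3 ≠ 0 → p % 2 = 1 → q % 2 = 0 → RB 4 n := by
    intro p q v h p3 q3 v3 p2 q2
    obtain ⟨u, rfl⟩ : ∃ u, q = 2 * u := ⟨q / 2, by omega⟩
    obtain ⟨z, hz⟩ := p8_of u (by omega)
    obtain ⟨t, ht⟩ := p8_of v (by omega)
    obtain ⟨x, y, hxy⟩ := secj (n - 2 * (3 * z ^ 2 - 2 * z) - 4 * (3 * t ^ 2 - 2 * t)) j hj p p2 p3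
      (by linarith)
    exact ⟨x, y, z, t, by linarith⟩
  have key : ∀ a b c : ℤ, a ^ 2 + b ^ 2 + c ^ 2 = 2 * (6 * n + 7 - 120 * j) → a % 2 = 1 →
      b % 2 = 1 → c % 2 = 0 → RB 4 n := by
    intro a b c h ha hb hc
    obtain ⟨a', b', c', e1, e2, e3, e4, e5⟩ := lemR a b c (by omega) (by
      rintro ⟨u, v⟩
      apply hsq b
      rw [u, v] at h
      linarith)
    rw [h] at e1
    have c4 : c' % 4 = 0 := by
      have := sq16 a'; have := sq16 b'; have := sq16 c'; omega
    obtain ⟨v, rfl⟩ : ∃ v, c' = 4 * v := ⟨c' / 4, by omega⟩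
    obtain ⟨p, hp⟩ : ∃ p, a' + b' = 2 * p := ⟨(a' + b') / 2, by omega⟩
    obtain ⟨q, rfl⟩ : ∃ q, b' = p - q := ⟨p - b', by omega⟩
    have ha' : a' = p + q := by omega
    subst ha'
    have e6 : p ^ 2 + q ^ 2 + 8 * v ^ 2 = 6 * n + 7 - 120 * j := by linarith
    have hpq : p % 3 ≠ 0 ∧ q % 3 ≠ 0 := by
      have := sq3 p; have := sq3 q; have := sq3 v; omega
    rcases (show (p % 2 = 1 ∧ q % 2 = 0) ∨ (q % 2 = 1 ∧ p % 2 = 0) by omega) with g | g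
    · exact fin p q v e6 hpq.1 hpq.2 (by omega) g.1 g.2
    · exact fin q p v (by linarith) hpq.2 hpq.1 (by omega) g.1 g.2
  have := sq16 a; have := sq16 b; have := sq16 c
  rcases (show (a % 2 = 1 ∧ b % 2 = 1 ∧ c % 2 = 0) ∨ (a % 2 = 1 ∧ c % 2 = 1 ∧ b % 2 = 0) ∨
    (c % 2 = 1 ∧ b % 2 = 1 ∧ a % 2 = 0) by omega) with h | h | h
  · exact key a b c h1 h.1 h.2.1 h.2.2
  · exact key a c b (by linarith) h.1 h.2.1 h.2.2
  · exact key c b a (by linarith) h.1 h.2.1 h.2.2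

theorem A10_s12 (n : ℤ) (h0 : 16 ≤ n) (hn : n % 2 = 1) : RA 10 n := by
  have key : ∀ t : ℤ, 2 * (3 * t ^ 2 - 2 * t) ≤ n → ((n - 2 * (3 * t ^ 2 - 2 * t)) % 5 = 1 ∨
      (n - 2 * (3 * t ^ 2 - 2 * t)) % 5 = 4) → RA 10 n := by
    intro t h1 h2
    obtain ⟨x, y, z, h⟩ := rep_1_5_10 _ (by linarith) (by
      rw [Int.sub_mul_emod_self_left]; exact hn) h2
    exact ⟨x, y, z, t, by linarith⟩
  rcases (show n % 5 = 0 ∨ n % 5 = 1 ∨ n % 5 = 2 ∨ n % 5 = 3 ∨ n % 5 = 4 by omega) with h | h | h | h | h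
  · exact key 2 (by omega) (by omega)
  · exact key 0 (by omega) (by omega)
  · exact key 2 (by omega) (by omega)
  · exact key 1 (by omega) (by omega)
  · exact key 0 (by omega) (by omega)


theorem A8_s12 (n : ℤ) (h0 : 20 ≤ n) (hn : n % 2 = 1) : RA 8 n := by
  have key : ∀ a b c y : ℤ, a ^ 2 + b ^ 2 + c ^ 2 = 3 * n + 2 - 15 * y ^ 2 →
      (a + b + 2 * c) % 12 = 0 → (a - b) % 3 ≠ 0 → RA 8 n := by
    intro a b c y h h12 h3
    obtain ⟨z, hz⟩ : ∃ z, a + b + 2 * c = 12 * z := ⟨(a + b + 2 * c) / 12, by omega⟩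
    obtain ⟨w, hw⟩ : ∃ w, a = b + 2 * w := ⟨(a - b) / 2, by omega⟩
    obtain ⟨t, ht⟩ := p8_of w (by omega)
    have hc : c = 6 * z - b - w := by omega
    subst hw; subst hc
    exact ⟨b + w - 2 * z, y, z, t, by linarith⟩
  have hex : ∃ y : ℤ, (y = 0 ∨ y = 2) ∧ ((3 * n + 2 - 15 * y ^ 2) % 8 = 3 ∨
      (3 * n + 2 - 15 * y ^ 2) % 8 = 5) := by
    by_cases h : (3 * n + 2) % 8 = 3 ∨ (3 * n + 2) % 8 = 5
    · exact ⟨0, by omega, by omega⟩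
    · exact ⟨2, by omega, by omega⟩
  obtain ⟨y, hy, h⟩ := hex
  have hk0 : 0 ≤ 3 * n + 2 - 15 * y ^ 2 := by rcases hy with rfl | rfl <;> omega
  rcases h with h | h
  · obtain ⟨a, b, c, h1⟩ := three_sq _ hk0 (by omega)
    have hodd : a % 2 = 1 ∧ b % 2 = 1 ∧ c % 2 = 1 := by
      have := sq16 a; have := sq16 b; have := sq16 c; omega
    have k2 : ∀ P T S : ℤ, P ^ 2 + T ^ 2 + S ^ 2 = 3 * n + 2 - 15 * y ^ 2 → P % 2 = 1 → T % 2 = 1 →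
        S % 2 = 1 → P % 3 = 0 → T % 3 ≠ 0 → S % 3 ≠ 0 → RA 8 n := by
      intro P T S h p2 t2 s2 p3 t3 s3
      obtain ⟨S', g1, g2, g3⟩ := sgn3 S T (by omega)
      rcases (show (P + T + 2 * S') % 4 = 0 ∨ (-P + T + 2 * S') % 4 = 0 by omega) with g | g
      · exact key P T S' y (by rw [g2, h]) (by omega) (by omega)
      · exact key (-P) T S' y (by rw [g2, ← h]; ring) (by omega) (by omega)
    have := sq3 a; have := sq3 b; have := sq3 c
    rcases (show (a % 3 = 0 ∧ b % 3 ≠ 0 ∧ c % 3 ≠ 0) ∨ (b % 3 = 0 ∧ a % 3 ≠ 0 ∧ c % 3 ≠ 0) ∨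
      (c % 3 = 0 ∧ b % 3 ≠ 0 ∧ a % 3 ≠ 0) by omega) with g | g | g
    · exact k2 a b c h1 (by omega) (by omega) (by omega) g.1 g.2.1 g.2.2
    · exact k2 b a c (by linarith) (by omega) (by omega) (by omega) g.1 g.2.1 g.2.2
    · exact k2 c b a (by linarith) (by omega) (by omega) (by omega) g.1 g.2.1 g.2.2
  · obtain ⟨a, b, c, h1, ha, hb, hc⟩ := three_sq_1mod4 _ hk0 (by omega)
    have hab : (a + b) % 4 = 2 := by
      have := sq16 a; have := sq16 b; have := sq16 c; omega
    have := sq3 a; have := sq3 b; have := sq3 c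
    rcases (show (a % 3 = 0 ∧ b % 3 ≠ 0 ∧ c % 3 ≠ 0) ∨ (b % 3 = 0 ∧ a % 3 ≠ 0 ∧ c % 3 ≠ 0) ∨
      (c % 3 = 0 ∧ b % 3 ≠ 0 ∧ a % 3 ≠ 0) by omega) with g | g | g
    · obtain ⟨c', g1, g2, g3⟩ := sgn3 c b (by omega)
      exact key a b c' y (by rw [g2, h1]) (by omega) (by omega)
    · obtain ⟨c', g1, g2, g3⟩ := sgn3 c a (by omega)
      exact key a b c' y (by rw [g2, h1]) (by omega) (by omega)
    · obtain ⟨a', g1, g2, g3⟩ := sgn3 a (-b) (by omega)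
      exact key a' b c y (by rw [g2, h1]) (by omega) (by omega)

set_option maxHeartbeats 1000000 in
theorem A12 (n : ℤ) (h0 : 245 ≤ n) (hn : n % 2 = 1) : RA 12 n := by
  obtain ⟨y, k, hk0, hk, hkm⟩ : ∃ y k : ℤ, 0 ≤ k ∧ k = 3 * n + 2 - 15 * y ^ 2 ∧
      ((k % 4 = 2 ∧ k % 16 ≠ 10) ∨ k % 8 = 4 ∨ (k % 16 = 8 ∧ k % 64 ≠ 40)) := by
    rcases (show (((3 * n - 13) % 4 = 2 ∧ (3 * n - 13) % 16 ≠ 10) ∨ (3 * n - 13) % 8 = 4 ∨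
        ((3 * n - 13) % 16 = 8 ∧ (3 * n - 13) % 64 ≠ 40)) ∨
      (((3 * n - 133) % 4 = 2 ∧ (3 * n - 133) % 16 ≠ 10) ∨ (3 * n - 133) % 8 = 4 ∨
        ((3 * n - 133) % 16 = 8 ∧ (3 * n - 133) % 64 ≠ 40)) ∨
      (((3 * n - 373) % 16 = 8 ∧ (3 * n - 373) % 64 ≠ 40)) ∨
      (((3 * n - 733) % 16 = 8 ∧ (3 * n - 733) % 64 ≠ 40)) by omega) with h | h | h | h
    · exact ⟨1, 3 * n - 13, by omega, by ring, h⟩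
    · exact ⟨3, 3 * n - 133, by omega, by ring, h⟩
    · exact ⟨5, 3 * n - 373, by omega, by ring, Or.inr (Or.inr h)⟩
    · exact ⟨7, 3 * n - 733, by omega, by ring, Or.inr (Or.inr h)⟩
  obtain ⟨a, b, c, h1⟩ : ∃ a b c : ℤ, 2 * (a ^ 2 + b ^ 2 + c ^ 2) = 3 * k := by
    by_cases h8 : k % 8 = 0
    · obtain ⟨a, b, c, h⟩ := three_sq (3 * (k / 8)) (by omega) (by omega)
      exact ⟨2 * a, 2 * b, 2 * c, by
        have : k = 8 * (k / 8) := by omega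
        linarith⟩
    · obtain ⟨a, b, c, h⟩ := three_sq (3 * (k / 2)) (by omega) (by omega)
      exact ⟨a, b, c, by
        have : k = 2 * (k / 2) := by omega
        linarith⟩
  have h3 : (a % 3 = 0 ↔ b % 3 = 0) ∧ (a % 3 = 0 ↔ c % 3 = 0) := by
    have := sq3 a; have := sq3 b; have := sq3 c; omega
  obtain ⟨b', -, g2, g3⟩ := sgn3 b a (by omega)
  obtain ⟨c', -, e2, e3⟩ := sgn3 c (-a) (by omega)
  rw [← g2, ← e2] at h1
  obtain ⟨x, hx⟩ : ∃ x, a = b' + 3 * x := ⟨(a - b') / 3, by omega⟩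
  obtain ⟨w, hw⟩ : ∃ w, c' = a + b' - 3 * w := ⟨(a + b' - c') / 3, by omega⟩
  obtain ⟨r, hr⟩ : ∃ r, r = a + b' - 2 * w := ⟨_, rfl⟩
  have hk2 : k = 3 * x ^ 2 + 2 * w ^ 2 + r ^ 2 := by
    subst hr; subst hw; subst hx; linarith
  have hw3 : w % 3 ≠ 0 ∧ r % 3 = 0 := by
    have := sq3 w; have := sq3 r; omega
  obtain ⟨t, ht⟩ := p8_of w hw3.1
  have fin : ∀ x r : ℤ, k = 3 * x ^ 2 + 2 * w ^ 2 + r ^ 2 → r % 3 = 0 → r % 2 = 0 → RA 12 n := by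
    intro x r h h3 h2
    obtain ⟨z, rfl⟩ : ∃ z, r = 6 * z := ⟨r / 6, by omega⟩
    exact ⟨x, y, z, t, by linarith⟩
  by_cases hr2 : r % 2 = 0
  · exact fin x r hk2 hw3.2 hr2
  · have hx2 : x % 2 = 1 := by
      have := sq16 w; have := sq16 r; have := sq16 x; omega
    have fin2 : ∀ x : ℤ, k = 3 * x ^ 2 + 2 * w ^ 2 + r ^ 2 → (r - 3 * x) % 4 = 0 → RA 12 n := by
      intro x h h4
      obtain ⟨m, hm⟩ : ∃ m, r = 3 * x + 4 * m := ⟨(r - 3 * x) / 4, by omega⟩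
      refine fin (2 * x + 2 * m) (2 * m) ?_ (by omega) (by omega)
      rw [h, hm]; ring
    rcases (show (r - 3 * x) % 4 = 0 ∨ (r - 3 * (-x)) % 4 = 0 by omega) with g | g
    · exact fin2 x hk2 g
    · exact fin2 (-x) (by rw [hk2]; ring) g

theorem B6a (n : ℤ) (h0 : 2 ≤ n) (hn : n % 4 = 3) : RB 6 n := by
  obtain ⟨X, a, Y, h1⟩ := corA0 (6 * n - 11) (by omega) (by omega)
  have hodd : X % 2 = 1 ∧ a % 2 = 1 ∧ Y % 2 = 1 := by
    have := sq16 X; have := sq16 a; have := sq16 Y; omega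
  have key : ∀ X a : ℤ, X ^ 2 + a ^ 2 + 5 * Y ^ 2 = 6 * n - 11 → X % 2 = 1 → a % 2 = 1 → a % 3 ≠ 0 →
      RB 6 n := by
    intro X a h x2 a2 a3
    obtain ⟨X', g1, g2, g3⟩ := sgn3 X Y (by
      have := sq3 X; have := sq3 a; have := sq3 Y; omega)
    obtain ⟨y, hy⟩ : ∃ y, X' = Y + 6 * y := ⟨(X' - Y) / 6, by omega⟩
    rw [← g2] at h
    subst hy
    rcases (show a % 4 = 1 ∨ a % 4 = 3 by omega) with g | g
    · obtain ⟨v, rfl⟩ : ∃ v, a = 4 * v - 3 := ⟨(a + 3) / 4, by omega⟩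
      obtain ⟨z, hz⟩ := p8_of (v - 3) (by omega)
      obtain ⟨t, ht⟩ := p8_of v (by omega)
      exact ⟨y + Y, y, z, t, by linarith⟩
    · obtain ⟨v, rfl⟩ : ∃ v, a = 4 * v + 3 := ⟨(a - 3) / 4, by omega⟩
      obtain ⟨z, hz⟩ := p8_of (v + 3) (by omega)
      obtain ⟨t, ht⟩ := p8_of v (by omega)
      exact ⟨y + Y, y, z, t, by linarith⟩
  by_cases ha : a % 3 = 0
  · exact key a X (by linarith) hodd.2.1 hodd.1 (by
      have := sq3 X; have := sq3 a; have := sq3 Y; omega)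
  · exact key X a h1 hodd.1 hodd.2.1 ha

theorem B6b (n : ℤ) (h0 : 18 ≤ n) (hn : n % 4 = 1) : RB 6 n := by
  have key : ∀ a b c y : ℤ, a ^ 2 + b ^ 2 + c ^ 2 = 3 * n + 8 - 15 * y ^ 2 → (a - b) % 2 = 0 →
      (a + b + 2 * c) % 6 = 0 → (a + b + 2 * c) % 9 ≠ 0 → (a - b) % 3 ≠ 0 → RB 6 n := by
    intro a b c y h h2 h6 h9 h3
    obtain ⟨v, hv⟩ : ∃ v, a + b + 2 * c = 6 * v := ⟨(a + b + 2 * c) / 6, by omega⟩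
    obtain ⟨w, hw⟩ : ∃ w, a = b + 2 * w := ⟨(a - b) / 2, by omega⟩
    obtain ⟨z, hz⟩ := p8_of w (by omega)
    obtain ⟨t, ht⟩ := p8_of v (by omega)
    have hc : c = 3 * v - b - w := by omega
    subst hw; subst hc
    exact ⟨b + w - v, y, z, t, by linarith⟩
  have hex : ∃ y : ℤ, (y = 0 ∨ y = 2) ∧ (3 * n + 8 - 15 * y ^ 2) % 8 = 3 := by
    by_cases h : (3 * n + 8) % 8 = 3
    · exact ⟨0, by omega, by omega⟩
    · exact ⟨2, by omega, by omega⟩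
  obtain ⟨y, hy, h⟩ := hex
  have hk0 : 0 ≤ 3 * n + 8 - 15 * y ^ 2 := by rcases hy with rfl | rfl <;> omega
  obtain ⟨a, b, c, h1⟩ := three_sq _ hk0 (by omega)
  have hodd : a % 2 = 1 ∧ b % 2 = 1 ∧ c % 2 = 1 := by
    have := sq16 a; have := sq16 b; have := sq16 c; omega
  have k2 : ∀ P T S : ℤ, P ^ 2 + T ^ 2 + S ^ 2 = 3 * n + 8 - 15 * y ^ 2 → P % 2 = 1 → T % 2 = 1 →
      S % 2 = 1 → P % 3 = 0 → T % 3 ≠ 0 → S % 3 ≠ 0 → RB 6 n := by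
    intro P T S h p2 t2 s2 p3 t3 s3
    obtain ⟨S', g1, g2, g3⟩ := sgn3 S T (by omega)
    have hS2 : S' % 2 = 1 := by omega
    clear g1
    rcases (show (P + T + 2 * S') % 9 ≠ 0 ∨ (-P + T + 2 * S') % 9 ≠ 0 ∨ (P + S' + 2 * T) % 9 ≠ 0
      by omega) with g | g | g
    · exact key P T S' y (by rw [g2, h]) (by omega) (by omega) g (by omega)
    · exact key (-P) T S' y (by rw [g2, ← h]; ring) (by omega) (by omega) g (by omega)
    · exact key P S' T y (by rw [g2, ← h]; ring) (by omega) (by omega) g (by omega)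
  have := sq3 a; have := sq3 b; have := sq3 c
  rcases (show (a % 3 = 0 ∧ b % 3 ≠ 0 ∧ c % 3 ≠ 0) ∨ (b % 3 = 0 ∧ a % 3 ≠ 0 ∧ c % 3 ≠ 0) ∨
    (c % 3 = 0 ∧ b % 3 ≠ 0 ∧ a % 3 ≠ 0) by omega) with g | g | g
  · exact k2 a b c h1 (by omega) (by omega) (by omega) g.1 g.2.1 g.2.2
  · exact k2 b a c (by linarith) (by omega) (by omega) (by omega) g.1 g.2.1 g.2.2
  · exact k2 c b a (by linarith) (by omega) (by omega) (by omega) g.1 g.2.1 g.2.2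

theorem B10_s12 (n : ℤ) (h0 : 16 ≤ n) (hn : n % 2 = 1) : RB 10 n := by
  have key : ∀ x y w c : ℤ, x ^ 2 + 5 * y ^ 2 + w ^ 2 + 5 * c ^ 2 = n + 4 → (w - c) % 2 = 0 →
      (w - c) % 3 ≠ 0 → RB 10 n := by
    intro x y w c h h2 h3
    obtain ⟨v, rfl⟩ : ∃ v, w = c + 2 * v := ⟨(w - c) / 2, by omega⟩
    obtain ⟨z, hz⟩ := p8_of (v + 3 * c) (by omega)
    obtain ⟨t, ht⟩ := p8_of v (by omega)
    exact ⟨x, y, z, t, by linarith⟩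
  rcases (show n % 4 = 3 ∨ n % 4 = 1 by omega) with h | h
  · obtain ⟨X, W, y, h1⟩ := corA0 (n - 1) (by omega) (by omega)
    have k2 : ∀ x w : ℤ, x ^ 2 + w ^ 2 + 5 * y ^ 2 = n - 1 → w % 2 = 1 → RB 10 n := by
      intro x w h h2
      by_cases h3 : w % 3 = 1
      · exact key x y (-w) 1 (by linarith) (by omega) (by omega)
      · exact key x y w 1 (by linarith) (by omega) (by omega)
    rcases (show W % 2 = 1 ∨ X % 2 = 1 by
      have := sq16 X; have := sq16 W; have := sq16 y; omega) with g | g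
    · exact k2 X W h1 g
    · exact k2 W X (by linarith) g
  · obtain ⟨X, W, y, h1⟩ := corA0 (n - 16) (by omega) (by omega)
    have k2 : ∀ x w : ℤ, x ^ 2 + w ^ 2 + 5 * y ^ 2 = n - 16 → w % 2 = 0 → RB 10 n := by
      intro x w h h2
      by_cases h3 : w % 3 = 2
      · exact key x y (-w) 2 (by linarith) (by omega) (by omega)
      · exact key x y w 2 (by linarith) (by omega) (by omega)
    rcases (show W % 2 = 0 ∨ X % 2 = 0 by
      have := sq16 X; have := sq16 W; have := sq16 y; omega) with g | g
    · exact k2 X W h1 g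
    · exact k2 W X (by linarith) g

theorem B12k (n z : ℤ) (h0 : 0 ≤ n + 4 - 2 * (3 * z ^ 2 - 2 * z))
    (h12 : (n + 4 - 2 * (3 * z ^ 2 - 2 * z)) % 12 = 1)
    (hs : ∀ s : ℤ, n + 4 - 2 * (3 * z ^ 2 - 2 * z) ≠ s ^ 2) : RB 12 n := by
  obtain ⟨k, hk⟩ : ∃ k, k = n + 4 - 2 * (3 * z ^ 2 - 2 * z) := ⟨_, rfl⟩
  rw [← hk] at h0 h12 hs
  have fin : ∀ A B C : ℤ, A ^ 2 + B ^ 2 + 5 * C ^ 2 = k → B % 2 = 0 → B % 3 ≠ 0 → RB 12 n := by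
    intro A B C h h2 h3
    obtain ⟨v, rfl⟩ : ∃ v, B = 2 * v := ⟨B / 2, by omega⟩
    obtain ⟨t, ht⟩ := p8_of v (by omega)
    exact ⟨A, C, z, t, by linarith⟩
  obtain ⟨A, B, C, h1⟩ := corA0 k h0 (by omega)
  have k2 : ∀ A B : ℤ, A ^ 2 + B ^ 2 + 5 * C ^ 2 = k → A % 2 = 1 → B % 2 = 0 → C % 2 = 0 →
      RB 12 n := by
    intro A B h a2 b2 c2
    by_cases hB : B % 3 = 0
    · obtain ⟨B', C', e1, e2, e3, e4⟩ := lemS _ B C le_rfl hB (by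
        have := sq3 A; have := sq3 B; have := sq3 C; omega) b2 c2 (by
        rintro ⟨u, v⟩; subst u; subst v; exact hs A (by linarith))
      exact fin A B' C' (by linarith) e2 e4
    · exact fin A B C h b2 hB
  have h2 := sq16 A; have h3 := sq16 B; have h4 := sq16 C
  rcases (show (C % 2 = 1 ∧ A % 2 = 0 ∧ B % 2 = 0) ∨ (C % 2 = 0 ∧ A % 2 = 1 ∧ B % 2 = 0) ∨
    (C % 2 = 0 ∧ A % 2 = 0 ∧ B % 2 = 1) by omega) with g | g | g
  · by_cases hB : B % 3 = 0
    · exact fin B A C (by linarith) g.2.1 (by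
        have := sq3 A; have := sq3 B; have := sq3 C; omega)
    · exact fin A B C h1 g.2.2 hB
  · exact k2 A B h1 g.2.1 g.2.2 g.1
  · exact k2 B A (by linarith) g.2.2 g.2.1 g.1


theorem tabA3a : ((List.range 130).all fun i => qA 12 (2 * i + 1)) = true := by decide +kernel
theorem tabA3b : ([6, 8, 10].all fun p => (List.range 10).all fun i => qA p (2 * i + 1)) = true := by
  decide +kernel
theorem tabB3a : ([4, 12].all fun p => (List.range 100).all fun i => qB p (2 * i + 1)) = true := by
  decide +kernel
theorem tabB3b : ([2, 6, 8, 10].all fun p => (List.range 10).all fun i => qB p (2 * i + 1)) = true := by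
  decide +kernel
theorem tabSb : ((List.range 50).all fun s => !(Nat.beq (s * s % 12) 1) || ((List.range 50).all fun r =>
    ([(16, 96), (42, 24), (32, 48), (10, 120), (0, 192), (2, 168)] : List (ℕ × ℕ)).all fun p =>
    !(Nat.beq (s * s) (r * r + p.2)) || (Nat.ble (s * s + p.1) 203 ||
    [641, 299, 971, 361, 2401, 291, 531, 1851].any fun j => Nat.beq (s * s + p.1) j))) = true := by
  decide +kernel

theorem tabS (s r a d : ℕ) (hs : s < 50) (hr : r < 50) (had : (a, d) ∈ ([(16, 96), (42, 24), (32, 48),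
    (10, 120), (0, 192), (2, 168)] : List (ℕ × ℕ))) (h : s * s = r * r + d) (h12 : s * s % 12 = 1) :
    s * s + a ≤ 203 ∨ s * s + a ∈ ([641, 299, 971, 361, 2401, 291, 531, 1851] : List ℕ) := by
  have h1 := List.all_eq_true.mp tabSb s (List.mem_range.mpr hs)
  rw [h12, h] at h1
  have h2 := List.all_eq_true.mp (show _ = true from h1) r (List.mem_range.mpr hr)
  have h3 := List.all_eq_true.mp h2 (a, d) had
  simp only [Nat.beq_refl, Bool.not_true, Bool.false_or, Bool.or_eq_true, List.any_eq_true,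
    Nat.beq_eq, Nat.ble_eq] at h3
  rw [h]
  rcases h3 with h3 | ⟨j, hj, h3⟩
  · exact Or.inl h3
  · exact Or.inr (h3 ▸ hj)

theorem tabA3 (p N : ℕ) (hp : p ∈ [6, 8, 10, 12]) (h2 : N % 2 = 1)
    (h : N < 260 ∧ (p = 12 ∨ N < 20)) : qA p N = true := by
  have e : N = 2 * (N / 2) + 1 := by omega
  rw [e]
  by_cases h12 : p = 12
  · rw [h12]
    exact List.all_eq_true.mp tabA3a (N / 2) (List.mem_range.mpr (by omega))
  · exact List.all_eq_true.mp (List.all_eq_true.mp tabA3b p (by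
      simp only [List.mem_cons, List.not_mem_nil, or_false] at hp ⊢; omega)) (N / 2)
      (List.mem_range.mpr (by omega))

theorem tabB3 (p N : ℕ) (hp : p ∈ [2, 4, 6, 8, 10, 12]) (h2 : N % 2 = 1)
    (h : N < 200 ∧ (p = 4 ∨ p = 12 ∨ N < 20)) : qB p N = true := by
  have e : N = 2 * (N / 2) + 1 := by omega
  rw [e]
  by_cases h12 : p = 4 ∨ p = 12
  · exact List.all_eq_true.mp (List.all_eq_true.mp tabB3a p (by
      simp only [List.mem_cons, List.not_mem_nil, or_false] at hp ⊢; omega)) (N / 2)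
      (List.mem_range.mpr (by omega))
  · exact List.all_eq_true.mp (List.all_eq_true.mp tabB3b p (by
      simp only [List.mem_cons, List.not_mem_nil, or_false] at hp ⊢; omega)) (N / 2)
      (List.mem_range.mpr (by omega))

theorem sqpair (s r : ℤ) (a d : ℕ) (had : (a, d) ∈ ([(16, 96), (42, 24), (32, 48),
    (10, 120), (0, 192), (2, 168)] : List (ℕ × ℕ))) (h : s ^ 2 = r ^ 2 + d) (h0 : 0 < d)
    (h1 : d ≤ 192) (hs : s ^ 2 % 12 = 1) (hr : r ^ 2 % 12 = 1) :
    s ^ 2 + a < 204 ∨ s ^ 2 + a = 641 ∨ s ^ 2 + a = 299 ∨ s ^ 2 + a = 971 ∨ s ^ 2 + a = 361 ∨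
      s ^ 2 + a = 2401 ∨ s ^ 2 + a = 291 ∨ s ^ 2 + a = 531 ∨ s ^ 2 + a = 1851 := by
  have e1 : s ^ 2 = ((s.natAbs * s.natAbs : ℕ) : ℤ) := by
    rw [Int.natAbs_mul_self, sq]
  have e2 : r ^ 2 = ((r.natAbs * r.natAbs : ℕ) : ℤ) := by
    rw [Int.natAbs_mul_self, sq]
  have hs2 : s.natAbs % 2 = 1 := by have := sq16 s; omega
  have hr2 : r.natAbs % 2 = 1 := by have := sq16 r; omega
  rw [e1] at hs
  rw [e1, e2] at h
  rw [e1]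
  generalize s.natAbs = S at *
  generalize r.natAbs = R at *
  have h' : S * S = R * R + d := by exact_mod_cast h
  have hlt : R < S := by nlinarith
  have hle : R + 2 ≤ S := by omega
  have hS : S < 50 := by nlinarith
  have := tabS S R a d hS (by omega) had h' (by omega)
  simp only [List.mem_cons, List.not_mem_nil, or_false] at this
  omega

theorem B12 (n : ℤ) (h0 : 200 ≤ n) (hn : n % 2 = 1) : RB 12 n := by
  have key : ∀ z1 z2 : ℤ, ∀ a d : ℕ, (a, d) ∈ ([(16, 96), (42, 24), (32, 48),
    (10, 120), (0, 192), (2, 168)] : List (ℕ × ℕ)) → 2 * (3 * z1 ^ 2 - 2 * z1) = a →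
    2 * (3 * z2 ^ 2 - 2 * z2) = a + d → (n + 4 - a) % 12 = 1 → RB 12 n := by
    intro z1 z2 a d had e1 e2 h12
    have hd : 0 < d ∧ d ≤ 192 ∧ d % 12 = 0 ∧ a + d ≤ 200 := by
      simp only [List.mem_cons, List.not_mem_nil, or_false, Prod.mk.injEq] at had
      omega
    by_cases hs : ∀ s : ℤ, n + 4 - 2 * (3 * z1 ^ 2 - 2 * z1) ≠ s ^ 2
    · exact B12k n z1 (by rw [e1]; omega) (by rw [e1]; omega) hs
    by_cases hr : ∀ s : ℤ, n + 4 - 2 * (3 * z2 ^ 2 - 2 * z2) ≠ s ^ 2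
    · exact B12k n z2 (by rw [e2]; omega) (by rw [e2]; omega) hr
    push Not at hs hr
    obtain ⟨s, hs⟩ := hs
    obtain ⟨r, hr⟩ := hr
    rw [e1] at hs
    rw [e2] at hr
    have := sqpair s r a d had (by omega) hd.1 hd.2.1 (by omega) (by omega)
    rcases (show n = 637 ∨ n = 295 ∨ n = 967 ∨ n = 357 ∨ n = 2397 ∨ n = 287 ∨ n = 527 ∨ n = 1847
      by omega) with rfl | rfl | rfl | rfl | rfl | rfl | rfl | rfl
    · exact ⟨4, 5, 2, 4, by norm_num⟩
    · exact ⟨1, 0, 3, 3, by norm_num⟩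
    · exact ⟨10, 3, 3, 5, by norm_num⟩
    · exact ⟨5, 0, 4, 3, by norm_num⟩
    · exact ⟨5, 6, 4, 8, by norm_num⟩
    · exact ⟨5, 0, -1, 3, by norm_num⟩
    · exact ⟨0, 1, 3, 4, by norm_num⟩
    · exact ⟨11, 0, 5, 7, by norm_num⟩
  rcases (show n % 12 = 1 ∨ n % 12 = 3 ∨ n % 12 = 5 ∨ n % 12 = 7 ∨ n % 12 = 9 ∨ n % 12 = 11
    by omega) with h | h | h | h | h | h
  · exact key 2 (-4) 16 96 (by decide) (by norm_num) (by norm_num) (by omega)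
  · exact key 3 (-3) 42 24 (by decide) (by norm_num) (by norm_num) (by omega)
  · exact key (-2) 4 32 48 (by decide) (by norm_num) (by norm_num) (by omega)
  · exact key (-1) 5 10 120 (by decide) (by norm_num) (by norm_num) (by omega)
  · exact key 0 6 0 192 (by decide) (by norm_num) (by norm_num) (by omega)
  · exact key 1 (-5) 2 168 (by decide) (by norm_num) (by norm_num) (by omega)

theorem RA_all (p N : ℕ) (h1 : 5 ≤ p) (h2 : p ≤ 12) : RA p N := by
  by_cases h : p % 2 = 1 ∨ N % 2 = 0
  · exact RA_easy p N h1 h2 h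
  by_cases hN : N < 260 ∧ (p = 12 ∨ N < 20)
  · exact RA_q _ _ (tabA3 p N (by simp only [List.mem_cons, List.not_mem_nil, or_false]; omega) (by omega) hN)
  rcases (show p = 6 ∨ p = 8 ∨ p = 10 ∨ p = 12 by omega) with rfl | rfl | rfl | rfl
  · exact A6_s12 N (by omega) (by omega)
  · exact A8_s12 N (by omega) (by omega)
  · exact A10_s12 N (by omega) (by omega)
  · exact A12 N (by omega) (by omega)

theorem RB_all (p N : ℕ) (h1 : 2 ≤ p) (h2 : p ≤ 12) : RB p N := by
  by_cases h : p % 2 = 1 ∨ N % 2 = 0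
  · exact RB_easy p N h1 h2 h
  by_cases hN : N < 200 ∧ (p = 4 ∨ p = 12 ∨ N < 20)
  · exact RB_q _ _ (tabB3 p N (by simp only [List.mem_cons, List.not_mem_nil, or_false]; omega) (by omega) hN)
  rcases (show p = 2 ∨ p = 4 ∨ p = 6 ∨ p = 8 ∨ p = 10 ∨ p = 12 by omega) with
    rfl | rfl | rfl | rfl | rfl | rfl
  · exact B2 N (by omega) (by omega)
  · exact B4_s12 N (by omega) (by omega)
  · by_cases g : N % 4 = 3
    · exact B6a N (by omega) (by omega)
    · exact B6b N (by omega) (by omega)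
  · exact B8_s12 N (by omega) (by omega)
  · exact B10_s12 N (by omega) (by omega)
  · exact B12 N (by omega) (by omega)

theorem universal_case_4_18 :
    (∀ α : ℤ, 5 ≤ α → α ≤ 12 → ∀ N : ℤ, 0 ≤ N →
      ∃ x y z t : ℤ,
        x ^ 2 + 5 * y ^ 2 + α * z ^ 2 + 2 * (3 * t ^ 2 - 2 * t) = N) ∧
    (∀ β : ℤ, 2 ≤ β → β ≤ 12 → ∀ N : ℤ, 0 ≤ N →
      ∃ x y z t : ℤ,
        x ^ 2 + 5 * y ^ 2 + 2 * (3 * z ^ 2 - 2 * z) + β * (3 * t ^ 2 - 2 * t) = N) := by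
  constructor
  · intro α h1 h2 N hN
    lift N to ℕ using hN
    lift α to ℕ using by omega
    exact RA_all α N (by omega) (by omega)
  · intro β h1 h2 N hN
    lift N to ℕ using hN
    lift β to ℕ using by omega
    exact RB_all β N (by omega) (by omega)
end
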